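/- Suppose T is Σ1-sound and n > m ≥ 1. Then there exists a Σ1 provability predicate PR_T(x) of T such that: (1) for any modal formula A and any arithmetical interpretation f based on PR_T(x), if N⁺A_{m,n} ⊢ A then T ⊢ f(A); and (2) there exists an arithmetical interpretation f based on PR_T(x) such that for every modal formula A, N⁺A_{m,n} ⊢ A if and only if T ⊢ f(A). -/

import Mathlib

namespace PLN

/-! ### Modal formulas and the logics N⁺A_{m,n} -/

/-- Formulas of modal propositional logic. -/
inductive MFml : Type
  | var : ℕ → MFml
  | bot : MFml
  | neg : MFml → MFml
  | and : MFml → MFml → MFml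
  | or : MFml → MFml → MFml
  | imp : MFml → MFml → MFml
  | box : MFml → MFml
  deriving DecidableEq

/-- `boxIter n A` is `□ⁿ A`, where `□⁰ A = A` and `□^(k+1) A = □ (□ᵏ A)`. -/
def boxIter : ℕ → MFml → MFml
  | 0, A => A
  | k + 1, A => .box (boxIter k A)

/-- Evaluation of a modal formula under a valuation of its "propositional atoms"
(propositional variables, and boxed formulas); used to define propositional tautologies
in the modal language. -/
def MFml.evalTC (v : MFml → Prop) : MFml → Prop
  | .bot => False
  | .neg A => ¬ A.evalTC v
  | .and A B => A.evalTC v ∧ B.evalTC v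
  | .or A B => A.evalTC v ∨ B.evalTC v
  | .imp A B => A.evalTC v → B.evalTC v
  | A => v A

/-- Propositional tautologies in the modal language. -/
def MTaut (A : MFml) : Prop := ∀ v, A.evalTC v

/-- Provability in the logic `N⁺A_{m,n}`: the pure logic of necessitation `N`
(propositional tautologies, modus ponens, necessitation) together with the axiom scheme
`□ⁿA → □ᵐA` and the rule `Ros□` (from `¬□A` infer `¬□□A`). -/
inductive NAProves (m n : ℕ) : MFml → Prop
  | taut {A} : MTaut A → NAProves m n A
  | acc (A) : NAProves m n (.imp (boxIter n A) (boxIter m A))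
  | mp {A B} : NAProves m n (.imp A B) → NAProves m n A → NAProves m n B
  | nec {A} : NAProves m n A → NAProves m n (.box A)
  | ros {A} : NAProves m n (.neg (.box A)) → NAProves m n (.neg (.box (.box A)))

/-- `IsSub B A` : `B` is a subformula of `A`. -/
inductive IsSub : MFml → MFml → Prop
  | refl (A) : IsSub A A
  | neg {B A} : IsSub B A → IsSub B (.neg A)
  | andL {B A C} : IsSub B A → IsSub B (.and A C)
  | andR {B A C} : IsSub B C → IsSub B (.and A C)
  | orL {B A C} : IsSub B A → IsSub B (.or A C)
  | orR {B A C} : IsSub B C → IsSub B (.or A C)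
  | impL {B A C} : IsSub B A → IsSub B (.imp A C)
  | impR {B A C} : IsSub B C → IsSub B (.imp A C)
  | box {B A} : IsSub B A → IsSub B (.box A)

/-! ### N-frames and N-models -/

/-- An N-model on a set `W` of worlds: an N-frame (a binary relation `≺_B` on `W`
for each modal formula `B`) together with a valuation of propositional variables. -/
structure NModel (W : Type) where
  rel : MFml → W → W → Prop
  val : W → ℕ → Prop

/-- The forcing relation of an N-model:
`x ⊩ □B` iff every `y` with `x ≺_B y` satisfies `y ⊩ B`. -/
def NModel.Forces {W : Type} (M : NModel W) : W → MFml → Prop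
  | x, .var p => M.val x p
  | _, .bot => False
  | x, .neg A => ¬ NModel.Forces M x A
  | x, .and A B => NModel.Forces M x A ∧ NModel.Forces M x B
  | x, .or A B => NModel.Forces M x A ∨ NModel.Forces M x B
  | x, .imp A B => NModel.Forces M x A → NModel.Forces M x B
  | x, .box A => ∀ y, M.rel A x y → NModel.Forces M y A

/-- The relations `≺_B^k` : `x ≺_B^0 y` iff `x = y`, and
`x ≺_B^(k+1) y` iff `∃ w, x ≺_{□ᵏB} w` and `w ≺_B^k y`. -/
def NModel.relIter {W : Type} (M : NModel W) (B : MFml) : ℕ → W → W → Prop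
  | 0, x, y => x = y
  | k + 1, x, y => ∃ w, M.rel (boxIter k B) x w ∧ NModel.relIter M B k w y

/-- `(m,n)`-accessibility of (the frame of) an N-model. -/
def NModel.Accessible {W : Type} (M : NModel W) (m n : ℕ) : Prop :=
  ∀ (B : MFml) (x y : W), NModel.relIter M B m x y → NModel.relIter M B n x y

/-! ### The language of first-order arithmetic -/

/-- Terms of the language of arithmetic, with de Bruijn variables. -/
inductive ATerm : Type
  | var : ℕ → ATerm
  | zero : ATerm
  | succ : ATerm → ATerm
  | add : ATerm → ATerm → ATerm
  | mul : ATerm → ATerm → ATerm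
  deriving DecidableEq

/-- Formulas of the language of arithmetic (with `≤` primitive), de Bruijn variables. -/
inductive AFml : Type
  | eq : ATerm → ATerm → AFml
  | le : ATerm → ATerm → AFml
  | neg : AFml → AFml
  | and : AFml → AFml → AFml
  | or : AFml → AFml → AFml
  | imp : AFml → AFml → AFml
  | all : AFml → AFml
  | ex : AFml → AFml
  deriving DecidableEq

/-- Lift (shift up by one) the variables `≥ c` of a term. -/
def ATerm.lift (c : ℕ) : ATerm → ATerm
  | .var n => .var (if n < c then n else n + 1)
  | .zero => .zero
  | .succ t => .succ (t.lift c)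
  | .add t s => .add (t.lift c) (s.lift c)
  | .mul t s => .mul (t.lift c) (s.lift c)

/-- Simultaneous substitution in terms. -/
def ATerm.substAll (σ : ℕ → ATerm) : ATerm → ATerm
  | .var n => σ n
  | .zero => .zero
  | .succ t => .succ (t.substAll σ)
  | .add t s => .add (t.substAll σ) (s.substAll σ)
  | .mul t s => .mul (t.substAll σ) (s.substAll σ)

/-- Pushing a substitution under a binder. -/
def liftSub (σ : ℕ → ATerm) : ℕ → ATerm
  | 0 => .var 0
  | n + 1 => (σ n).lift 0

/-- Lift (shift up by one) the free variables `≥ c` of a formula. -/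
def AFml.lift (c : ℕ) : AFml → AFml
  | .eq t s => .eq (t.lift c) (s.lift c)
  | .le t s => .le (t.lift c) (s.lift c)
  | .neg φ => .neg (φ.lift c)
  | .and φ ψ => .and (φ.lift c) (ψ.lift c)
  | .or φ ψ => .or (φ.lift c) (ψ.lift c)
  | .imp φ ψ => .imp (φ.lift c) (ψ.lift c)
  | .all φ => .all (φ.lift (c + 1))
  | .ex φ => .ex (φ.lift (c + 1))

/-- Simultaneous (capture-avoiding) substitution in formulas. -/
def AFml.substAll (σ : ℕ → ATerm) : AFml → AFml
  | .eq t s => .eq (t.substAll σ) (s.substAll σ)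
  | .le t s => .le (t.substAll σ) (s.substAll σ)
  | .neg φ => .neg (φ.substAll σ)
  | .and φ ψ => .and (φ.substAll σ) (ψ.substAll σ)
  | .or φ ψ => .or (φ.substAll σ) (ψ.substAll σ)
  | .imp φ ψ => .imp (φ.substAll σ) (ψ.substAll σ)
  | .all φ => .all (φ.substAll (liftSub σ))
  | .ex φ => .ex (φ.substAll (liftSub σ))

def subst0Env (t : ATerm) : ℕ → ATerm
  | 0 => t
  | n + 1 => .var n

def subst2Env (t s : ATerm) : ℕ → ATerm
  | 0 => t
  | 1 => s
  | n + 2 => .var n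

/-- Substitute the term `t` for the free variable `0` (decrementing other variables). -/
def AFml.subst0 (φ : AFml) (t : ATerm) : AFml := φ.substAll (subst0Env t)

/-- Substitute the terms `t`, `s` for the free variables `0`, `1` simultaneously. -/
def AFml.subst2 (φ : AFml) (t s : ATerm) : AFml := φ.substAll (subst2Env t s)

/-- Substitute `S(var 0)` for `var 0`, leaving all other free variables unchanged. -/
def succSubst (φ : AFml) : AFml :=
  φ.substAll fun n => if n = 0 then .succ (.var 0) else .var n

/-- All variables of a term are `< c`. -/
def ATerm.FreeLt (c : ℕ) : ATerm → Prop
  | .var n => n < c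
  | .zero => True
  | .succ t => t.FreeLt c
  | .add t s => t.FreeLt c ∧ s.FreeLt c
  | .mul t s => t.FreeLt c ∧ s.FreeLt c

/-- All free variables of a formula are `< c`; `FreeLt 0 φ` says that `φ` is a sentence. -/
def AFml.FreeLt (c : ℕ) : AFml → Prop
  | .eq t s => t.FreeLt c ∧ s.FreeLt c
  | .le t s => t.FreeLt c ∧ s.FreeLt c
  | .neg φ => φ.FreeLt c
  | .and φ ψ => φ.FreeLt c ∧ ψ.FreeLt c
  | .or φ ψ => φ.FreeLt c ∧ ψ.FreeLt c
  | .imp φ ψ => φ.FreeLt c ∧ ψ.FreeLt c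
  | .all φ => φ.FreeLt (c + 1)
  | .ex φ => φ.FreeLt (c + 1)

/-- The numeral `n̄`. -/
def numeral : ℕ → ATerm
  | 0 => .zero
  | n + 1 => .succ (numeral n)

/-- A Gödel numbering of terms. -/
def ATerm.code : ATerm → ℕ
  | .var n => Nat.pair 0 n
  | .zero => Nat.pair 1 0
  | .succ t => Nat.pair 2 t.code
  | .add t s => Nat.pair 3 (Nat.pair t.code s.code)
  | .mul t s => Nat.pair 4 (Nat.pair t.code s.code)

/-- A Gödel numbering of formulas. -/
def AFml.code : AFml → ℕ
  | .eq t s => Nat.pair 0 (Nat.pair t.code s.code)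
  | .le t s => Nat.pair 1 (Nat.pair t.code s.code)
  | .neg φ => Nat.pair 2 φ.code
  | .and φ ψ => Nat.pair 3 (Nat.pair φ.code ψ.code)
  | .or φ ψ => Nat.pair 4 (Nat.pair φ.code ψ.code)
  | .imp φ ψ => Nat.pair 5 (Nat.pair φ.code ψ.code)
  | .all φ => Nat.pair 6 φ.code
  | .ex φ => Nat.pair 7 φ.code

/-- `⌜φ⌝`, the numeral of the Gödel number of `φ`. -/
def gnum (φ : AFml) : ATerm := numeral φ.code

/-- For a formula `P(x)` (with free variable `var 0`), `P.appNum φ` is `P(⌜φ⌝)`. -/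
def AFml.appNum (P φ : AFml) : AFml := P.subst0 (gnum φ)

/-- Iterated application of a predicate: `iterPred P k φ = P(⌜P(⌜⋯P(⌜φ⌝)⋯⌝)⌝)` (`k` times). -/
def iterPred (P : AFml) : ℕ → AFml → AFml
  | 0, φ => φ
  | k + 1, φ => P.appNum (iterPred P k φ)

/-! ### Satisfaction in the standard model -/

def ATerm.val (ρ : ℕ → ℕ) : ATerm → ℕ
  | .var n => ρ n
  | .zero => 0
  | .succ t => t.val ρ + 1
  | .add t s => t.val ρ + s.val ρ
  | .mul t s => t.val ρ * s.val ρ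

def consEnv (a : ℕ) (ρ : ℕ → ℕ) : ℕ → ℕ
  | 0 => a
  | n + 1 => ρ n

/-- Satisfaction in the standard model `ℕ` under an environment `ρ`. -/
def AFml.Sat (ρ : ℕ → ℕ) : AFml → Prop
  | .eq t s => t.val ρ = s.val ρ
  | .le t s => t.val ρ ≤ s.val ρ
  | .neg φ => ¬ φ.Sat ρ
  | .and φ ψ => φ.Sat ρ ∧ ψ.Sat ρ
  | .or φ ψ => φ.Sat ρ ∨ ψ.Sat ρ
  | .imp φ ψ => φ.Sat ρ → ψ.Sat ρ
  | .all φ => ∀ a, φ.Sat (consEnv a ρ)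
  | .ex φ => ∃ a, φ.Sat (consEnv a ρ)

/-- `ℕ ⊨ φ`. -/
def TrueN (φ : AFml) : Prop := φ.Sat fun _ => 0

/-! ### The arithmetical hierarchy: Δ₀, Σ₁, Π₁ -/

/-- `Δ₀` formulas: every quantifier is bounded. -/
inductive IsDelta0 : AFml → Prop
  | eq (t s : ATerm) : IsDelta0 (.eq t s)
  | le (t s : ATerm) : IsDelta0 (.le t s)
  | neg {φ} : IsDelta0 φ → IsDelta0 (.neg φ)
  | and {φ ψ} : IsDelta0 φ → IsDelta0 ψ → IsDelta0 (.and φ ψ)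
  | or {φ ψ} : IsDelta0 φ → IsDelta0 ψ → IsDelta0 (.or φ ψ)
  | imp {φ ψ} : IsDelta0 φ → IsDelta0 ψ → IsDelta0 (.imp φ ψ)
  | ball {φ : AFml} (t : ATerm) : IsDelta0 φ → IsDelta0 (.all (.imp (.le (.var 0) (ATerm.lift 0 t)) φ))
  | bex {φ : AFml} (t : ATerm) : IsDelta0 φ → IsDelta0 (.ex (.and (.le (.var 0) (ATerm.lift 0 t)) φ))

mutual
  /-- `Σ₁` formulas. -/
  inductive IsSigma1 : AFml → Prop
    | delta0 {φ} : IsDelta0 φ → IsSigma1 φ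
    | and {φ ψ} : IsSigma1 φ → IsSigma1 ψ → IsSigma1 (.and φ ψ)
    | or {φ ψ} : IsSigma1 φ → IsSigma1 ψ → IsSigma1 (.or φ ψ)
    | ex {φ} : IsSigma1 φ → IsSigma1 (.ex φ)
    | negPi {φ} : IsPi1 φ → IsSigma1 (.neg φ)
    | impPiSigma {φ ψ} : IsPi1 φ → IsSigma1 ψ → IsSigma1 (.imp φ ψ)
  /-- `Π₁` formulas. -/
  inductive IsPi1 : AFml → Prop
    | delta0 {φ} : IsDelta0 φ → IsPi1 φ
    | and {φ ψ} : IsPi1 φ → IsPi1 ψ → IsPi1 (.and φ ψ)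
    | or {φ ψ} : IsPi1 φ → IsPi1 ψ → IsPi1 (.or φ ψ)
    | all {φ} : IsPi1 φ → IsPi1 (.all φ)
    | negSigma {φ} : IsSigma1 φ → IsPi1 (.neg φ)
    | impSigmaPi {φ ψ} : IsSigma1 φ → IsPi1 ψ → IsPi1 (.imp φ ψ)
end

/-! ### A Hilbert-style proof system for first-order arithmetic -/

/-- Evaluation of an arithmetical formula under a valuation of its "propositionally atomic"
subformulas (atomic or quantified formulas); used for propositional tautologies and
tautological consequence. -/
def AFml.evalProp (v : AFml → Prop) : AFml → Prop
  | .neg φ => ¬ φ.evalProp v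
  | .and φ ψ => φ.evalProp v ∧ ψ.evalProp v
  | .or φ ψ => φ.evalProp v ∨ ψ.evalProp v
  | .imp φ ψ => φ.evalProp v → ψ.evalProp v
  | φ => v φ

/-- Propositional tautologies in the language of arithmetic. -/
def ATaut (φ : AFml) : Prop := ∀ v, φ.evalProp v

/-- `φ` is a tautological consequence of the set `X` of formulas. -/
def TC (X : Set AFml) (φ : AFml) : Prop :=
  ∀ v : AFml → Prop, (∀ ψ ∈ X, ψ.evalProp v) → φ.evalProp v

def iffF (φ ψ : AFml) : AFml := .and (.imp φ ψ) (.imp ψ φ)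

/-- Hilbert-style provability from the set of axioms `Γ` in classical first-order
logic with equality. -/
inductive Proves (Γ : Set AFml) : AFml → Prop
  | ax {φ} : φ ∈ Γ → Proves Γ φ
  | taut {φ} : ATaut φ → Proves Γ φ
  | mp {φ ψ} : Proves Γ (.imp φ ψ) → Proves Γ φ → Proves Γ ψ
  | allE (φ : AFml) (t : ATerm) : Proves Γ (.imp (.all φ) (φ.subst0 t))
  | exI (φ : AFml) (t : ATerm) : Proves Γ (.imp (φ.subst0 t) (.ex φ))
  | allImp (φ ψ : AFml) : Proves Γ (.imp (.all (.imp φ ψ)) (.imp (.all φ) (.all ψ)))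
  | vacAll (φ : AFml) : Proves Γ (.imp φ (.all (AFml.lift 0 φ)))
  | exDef (φ : AFml) : Proves Γ (iffF (.ex φ) (.neg (.all (.neg φ))))
  | gen {φ} : Proves Γ φ → Proves Γ (.all φ)
  | eqRefl (t : ATerm) : Proves Γ (.eq t t)
  | eqSubst (φ : AFml) (t s : ATerm) : Proves Γ (.imp (.eq t s) (.imp (φ.subst0 t) (φ.subst0 s)))

/-! ### Peano arithmetic -/

/-- The axioms of Peano arithmetic. -/
inductive PAax : AFml → Prop
  | succNeZero : PAax (.all (.neg (.eq (.succ (.var 0)) .zero)))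
  | succInj :
      PAax (.all (.all (.imp (.eq (.succ (.var 1)) (.succ (.var 0))) (.eq (.var 1) (.var 0)))))
  | addZero : PAax (.all (.eq (.add (.var 0) .zero) (.var 0)))
  | addSucc :
      PAax (.all (.all (.eq (.add (.var 1) (.succ (.var 0))) (.succ (.add (.var 1) (.var 0))))))
  | mulZero : PAax (.all (.eq (.mul (.var 0) .zero) .zero))
  | mulSucc :
      PAax (.all (.all (.eq (.mul (.var 1) (.succ (.var 0)))
        (.add (.mul (.var 1) (.var 0)) (.var 1)))))
  | leDef :
      PAax (.all (.all (iffF (.le (.var 1) (.var 0))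
        (.ex (.eq (.add (.var 0) (.var 2)) (.var 1))))))
  | ind (φ : AFml) :
      PAax (.imp (.and (φ.subst0 .zero) (.all (.imp φ (succSubst φ)))) (.all φ))

/-- Peano arithmetic, as a set of axioms. -/
def PA : Set AFml := {φ | PAax φ}

/-- The sentence `0 = 1`. -/
def botFml : AFml := .eq .zero (.succ .zero)

/-- `t < s`, as the formula `S(t) ≤ s`. -/
def ltF (t s : ATerm) : AFml := .le (.succ t) s

/-- `Δ₁(PA)` formulas: `Σ₁` formulas which are `PA`-provably equivalent to a `Π₁` formula. -/
def IsDelta1PA (φ : AFml) : Prop :=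
  IsSigma1 φ ∧ ∃ ψ, IsPi1 ψ ∧ Proves PA (iffF φ ψ)

/-! ### Theories, provability predicates, arithmetical interpretations -/

/-- `Tax` is primitive recursively axiomatized (via the Gödel numbering). -/
def PrAxiomatized (Tax : Set AFml) : Prop :=
  ∃ p : ℕ → Bool, Primrec p ∧ ∀ φ : AFml, φ ∈ Tax ↔ p φ.code = true

/-- `Σ₁`-soundness: every `T`-provable `Σ₁` sentence is true in `ℕ`. -/
def Sigma1Sound (Tax : Set AFml) : Prop :=
  ∀ φ : AFml, IsSigma1 φ → φ.FreeLt 0 → Proves Tax φ → TrueN φ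

/-- `P` is a provability predicate of `T`: a formula `P(x)` with at most the free
variable `x` such that for every formula `φ`, `T ⊢ φ` iff `PA ⊢ P(⌜φ⌝)`. -/
def IsProvPred (Tax : Set AFml) (P : AFml) : Prop :=
  P.FreeLt 1 ∧ ∀ φ : AFml, Proves Tax φ ↔ Proves PA (P.appNum φ)

/-- `f` is an arithmetical interpretation based on the predicate `P`. -/
def IsInterp (P : AFml) (f : MFml → AFml) : Prop :=
  (∀ i, (f (.var i)).FreeLt 0) ∧
  f .bot = botFml ∧
  (∀ A, f (.neg A) = .neg (f A)) ∧
  (∀ A B, f (.and A B) = .and (f A) (f B)) ∧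
  (∀ A B, f (.or A B) = .or (f A) (f B)) ∧
  (∀ A B, f (.imp A B) = .imp (f A) (f B)) ∧
  (∀ A, f (.box A) = P.appNum (f A))

/-- The provability logic of the predicate `P` (relative to the theory `Tax`). -/
def PL (Tax : Set AFml) (P : AFml) : Set MFml :=
  {A | ∀ f : MFml → AFml, IsInterp P f → Proves Tax (f A)}

/-- The formulas with a `T`-proof of code `≤ s` (relative to a proof enumeration `prf`). -/
def PTset (prf : ℕ → Option AFml) (s : ℕ) : Set AFml :=
  {φ | ∃ y ≤ s, prf y = some φ}

section

/-! ### Substitution lemmas -/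

theorem ATerm.lift_eq (c : ℕ) (t : ATerm) :
    t.lift c = t.substAll (fun n => .var (if n < c then n else n + 1)) := by
  induction t <;> simp_all [ATerm.lift, ATerm.substAll]

theorem liftSub_liftEnv (c : ℕ) :
    liftSub (fun n => .var (if n < c then n else n + 1)) =
      fun n => .var (if n < c + 1 then n else n + 1) := by
  funext n
  cases n with
  | zero => simp [liftSub]
  | succ n =>
    simp only [liftSub, ATerm.lift]
    by_cases h : n < c <;> simp [h]

theorem AFml.lift_eq (φ : AFml) : ∀ c : ℕ,
    φ.lift c = φ.substAll (fun n => .var (if n < c then n else n + 1)) := by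
  induction φ <;> intro c <;>
    simp_all [AFml.lift, AFml.substAll, ATerm.lift_eq, liftSub_liftEnv]

theorem ATerm.lift_subst (τ : ℕ → ATerm) (t : ATerm) :
    (t.lift 0).substAll (liftSub τ) = (t.substAll τ).lift 0 := by
  induction t <;> simp_all [ATerm.lift, ATerm.substAll, liftSub]

theorem ATerm.subst_subst (σ τ : ℕ → ATerm) (t : ATerm) :
    (t.substAll σ).substAll τ = t.substAll (fun n => (σ n).substAll τ) := by
  induction t <;> simp_all [ATerm.substAll]

theorem liftSub_comp (σ τ : ℕ → ATerm) :
    (fun n => (liftSub σ n).substAll (liftSub τ)) = liftSub (fun n => (σ n).substAll τ) := by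
  funext n
  cases n with
  | zero => simp [liftSub, ATerm.substAll]
  | succ n => simp [liftSub, ATerm.lift_subst]

theorem AFml.subst_subst (φ : AFml) : ∀ σ τ : ℕ → ATerm,
    (φ.substAll σ).substAll τ = φ.substAll (fun n => (σ n).substAll τ) := by
  induction φ <;> intro σ τ <;> simp_all [AFml.substAll, ATerm.subst_subst, liftSub_comp]

@[simp] theorem ATerm.subst_var (t : ATerm) : t.substAll ATerm.var = t := by
  induction t <;> simp_all [ATerm.substAll]

@[simp] theorem liftSub_var : liftSub ATerm.var = ATerm.var := by
  funext n; cases n <;> simp [liftSub, ATerm.lift]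

@[simp] theorem AFml.subst_var (φ : AFml) : φ.substAll ATerm.var = φ := by
  induction φ <;> simp_all [AFml.substAll]

@[simp] theorem ATerm.lift_subst0 (t s : ATerm) : (t.lift 0).substAll (subst0Env s) = t := by
  rw [ATerm.lift_eq, ATerm.subst_subst]
  simp [ATerm.substAll, subst0Env]

@[simp] theorem AFml.lift_subst0 (φ : AFml) (s : ATerm) : (φ.lift 0).subst0 s = φ := by
  rw [AFml.lift_eq, AFml.subst0, AFml.subst_subst]
  simp [ATerm.substAll, subst0Env]

/-- Extend a substitution by a term at position `0`. -/
def consSub (t : ATerm) (σ : ℕ → ATerm) : ℕ → ATerm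
  | 0 => t
  | n + 1 => σ n

theorem AFml.subst_liftSub (φ : AFml) (σ : ℕ → ATerm) (t : ATerm) :
    (φ.substAll (liftSub σ)).subst0 t = φ.substAll (consSub t σ) := by
  rw [AFml.subst0, AFml.subst_subst]
  congr 1; funext n
  cases n <;> simp [liftSub, consSub, ATerm.substAll, subst0Env]

@[simp] theorem numeral_subst (n : ℕ) (σ : ℕ → ATerm) : (numeral n).substAll σ = numeral n := by
  induction n <;> simp_all [numeral, ATerm.substAll]

@[simp] theorem numeral_lift (n c : ℕ) : (numeral n).lift c = numeral n := by
  rw [ATerm.lift_eq, numeral_subst]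

/-- The closed substitution given by an environment of numbers. -/
def num (ρ : ℕ → ℕ) : ℕ → ATerm := fun n => numeral (ρ n)

theorem consSub_num (a : ℕ) (ρ : ℕ → ℕ) : consSub (numeral a) (num ρ) = num (consEnv a ρ) := by
  funext n; cases n <;> rfl

@[simp] theorem ATerm.num_lift (t : ATerm) (ρ : ℕ → ℕ) (c : ℕ) :
    (t.substAll (num ρ)).lift c = t.substAll (num ρ) := by
  rw [ATerm.lift_eq, ATerm.subst_subst]
  simp only [num, numeral_subst]
  rfl

theorem ATerm.subst_congr {c : ℕ} {σ τ : ℕ → ATerm} (h : ∀ n < c, σ n = τ n) (t : ATerm)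
    (ht : t.FreeLt c) : t.substAll σ = t.substAll τ := by
  induction t <;> simp_all [ATerm.substAll, ATerm.FreeLt]

theorem AFml.subst_congr (φ : AFml) : ∀ {c : ℕ} {σ τ : ℕ → ATerm}, (∀ n < c, σ n = τ n) →
    φ.FreeLt c → φ.substAll σ = φ.substAll τ := by
  have hl : ∀ {c : ℕ} {σ τ : ℕ → ATerm}, (∀ n < c, σ n = τ n) →
      ∀ n < c + 1, liftSub σ n = liftSub τ n := by
    intro c σ τ h n hn
    cases n with
    | zero => rfl
    | succ n => simp [liftSub, h n (by omega)]
  induction φ with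
  | eq t s => intro c σ τ h hf; simp [AFml.substAll, ATerm.subst_congr h _ hf.1, ATerm.subst_congr h _ hf.2]
  | le t s => intro c σ τ h hf; simp [AFml.substAll, ATerm.subst_congr h _ hf.1, ATerm.subst_congr h _ hf.2]
  | neg φ ih => intro c σ τ h hf; simp [AFml.substAll, ih h hf]
  | and φ ψ ih1 ih2 => intro c σ τ h hf; simp [AFml.substAll, ih1 h hf.1, ih2 h hf.2]
  | or φ ψ ih1 ih2 => intro c σ τ h hf; simp [AFml.substAll, ih1 h hf.1, ih2 h hf.2]
  | imp φ ψ ih1 ih2 => intro c σ τ h hf; simp [AFml.substAll, ih1 h hf.1, ih2 h hf.2]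
  | all φ ih => intro c σ τ h hf; simp [AFml.substAll, ih (hl h) hf]
  | ex φ ih => intro c σ τ h hf; simp [AFml.substAll, ih (hl h) hf]

theorem AFml.subst_id (φ : AFml) {c : ℕ} {σ : ℕ → ATerm} (h : ∀ n < c, σ n = .var n)
    (hf : φ.FreeLt c) : φ.substAll σ = φ := by
  rw [AFml.subst_congr φ h hf, AFml.subst_var]

theorem ATerm.FreeLt.lift {t : ATerm} {c : ℕ} (h : t.FreeLt c) : (t.lift 0).FreeLt (c + 1) := by
  induction t <;> simp_all [ATerm.FreeLt, ATerm.lift]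

theorem ATerm.FreeLt.subst {t : ATerm} {c : ℕ} {σ : ℕ → ATerm} (h : ∀ n, (σ n).FreeLt c) :
    (t.substAll σ).FreeLt c := by
  induction t <;> simp_all [ATerm.FreeLt, ATerm.substAll]

theorem AFml.FreeLt.subst (φ : AFml) : ∀ {c : ℕ} {σ : ℕ → ATerm}, (∀ n, (σ n).FreeLt c) →
    (φ.substAll σ).FreeLt c := by
  have hl : ∀ {c : ℕ} {σ : ℕ → ATerm}, (∀ n, (σ n).FreeLt c) →
      ∀ n, (liftSub σ n).FreeLt (c + 1) := by
    intro c σ h n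
    cases n with
    | zero => simp [liftSub, ATerm.FreeLt]
    | succ n => exact (h n).lift
  induction φ with
  | eq t s => intro c σ h; exact ⟨ATerm.FreeLt.subst h, ATerm.FreeLt.subst h⟩
  | le t s => intro c σ h; exact ⟨ATerm.FreeLt.subst h, ATerm.FreeLt.subst h⟩
  | neg φ ih => intro c σ h; exact ih h
  | and φ ψ ih1 ih2 => intro c σ h; exact ⟨ih1 h, ih2 h⟩
  | or φ ψ ih1 ih2 => intro c σ h; exact ⟨ih1 h, ih2 h⟩
  | imp φ ψ ih1 ih2 => intro c σ h; exact ⟨ih1 h, ih2 h⟩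
  | all φ ih => intro c σ h; exact ih (hl h)
  | ex φ ih => intro c σ h; exact ih (hl h)

theorem numeral_freeLt (n c : ℕ) : (numeral n).FreeLt c := by
  induction n <;> simp_all [numeral, ATerm.FreeLt]

/-! ### Satisfaction and substitution -/

theorem ATerm.val_subst (σ : ℕ → ATerm) (ρ : ℕ → ℕ) (t : ATerm) :
    (t.substAll σ).val ρ = t.val (fun n => (σ n).val ρ) := by
  induction t <;> simp_all [ATerm.val, ATerm.substAll]

theorem ATerm.val_lift (t : ATerm) (a : ℕ) (ρ : ℕ → ℕ) : (t.lift 0).val (consEnv a ρ) = t.val ρ := by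
  induction t <;> simp_all [ATerm.val, ATerm.lift, consEnv]

theorem AFml.sat_subst (φ : AFml) : ∀ (σ : ℕ → ATerm) (ρ : ℕ → ℕ),
    (φ.substAll σ).Sat ρ ↔ φ.Sat (fun n => (σ n).val ρ) := by
  have hl : ∀ (σ : ℕ → ATerm) (ρ : ℕ → ℕ) (a : ℕ),
      (fun n => (liftSub σ n).val (consEnv a ρ)) = consEnv a (fun n => (σ n).val ρ) := by
    intro σ ρ a; funext n
    cases n with
    | zero => simp [liftSub, ATerm.val, consEnv]
    | succ n => simp [liftSub, ATerm.val_lift, consEnv]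
  induction φ <;> intro σ ρ <;> simp_all [AFml.substAll, AFml.Sat, ATerm.val_subst]

@[simp] theorem numeral_val (n : ℕ) (ρ : ℕ → ℕ) : (numeral n).val ρ = n := by
  induction n <;> simp_all [numeral, ATerm.val]

theorem ATerm.val_congr {c : ℕ} {ρ ρ' : ℕ → ℕ} (h : ∀ n < c, ρ n = ρ' n) (t : ATerm)
    (ht : t.FreeLt c) : t.val ρ = t.val ρ' := by
  induction t <;> simp_all [ATerm.val, ATerm.FreeLt]

/-- `Δ₀` is closed under substitution. -/
theorem IsDelta0.subst {φ : AFml} (h : IsDelta0 φ) : ∀ σ : ℕ → ATerm, IsDelta0 (φ.substAll σ) := by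
  induction h with
  | eq t s => intro σ; exact .eq _ _
  | le t s => intro σ; exact .le _ _
  | neg _ ih => intro σ; exact .neg (ih σ)
  | and _ _ ih1 ih2 => intro σ; exact .and (ih1 σ) (ih2 σ)
  | or _ _ ih1 ih2 => intro σ; exact .or (ih1 σ) (ih2 σ)
  | imp _ _ ih1 ih2 => intro σ; exact .imp (ih1 σ) (ih2 σ)
  | ball t _ ih =>
    intro σ
    simp only [AFml.substAll, ATerm.lift_subst]
    exact .ball _ (ih _)
  | bex t _ ih =>
    intro σ
    simp only [AFml.substAll, ATerm.lift_subst]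
    exact .bex _ (ih _)

/-! ### Gödel numbers -/

theorem ATerm.code_inj {t s : ATerm} : t.code = s.code → t = s := by
  induction t generalizing s <;> cases s <;> simp_all [ATerm.code] <;> aesop

theorem AFml.code_inj {φ ψ : AFml} : φ.code = ψ.code → φ = ψ := by
  induction φ generalizing ψ <;> cases ψ <;> simp_all [AFml.code]
  all_goals first
    | (intro h1 h2; exact ⟨ATerm.code_inj h1, ATerm.code_inj h2⟩)
    | aesop

theorem numeral_inj {a b : ℕ} : numeral a = numeral b → a = b := by
  intro h
  have := congrArg (ATerm.val (fun _ => 0)) h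
  simpa using this

end

section

/-! ### Propositional reasoning in the Hilbert calculus -/

section Hilbert
variable {Γ : Set AFml}

theorem Proves.t1 {A B : AFml} (h : ∀ v, A.evalProp v → B.evalProp v)
    (hA : Proves Γ A) : Proves Γ B :=
  .mp (.taut (fun v => h v)) hA

theorem Proves.t2 {A B C : AFml} (h : ∀ v, A.evalProp v → B.evalProp v → C.evalProp v)
    (hA : Proves Γ A) (hB : Proves Γ B) : Proves Γ C :=
  .mp (.mp (.taut (φ := .imp A (.imp B C)) (fun v => h v)) hA) hB

theorem Proves.t3 {A B C D : AFml}
    (h : ∀ v, A.evalProp v → B.evalProp v → C.evalProp v → D.evalProp v)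
    (hA : Proves Γ A) (hB : Proves Γ B) (hC : Proves Γ C) : Proves Γ D :=
  .mp (.mp (.mp (.taut (φ := .imp A (.imp B (.imp C D))) (fun v => h v)) hA) hB) hC

theorem Proves.t4 {A B C D E : AFml}
    (h : ∀ v, A.evalProp v → B.evalProp v → C.evalProp v → D.evalProp v → E.evalProp v)
    (hA : Proves Γ A) (hB : Proves Γ B) (hC : Proves Γ C) (hD : Proves Γ D) : Proves Γ E :=
  .mp (.mp (.mp (.mp (.taut (φ := .imp A (.imp B (.imp C (.imp D E)))) (fun v => h v)) hA) hB) hC) hD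

theorem Proves.mono {Γ Δ : Set AFml} (h : Γ ⊆ Δ) {φ : AFml} (hp : Proves Γ φ) : Proves Δ φ := by
  induction hp with
  | ax h' => exact .ax (h h')
  | taut h' => exact .taut h'
  | mp _ _ ih1 ih2 => exact .mp ih1 ih2
  | allE φ t => exact .allE φ t
  | exI φ t => exact .exI φ t
  | allImp φ ψ => exact .allImp φ ψ
  | vacAll φ => exact .vacAll φ
  | exDef φ => exact .exDef φ
  | gen _ ih => exact .gen ih
  | eqRefl t => exact .eqRefl t
  | eqSubst φ t s => exact .eqSubst φ t s

theorem Proves.trans {A B C : AFml} (h1 : Proves Γ (.imp A B)) (h2 : Proves Γ (.imp B C)) :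
    Proves Γ (.imp A C) := .t2 (by intro v; simp only [AFml.evalProp]; tauto) h1 h2

theorem Proves.triv {A B : AFml} (h : Proves Γ B) : Proves Γ (.imp A B) :=
  .t1 (by intro v; simp only [AFml.evalProp]; tauto) h

theorem Proves.exE {φ ψ : AFml} (h : Proves Γ (.imp φ (ψ.lift 0))) : Proves Γ (.imp (.ex φ) ψ) := by
  have h1 : Proves Γ (.imp ((AFml.neg ψ).lift 0) (.neg φ)) :=
    .t1 (by intro v; simp only [AFml.evalProp, AFml.lift]; tauto) h
  have h2 := Proves.mp (.allImp _ _) (Proves.gen h1)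
  have h3 := Proves.vacAll (Γ := Γ) (.neg ψ)
  exact .t3 (by intro v; simp only [AFml.evalProp, iffF]; tauto) h2 h3 (.exDef φ)

theorem Proves.allI {φ ψ : AFml} (h : Proves Γ (.imp (ψ.lift 0) φ)) : Proves Γ (.imp ψ (.all φ)) :=
  .trans (.vacAll ψ) (.mp (.allImp _ _) (.gen h))

/-! ### Equality -/

theorem Proves.eq_symm (t s : ATerm) : Proves Γ (.imp (.eq t s) (.eq s t)) := by
  have h := Proves.eqSubst (Γ := Γ) (.eq (.var 0) (t.lift 0)) t s
  simp only [AFml.subst0, AFml.substAll, ATerm.substAll, ATerm.lift_subst0, subst0Env] at h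
  exact .t2 (by intro v; simp only [AFml.evalProp]; tauto) h (.eqRefl t)

theorem Proves.eq_trans (t s r : ATerm) :
    Proves Γ (.imp (.eq t s) (.imp (.eq s r) (.eq t r))) := by
  have h := Proves.eqSubst (Γ := Γ) (.eq (t.lift 0) (.var 0)) s r
  simp only [AFml.subst0, AFml.substAll, ATerm.substAll, ATerm.lift_subst0, subst0Env] at h
  exact .t1 (by intro v; simp only [AFml.evalProp]; tauto) h

theorem Proves.eqS {t s : ATerm} (h : Proves Γ (.eq t s)) : Proves Γ (.eq s t) :=
  .mp (.eq_symm t s) h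

theorem Proves.eqT {t s r : ATerm} (h : Proves Γ (.eq t s)) (h' : Proves Γ (.eq s r)) :
    Proves Γ (.eq t r) := .mp (.mp (.eq_trans t s r) h) h'

theorem Proves.congr_succ (t s : ATerm) :
    Proves Γ (.imp (.eq t s) (.eq (.succ t) (.succ s))) := by
  have h := Proves.eqSubst (Γ := Γ) (.eq (.succ (t.lift 0)) (.succ (.var 0))) t s
  simp only [AFml.subst0, AFml.substAll, ATerm.substAll, ATerm.lift_subst0, subst0Env] at h
  exact .t2 (by intro v; simp only [AFml.evalProp]; tauto) h (.eqRefl (.succ t))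

theorem Proves.congr_addL (t s r : ATerm) :
    Proves Γ (.imp (.eq t s) (.eq (.add t r) (.add s r))) := by
  have h := Proves.eqSubst (Γ := Γ)
    (.eq (.add (t.lift 0) (r.lift 0)) (.add (.var 0) (r.lift 0))) t s
  simp only [AFml.subst0, AFml.substAll, ATerm.substAll, ATerm.lift_subst0, subst0Env] at h
  exact .t2 (by intro v; simp only [AFml.evalProp]; tauto) h (.eqRefl (.add t r))

theorem Proves.congr_addR (t s r : ATerm) :
    Proves Γ (.imp (.eq t s) (.eq (.add r t) (.add r s))) := by
  have h := Proves.eqSubst (Γ := Γ)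
    (.eq (.add (r.lift 0) (t.lift 0)) (.add (r.lift 0) (.var 0))) t s
  simp only [AFml.subst0, AFml.substAll, ATerm.substAll, ATerm.lift_subst0, subst0Env] at h
  exact .t2 (by intro v; simp only [AFml.evalProp]; tauto) h (.eqRefl (.add r t))

theorem Proves.congr_mulL (t s r : ATerm) :
    Proves Γ (.imp (.eq t s) (.eq (.mul t r) (.mul s r))) := by
  have h := Proves.eqSubst (Γ := Γ)
    (.eq (.mul (t.lift 0) (r.lift 0)) (.mul (.var 0) (r.lift 0))) t s
  simp only [AFml.subst0, AFml.substAll, ATerm.substAll, ATerm.lift_subst0, subst0Env] at h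
  exact .t2 (by intro v; simp only [AFml.evalProp]; tauto) h (.eqRefl (.mul t r))

theorem Proves.congr_mulR (t s r : ATerm) :
    Proves Γ (.imp (.eq t s) (.eq (.mul r t) (.mul r s))) := by
  have h := Proves.eqSubst (Γ := Γ)
    (.eq (.mul (r.lift 0) (t.lift 0)) (.mul (r.lift 0) (.var 0))) t s
  simp only [AFml.subst0, AFml.substAll, ATerm.substAll, ATerm.lift_subst0, subst0Env] at h
  exact .t2 (by intro v; simp only [AFml.evalProp]; tauto) h (.eqRefl (.mul r t))

theorem Proves.congr_leL (t s r : ATerm) :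
    Proves Γ (.imp (.eq t s) (.imp (.le t r) (.le s r))) := by
  have h := Proves.eqSubst (Γ := Γ) (.le (.var 0) (r.lift 0)) t s
  simpa only [AFml.subst0, AFml.substAll, ATerm.substAll, ATerm.lift_subst0, subst0Env] using h

theorem Proves.congr_leR (t s r : ATerm) :
    Proves Γ (.imp (.eq t s) (.imp (.le r t) (.le r s))) := by
  have h := Proves.eqSubst (Γ := Γ) (.le (r.lift 0) (.var 0)) t s
  simpa only [AFml.subst0, AFml.substAll, ATerm.substAll, ATerm.lift_subst0, subst0Env] using h

/-- Replace the variable `0` by an equal term. -/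
theorem Proves.eq_var0 (φ : AFml) (t : ATerm) :
    Proves Γ (.imp (.eq t (.var 0)) (.imp ((φ.lift 1).subst0 t) φ)) := by
  have h := Proves.eqSubst (Γ := Γ) (φ.lift 1) t (.var 0)
  have e : (φ.lift 1).subst0 (.var 0) = φ := by
    rw [AFml.lift_eq, AFml.subst0, AFml.subst_subst]
    have : (fun n => (ATerm.var (if n < 1 then n else n + 1)).substAll (subst0Env (.var 0)))
        = ATerm.var := by
      funext n; cases n <;> simp [ATerm.substAll, subst0Env]
    rw [this, AFml.subst_var]
  rwa [e] at h

end Hilbert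

/-! ### Substitution closure of PA -/

theorem AFml.lift_liftSub (φ : AFml) (σ : ℕ → ATerm) :
    (φ.lift 0).substAll (liftSub σ) = (φ.substAll σ).lift 0 := by
  rw [AFml.lift_eq, AFml.lift_eq, AFml.subst_subst, AFml.subst_subst]
  congr 1; funext n
  simp [ATerm.substAll, liftSub, ATerm.lift_eq]

theorem AFml.subst0_subst (φ : AFml) (t : ATerm) (σ : ℕ → ATerm) :
    (φ.subst0 t).substAll σ = (φ.substAll (liftSub σ)).subst0 (t.substAll σ) := by
  rw [AFml.subst_liftSub, AFml.subst0, AFml.subst_subst]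
  congr 1; funext n
  cases n <;> simp [subst0Env, consSub, ATerm.substAll]

theorem succSubst_subst (φ : AFml) (σ : ℕ → ATerm) :
    (succSubst φ).substAll (liftSub σ) = succSubst (φ.substAll (liftSub σ)) := by
  rw [succSubst, succSubst, AFml.subst_subst, AFml.subst_subst]
  congr 1; funext n
  cases n with
  | zero => simp [liftSub, ATerm.substAll]
  | succ n =>
    simp [liftSub, ATerm.substAll, ATerm.lift_eq, ATerm.subst_subst]

theorem evalProp_subst (v : AFml → Prop) (σ : ℕ → ATerm) (φ : AFml) :
    (φ.substAll σ).evalProp v ↔ φ.evalProp (fun ψ => (ψ.substAll σ).evalProp v) := by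
  induction φ <;> simp_all [AFml.substAll, AFml.evalProp]

theorem PAax.subst {φ : AFml} (h : PAax φ) (σ : ℕ → ATerm) : PAax (φ.substAll σ) := by
  cases h with
  | ind φ =>
    simp only [AFml.substAll, AFml.subst0_subst, succSubst_subst]
    exact .ind _
  | succNeZero => exact .succNeZero
  | succInj => exact .succInj
  | addZero => exact .addZero
  | addSucc => exact .addSucc
  | mulZero => exact .mulZero
  | mulSucc => exact .mulSucc
  | leDef => exact .leDef

theorem Proves.subst {φ : AFml} (h : Proves PA φ) : ∀ σ : ℕ → ATerm, Proves PA (φ.substAll σ) := by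
  induction h with
  | ax h => intro σ; exact .ax (PAax.subst h σ)
  | taut h => intro σ; exact .taut (fun v => (evalProp_subst v σ _).2 (h _))
  | mp _ _ ih1 ih2 => intro σ; exact .mp (ih1 σ) (ih2 σ)
  | allE φ t => intro σ; simp only [AFml.substAll, AFml.subst0_subst]; exact .allE _ _
  | exI φ t => intro σ; simp only [AFml.substAll, AFml.subst0_subst]; exact .exI _ _
  | allImp φ ψ => intro σ; exact .allImp _ _
  | vacAll φ => intro σ; simp only [AFml.substAll, AFml.lift_liftSub]; exact .vacAll _
  | exDef φ => intro σ; exact .exDef _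
  | gen _ ih => intro σ; exact .gen (ih _)
  | eqRefl t => intro σ; exact .eqRefl _
  | eqSubst φ t s => intro σ; simp only [AFml.substAll, AFml.subst0_subst]; exact .eqSubst _ _ _

theorem Proves.lift {φ : AFml} (h : Proves PA φ) (c : ℕ) : Proves PA (φ.lift c) := by
  rw [AFml.lift_eq]; exact h.subst _

end

section

/-! ### Elementary arithmetic in PA -/

/-- Substitution of two terms for the variables `0` and `1`. -/
theorem Proves.inst2 {φ : AFml} (h : Proves PA φ) (t s : ATerm) : Proves PA (φ.subst2 t s) := h.subst _

theorem Proves.inst1 {φ : AFml} (h : Proves PA φ) (t : ATerm) : Proves PA (φ.subst0 t) := h.subst _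

theorem Proves.unall {φ : AFml} (h : Proves PA (.all φ)) : Proves PA φ := by
  have h1 := Proves.lift h 0
  have h2 := Proves.mp (.allE (φ.lift 1) (.var 0)) h1
  have e : (φ.lift 1).subst0 (.var 0) = φ := by
    rw [AFml.lift_eq, AFml.subst0, AFml.subst_subst]
    have : (fun n => (ATerm.var (if n < 1 then n else n + 1)).substAll (subst0Env (.var 0)))
        = ATerm.var := by
      funext n; cases n <;> simp [ATerm.substAll, subst0Env]
    rw [this, AFml.subst_var]
  rwa [e] at h2

theorem pa_ind {φ : AFml} (h0 : Proves PA (φ.subst0 .zero)) (h1 : Proves PA (.imp φ (succSubst φ))) : Proves PA φ :=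
  .unall (.mp (.ax (PAax.ind φ)) (.t2 (by intro v; simp only [AFml.evalProp]; tauto) h0 (.gen h1)))

theorem pa_succ_ne (t : ATerm) : Proves PA (.neg (.eq (.succ t) .zero)) :=
  (Proves.unall (.ax PAax.succNeZero)).inst1 t

theorem pa_succ_inj (t s : ATerm) : Proves PA (.imp (.eq (.succ t) (.succ s)) (.eq t s)) :=
  (Proves.unall (Proves.unall (.ax PAax.succInj))).inst2 s t

theorem pa_add_zero (t : ATerm) : Proves PA (.eq (.add t .zero) t) :=
  (Proves.unall (.ax PAax.addZero)).inst1 t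

theorem pa_add_succ (t s : ATerm) : Proves PA (.eq (.add t (.succ s)) (.succ (.add t s))) :=
  (Proves.unall (Proves.unall (.ax PAax.addSucc))).inst2 s t

theorem pa_mul_zero (t : ATerm) : Proves PA (.eq (.mul t .zero) .zero) :=
  (Proves.unall (.ax PAax.mulZero)).inst1 t

theorem pa_mul_succ (t s : ATerm) : Proves PA (.eq (.mul t (.succ s)) (.add (.mul t s) t)) :=
  (Proves.unall (Proves.unall (.ax PAax.mulSucc))).inst2 s t

theorem pa_le_def (t s : ATerm) :
    Proves PA (iffF (.le t s) (.ex (.eq (.add (.var 0) (t.lift 0)) (s.lift 0)))) :=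
  (Proves.unall (Proves.unall (.ax PAax.leDef))).inst2 s t

theorem pa_le_intro (r t s : ATerm) : Proves PA (.imp (.eq (.add r t) s) (.le t s)) := by
  have h := Proves.exI (Γ := PA) (.eq (.add (.var 0) (t.lift 0)) (s.lift 0)) r
  simp only [AFml.subst0, AFml.substAll, ATerm.substAll, ATerm.lift_subst0, subst0Env] at h
  exact .t2 (by intro v; simp only [AFml.evalProp, iffF]; tauto) h (pa_le_def t s)

theorem pa_le_elim {t s : ATerm} {ψ : AFml}
    (h : Proves PA (.imp (.eq (.add (.var 0) (t.lift 0)) (s.lift 0)) (ψ.lift 0))) :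
    Proves PA (.imp (.le t s) ψ) :=
  .t2 (by intro v; simp only [AFml.evalProp, iffF]; tauto) (Proves.exE h) (pa_le_def t s)

theorem pa_zero_add (t : ATerm) : Proves PA (.eq (.add .zero t) t) := by
  have h : Proves PA (.eq (.add .zero (.var 0)) (.var 0)) := by
    apply pa_ind
    · exact pa_add_zero _
    · have h1 := pa_add_succ .zero (.var 0)
      have h2 := Proves.congr_succ (Γ := PA) (.add .zero (.var 0)) (.var 0)
      have h3 := Proves.eq_trans (Γ := PA) (.add .zero (.succ (.var 0)))
        (.succ (.add .zero (.var 0))) (.succ (.var 0))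
      exact .t3 (by intro v; simp [AFml.evalProp, succSubst, AFml.substAll, ATerm.substAll]; tauto)
        h1 h2 h3
  exact h.inst1 t

theorem pa_succ_add (t s : ATerm) : Proves PA (.eq (.add (.succ t) s) (.succ (.add t s))) := by
  have h : Proves PA (.eq (.add (.succ (.var 1)) (.var 0)) (.succ (.add (.var 1) (.var 0)))) := by
    apply pa_ind
    · exact .eqT (pa_add_zero (.succ (.var 0))) (.eqS (.mp (.congr_succ _ _) (pa_add_zero (.var 0))))
    · have h1 := pa_add_succ (.succ (.var 1)) (.var 0)
      have h2 := Proves.mp (.congr_succ _ _) (pa_add_succ (.var 1) (.var 0))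
      have h3 := Proves.congr_succ (Γ := PA) (.add (.succ (.var 1)) (.var 0))
        (.succ (.add (.var 1) (.var 0)))
      have h4 := Proves.mp (.eq_trans _ _ (.succ (.succ (.add (.var 1) (.var 0))))) h1
      have h5 := Proves.eq_trans (Γ := PA) (.add (.succ (.var 1)) (.succ (.var 0)))
        (.succ (.succ (.add (.var 1) (.var 0)))) (.succ (.add (.var 1) (.succ (.var 0))))
      exact .t4 (by
        intro v; simp [AFml.evalProp, succSubst, AFml.substAll, ATerm.substAll]; tauto)
        h3 h4 h5 (.eqS h2)
  exact h.inst2 s t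

theorem pa_cases (t : ATerm) :
    Proves PA (.or (.eq t .zero) (.ex (.eq (t.lift 0) (.succ (.var 0))))) := by
  have h : Proves PA (.or (.eq (.var 0) .zero) (.ex (.eq (.var 1) (.succ (.var 0))))) := by
    apply pa_ind
    · exact .t1 (by intro v; simp [AFml.evalProp, AFml.subst0, AFml.substAll, ATerm.substAll,
        subst0Env]; tauto) (Proves.eqRefl .zero)
    · have h1 := Proves.exI (Γ := PA) (.eq (.succ (.var 1)) (.succ (.var 0))) (.var 0)
      have h2 := Proves.eqRefl (Γ := PA) (.succ (.var 0))
      refine .t2 ?_ h1 h2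
      intro v
      simp [AFml.evalProp, AFml.subst0, AFml.substAll, ATerm.substAll, subst0Env, succSubst,
        liftSub, ATerm.lift]
      tauto
  exact h.inst1 t

/-- Case split on a term being zero or a successor. -/
theorem pa_cases' {t : ATerm} {ψ : AFml} (h0 : Proves PA (.imp (.eq t .zero) ψ))
    (h1 : Proves PA (.imp (.eq (t.lift 0) (.succ (.var 0))) (ψ.lift 0))) : Proves PA ψ :=
  .t3 (by intro v; simp only [AFml.evalProp]; tauto) (pa_cases t) h0 (Proves.exE h1)

theorem pa_le_zero (t : ATerm) : Proves PA (.imp (.le t .zero) (.eq t .zero)) := by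
  have h : Proves PA (.imp (.le (.var 0) .zero) (.eq (.var 0) .zero)) := by
    apply pa_le_elim
    apply pa_cases' (t := .var 1)
    · exact .taut (by intro v; simp [AFml.evalProp, AFml.lift, ATerm.lift]; tauto)
    · simp only [AFml.lift, ATerm.lift]
      have h1 := Proves.congr_addR (Γ := PA) (.var 2) (.succ (.var 0)) (.var 1)
      have h2 := pa_add_succ (.var 1) (.var 0)
      have h3 := pa_succ_ne (.add (.var 1) (.var 0))
      have h4 := Proves.eq_trans (Γ := PA) (.succ (.add (.var 1) (.var 0)))
        (.add (.var 1) (.var 2)) .zero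
      have h5 := Proves.eq_trans (Γ := PA) (.add (.var 1) (.var 2))
        (.add (.var 1) (.succ (.var 0))) (.succ (.add (.var 1) (.var 0)))
      have h6 := Proves.eq_symm (Γ := PA) (.add (.var 1) (.var 2)) (.succ (.add (.var 1) (.var 0)))
      have h7 : Proves PA (.imp (.eq (.var 2) (.succ (.var 0)))
          (.eq (.succ (.add (.var 1) (.var 0))) (.add (.var 1) (.var 2)))) :=
        .t4 (by intro v; simp only [AFml.evalProp]; tauto) h1 h2 h5 h6
      exact .t3 (by intro v; simp [AFml.evalProp]; tauto) h7 h4 h3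
  exact h.inst1 t

theorem pa_le_succ (t s : ATerm) :
    Proves PA (.imp (.le t (.succ s)) (.or (.le t s) (.eq (.succ s) t))) := by
  have h : Proves PA (.imp (.le (.var 0) (.succ (.var 1)))
      (.or (.le (.var 0) (.var 1)) (.eq (.succ (.var 1)) (.var 0)))) := by
    apply pa_le_elim
    apply pa_cases' (t := .var 0)
    · simp only [AFml.lift, ATerm.lift]
      have h1 := Proves.congr_addL (Γ := PA) (.var 0) .zero (.var 1)
      have h2 := pa_zero_add (.var 1)
      have h3 := Proves.eq_trans (Γ := PA) (.add (.var 0) (.var 1)) (.add .zero (.var 1)) (.var 1)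
      have h4 := Proves.eq_trans (Γ := PA) (.succ (.var 2)) (.add (.var 0) (.var 1)) (.var 1)
      have h5 := Proves.eq_symm (Γ := PA) (.add (.var 0) (.var 1)) (.succ (.var 2))
      have h6 : Proves PA (.imp (.eq (.var 0) .zero) (.eq (.add (.var 0) (.var 1)) (.var 1))) :=
        .t3 (by intro v; simp only [AFml.evalProp]; tauto) h1 h2 h3
      exact .t3 (by intro v; simp [AFml.evalProp]; tauto) h4 h5 h6
    · simp only [AFml.lift, ATerm.lift]
      have h1 := Proves.congr_addL (Γ := PA) (.var 1) (.succ (.var 0)) (.var 2)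
      have h2 := pa_succ_add (.var 0) (.var 2)
      have h3 := Proves.eq_trans (Γ := PA) (.add (.var 1) (.var 2)) (.add (.succ (.var 0)) (.var 2))
        (.succ (.add (.var 0) (.var 2)))
      have h4 := Proves.eq_symm (Γ := PA) (.add (.var 1) (.var 2)) (.succ (.add (.var 0) (.var 2)))
      have h5 := Proves.eq_trans (Γ := PA) (.succ (.add (.var 0) (.var 2))) (.add (.var 1) (.var 2))
        (.succ (.var 3))
      have h6 := pa_succ_inj (.add (.var 0) (.var 2)) (.var 3)
      have h7 := pa_le_intro (.var 0) (.var 2) (.var 3)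
      have h8 : Proves PA (.imp (.eq (.var 1) (.succ (.var 0)))
          (.eq (.succ (.add (.var 0) (.var 2))) (.add (.var 1) (.var 2)))) :=
        .t4 (by intro v; simp only [AFml.evalProp]; tauto) h1 h2 h3 h4
      exact .t4 (by intro v; simp [AFml.evalProp]; tauto) h8 h5 h6 h7
  exact h.inst2 t s

/-- `S t ≤ s → t ≤ s`. -/
theorem pa_succ_le (t s : ATerm) : Proves PA (.imp (.le (.succ t) s) (.le t s)) := by
  have h : Proves PA (.imp (.le (.succ (.var 0)) (.var 1)) (.le (.var 0) (.var 1))) := by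
    apply pa_le_elim
    simp only [AFml.lift, ATerm.lift]
    have h1 := Proves.eqT (pa_succ_add (.var 0) (.var 1)) (.eqS (pa_add_succ (.var 0) (.var 1)))
    have h2 := Proves.mp (.eq_trans _ _ (.var 2)) h1
    have h3 := pa_le_intro (.succ (.var 0)) (.var 1) (.var 2)
    exact .t2 (by intro v; simp [AFml.evalProp]; tauto) h2 h3
  exact h.inst2 t s

/-- `t ≤ s → t ≤ S s`. -/
theorem pa_le_step (t s : ATerm) : Proves PA (.imp (.le t s) (.le t (.succ s))) := by
  have h : Proves PA (.imp (.le (.var 0) (.var 1)) (.le (.var 0) (.succ (.var 1)))) := by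
    apply pa_le_elim
    simp only [AFml.lift, ATerm.lift]
    have h1 := pa_succ_add (.var 0) (.var 1)
    have h2 := Proves.congr_succ (Γ := PA) (.add (.var 0) (.var 1)) (.var 2)
    have h3 := Proves.mp (.eq_trans _ _ (.succ (.var 2))) h1
    have h4 := pa_le_intro (.succ (.var 0)) (.var 1) (.succ (.var 2))
    exact .t3 (by intro v; simp [AFml.evalProp]; tauto) h2 h3 h4
  exact h.inst2 t s

theorem pa_zero_le (t : ATerm) : Proves PA (.le .zero t) := .mp (pa_le_intro t .zero t) (pa_add_zero t)

theorem pa_le_refl (t : ATerm) : Proves PA (.le t t) := .mp (pa_le_intro .zero t t) (pa_zero_add t)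

/-- `t ≤ s → s ≤ t ∨ S t ≤ s`. -/
theorem pa_le_lt (t s : ATerm) : Proves PA (.imp (.le t s) (.or (.le s t) (.le (.succ t) s))) := by
  have h : Proves PA (.imp (.le (.var 0) (.var 1))
      (.or (.le (.var 1) (.var 0)) (.le (.succ (.var 0)) (.var 1)))) := by
    apply pa_le_elim
    apply pa_cases' (t := .var 0)
    · simp only [AFml.lift, ATerm.lift]
      have h1 := Proves.congr_addL (Γ := PA) (.var 0) .zero (.var 1)
      have h2 := pa_zero_add (.var 1)
      have h3 := Proves.eq_trans (Γ := PA) (.add (.var 0) (.var 1)) (.add .zero (.var 1)) (.var 1)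
      have h6 : Proves PA (.imp (.eq (.var 0) .zero) (.eq (.add (.var 0) (.var 1)) (.var 1))) :=
        .t3 (by intro v; simp only [AFml.evalProp]; tauto) h1 h2 h3
      have h4 := Proves.congr_leL (Γ := PA) (.add (.var 0) (.var 1)) (.var 2) (.var 1)
      have h5 := Proves.congr_leL (Γ := PA) (.var 1) (.add (.var 0) (.var 1)) (.var 1)
      have h7 := Proves.eq_symm (Γ := PA) (.add (.var 0) (.var 1)) (.var 1)
      have h8 := Proves.mp (.t1 (by intro v; simp only [AFml.evalProp]; tauto) h5)
        (pa_le_refl (.var 1)) (φ := .le (.var 1) (.var 1))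
        (ψ := .imp (.eq (.var 1) (.add (.var 0) (.var 1))) (.le (.add (.var 0) (.var 1)) (.var 1)))
      exact .t4 (by intro v; simp [AFml.evalProp]; tauto) h4 h6 h7 h8
    · simp only [AFml.lift, ATerm.lift]
      have h1 := Proves.congr_addL (Γ := PA) (.var 1) (.succ (.var 0)) (.var 2)
      have h2 := Proves.eqT (pa_succ_add (.var 0) (.var 2)) (.eqS (pa_add_succ (.var 0) (.var 2)))
      have h3 := Proves.eq_trans (Γ := PA) (.add (.var 1) (.var 2)) (.add (.succ (.var 0)) (.var 2))
        (.add (.var 0) (.succ (.var 2)))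
      have h4 := Proves.eq_symm (Γ := PA) (.add (.var 1) (.var 2)) (.add (.var 0) (.succ (.var 2)))
      have h5 := Proves.eq_trans (Γ := PA) (.add (.var 0) (.succ (.var 2))) (.add (.var 1) (.var 2))
        (.var 3)
      have h7 := pa_le_intro (.var 0) (.succ (.var 2)) (.var 3)
      have h8 : Proves PA (.imp (.eq (.var 1) (.succ (.var 0)))
          (.eq (.add (.var 0) (.succ (.var 2))) (.add (.var 1) (.var 2)))) :=
        .t4 (by intro v; simp only [AFml.evalProp]; tauto) h1 h2 h3 h4
      exact .t3 (by intro v; simp [AFml.evalProp]; tauto) h8 h5 h7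
  exact h.inst2 t s

/-! ### Numerals -/

theorem pa_num_add (a b : ℕ) : Proves PA (.eq (.add (numeral a) (numeral b)) (numeral (a + b))) := by
  induction b with
  | zero => exact pa_add_zero _
  | succ b ih => exact .eqT (pa_add_succ _ _) (.mp (.congr_succ _ _) ih)

theorem pa_num_mul (a b : ℕ) : Proves PA (.eq (.mul (numeral a) (numeral b)) (numeral (a * b))) := by
  induction b with
  | zero => exact pa_mul_zero _
  | succ b ih =>
    exact .eqT (pa_mul_succ _ _) (.eqT (.mp (.congr_addL _ _ _) ih) (pa_num_add _ _))

theorem pa_num_ne {a b : ℕ} (h : a ≠ b) : Proves PA (.neg (.eq (numeral a) (numeral b))) := by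
  induction a generalizing b with
  | zero =>
    cases b with
    | zero => exact absurd rfl h
    | succ b =>
      exact .t2 (by intro v; simp only [AFml.evalProp, numeral]; tauto) (pa_succ_ne (numeral b))
        (Proves.eq_symm .zero (.succ (numeral b)))
  | succ a ih =>
    cases b with
    | zero => exact pa_succ_ne _
    | succ b =>
      exact .t2 (by intro v; simp only [AFml.evalProp, numeral]; tauto)
        (ih (b := b) (by omega)) (pa_succ_inj (numeral a) (numeral b))

theorem pa_num_le {a b : ℕ} (h : a ≤ b) : Proves PA (.le (numeral a) (numeral b)) := by
  have := pa_num_add (b - a) a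
  rw [Nat.sub_add_cancel h] at this
  exact .mp (pa_le_intro _ _ _) this

theorem pa_num_nle {a b : ℕ} (h : b < a) : Proves PA (.neg (.le (numeral a) (numeral b))) := by
  induction b with
  | zero =>
    exact .t2 (by intro v; simp only [AFml.evalProp, numeral]; tauto) (pa_le_zero (numeral a))
      (pa_num_ne (a := a) (b := 0) (by omega))
  | succ b ih =>
    exact .t3 (by intro v; simp only [AFml.evalProp, numeral]; tauto)
      (pa_le_succ (numeral a) (numeral b)) (ih (by omega))
      (pa_num_ne (a := b + 1) (b := a) (by omega))

theorem pa_bounded {φ : AFml} (n : ℕ) (h : ∀ i ≤ n, Proves PA (φ.subst0 (numeral i))) :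
    Proves PA (.imp (.le (.var 0) (numeral n)) φ) := by
  have key : ∀ i ≤ n, Proves PA (.imp (.eq (numeral i) (.var 0)) φ) := by
    intro i hi
    have h1 := Proves.eq_var0 (Γ := PA) φ (numeral i)
    have e : (φ.lift 1).subst0 (numeral i) = (φ.subst0 (numeral i)).lift 0 := by
      rw [AFml.lift_eq, AFml.lift_eq, AFml.subst0, AFml.subst_subst, AFml.subst0, AFml.subst_subst]
      congr 1; funext k
      cases k <;> simp [ATerm.substAll, subst0Env]
    rw [e] at h1
    exact .t2 (by intro v; simp only [AFml.evalProp]; tauto) h1 ((h i hi).lift 0)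
  have gen : ∀ m ≤ n, Proves PA (.imp (.le (.var 0) (numeral m)) φ) := by
    intro m
    induction m with
    | zero =>
      intro hm
      exact .t3 (by intro v; simp only [AFml.evalProp, numeral]; tauto) (pa_le_zero (.var 0))
        (key 0 hm) (Proves.eq_symm (.var 0) .zero)
    | succ m ih =>
      intro hm
      exact .t3 (by intro v; simp only [AFml.evalProp, numeral]; tauto)
        (pa_le_succ (.var 0) (numeral m)) (ih (by omega)) (key (m + 1) hm)
  exact gen n le_rfl

theorem pa_num_le_of_le {c N : ℕ} (h : c ≤ N) (t : ATerm) :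
    Proves PA (.imp (.le (numeral N) t) (.le (numeral c) t)) := by
  induction N with
  | zero =>
    obtain rfl : c = 0 := by omega
    exact .taut (by intro v; simp [AFml.evalProp])
  | succ N ih =>
    rcases Nat.lt_or_ge N c with h' | h'
    · obtain rfl : c = N + 1 := by omega
      exact .taut (by intro v; simp [AFml.evalProp])
    · exact (pa_succ_le _ _).trans (ih h')

theorem pa_dichotomy (N : ℕ) (t : ATerm) : Proves PA (.or (.le t (numeral N)) (.le (numeral N) t)) := by
  induction N with
  | zero => exact .t1 (by intro v; simp only [AFml.evalProp]; tauto) (pa_zero_le t)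
  | succ N ih =>
    exact .t3 (by intro v; simp only [AFml.evalProp, numeral]; tauto) ih
      (pa_le_step t (numeral N)) (pa_le_lt (numeral N) t)

/-! ### `Δ₀`- and `Σ₁`-completeness -/

theorem pa_term (t : ATerm) (ρ : ℕ → ℕ) : Proves PA (.eq (t.substAll (num ρ)) (numeral (t.val ρ))) := by
  induction t with
  | var n => exact .eqRefl _
  | zero => exact .eqRefl _
  | succ t ih => exact .mp (.congr_succ _ _) ih
  | add t s ih1 ih2 =>
    exact .eqT (.mp (.congr_addL _ _ _) ih1) (.eqT (.mp (.congr_addR _ _ _) ih2) (pa_num_add _ _))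
  | mul t s ih1 ih2 =>
    exact .eqT (.mp (.congr_mulL _ _ _) ih1) (.eqT (.mp (.congr_mulR _ _ _) ih2) (pa_num_mul _ _))

theorem delta0_complete {φ : AFml} (h : IsDelta0 φ) : ∀ ρ : ℕ → ℕ,
    (φ.Sat ρ → Proves PA (φ.substAll (num ρ))) ∧ (¬ φ.Sat ρ → Proves PA (.neg (φ.substAll (num ρ)))) := by
  induction h with
  | eq t s =>
    intro ρ
    have h1 := pa_term t ρ
    have h2 := pa_term s ρ
    constructor
    · intro hs
      simp only [AFml.Sat] at hs
      rw [hs] at h1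
      exact .eqT h1 (.eqS h2)
    · intro hs
      have h3 := pa_num_ne hs
      have h4 := Proves.mp (.eq_trans _ _ (s.substAll (num ρ))) (.eqS h1)
      have h5 := Proves.eq_trans (Γ := PA) (numeral (t.val ρ)) (s.substAll (num ρ))
        (numeral (s.val ρ))
      exact .t4 (by intro v; simp only [AFml.evalProp, AFml.substAll]; tauto) h2 h3 h4 h5
  | le t s =>
    intro ρ
    have h1 := pa_term t ρ
    have h2 := pa_term s ρ
    constructor
    · intro hs
      exact .mp (.mp (.congr_leL _ _ _) (.eqS h1)) (.mp (.mp (.congr_leR _ _ _) (.eqS h2))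
        (pa_num_le hs))
    · intro hs
      have h3 := pa_num_nle (not_le.1 hs)
      have h4 := Proves.mp (.congr_leL _ _ (s.substAll (num ρ))) h1
      have h5 := Proves.mp (.congr_leR _ _ (numeral (t.val ρ))) h2
      exact .t3 (by intro v; simp only [AFml.evalProp, AFml.substAll]; tauto) h3 h4 h5
  | neg _ ih =>
    intro ρ
    obtain ⟨h1, h2⟩ := ih ρ
    refine ⟨fun h => h2 h, fun h => ?_⟩
    exact .t1 (by intro v; simp only [AFml.evalProp, AFml.substAll]; tauto)
      (h1 (by simpa [AFml.Sat] using h))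
  | @and φ ψ _ _ ih1 ih2 =>
    intro ρ
    obtain ⟨a1, a2⟩ := ih1 ρ
    obtain ⟨b1, b2⟩ := ih2 ρ
    refine ⟨fun h => ?_, fun h => ?_⟩
    · exact .t2 (by intro v; simp only [AFml.evalProp, AFml.substAll]; tauto) (a1 h.1) (b1 h.2)
    · by_cases hφ : φ.Sat ρ
      · have hψ : ¬ ψ.Sat ρ := fun hh => h ⟨hφ, hh⟩
        exact .t1 (by intro v; simp only [AFml.evalProp, AFml.substAll]; tauto) (b2 hψ)
      · exact .t1 (by intro v; simp only [AFml.evalProp, AFml.substAll]; tauto) (a2 hφ)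
  | @or φ ψ _ _ ih1 ih2 =>
    intro ρ
    obtain ⟨a1, a2⟩ := ih1 ρ
    obtain ⟨b1, b2⟩ := ih2 ρ
    refine ⟨fun h => ?_, fun h => ?_⟩
    · rcases h with h | h
      · exact .t1 (by intro v; simp only [AFml.evalProp, AFml.substAll]; tauto) (a1 h)
      · exact .t1 (by intro v; simp only [AFml.evalProp, AFml.substAll]; tauto) (b1 h)
    · exact .t2 (by intro v; simp only [AFml.evalProp, AFml.substAll]; tauto)
        (a2 fun hh => h (Or.inl hh)) (b2 fun hh => h (Or.inr hh))
  | @imp φ ψ _ _ ih1 ih2 =>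
    intro ρ
    obtain ⟨a1, a2⟩ := ih1 ρ
    obtain ⟨b1, b2⟩ := ih2 ρ
    refine ⟨fun h => ?_, fun h => ?_⟩
    · by_cases hφ : φ.Sat ρ
      · exact .t1 (by intro v; simp only [AFml.evalProp, AFml.substAll]; tauto) (b1 (h hφ))
      · exact .t1 (by intro v; simp only [AFml.evalProp, AFml.substAll]; tauto) (a2 hφ)
    · have hφ : φ.Sat ρ := by by_contra hh; exact h fun h' => absurd h' hh
      have hψ : ¬ ψ.Sat ρ := fun hh => h fun _ => hh
      exact .t2 (by intro v; simp only [AFml.evalProp, AFml.substAll]; tauto) (a1 hφ) (b2 hψ)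
  | @ball φ t _ ih =>
    intro ρ
    have ht := pa_term t ρ
    simp only [AFml.substAll, ATerm.lift_subst, ATerm.num_lift]
    refine ⟨fun h => ?_, fun h => ?_⟩
    · have h1 : Proves PA (.imp (.le (.var 0) (numeral (t.val ρ))) (φ.substAll (liftSub (num ρ)))) := by
        apply pa_bounded
        intro i hi
        rw [AFml.subst_liftSub, consSub_num]
        exact (ih _).1 (h i (by simpa [AFml.Sat, ATerm.val, ATerm.val_lift, consEnv] using hi))
      have h2 := Proves.mp (.congr_leR _ _ (.var 0)) ht
      exact .gen (h2.trans h1)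
    · simp only [AFml.Sat, not_forall] at h
      obtain ⟨a, ha, hna⟩ := h
      have h1 := (ih _).2 hna
      have ha' : a ≤ t.val ρ := by simpa [AFml.Sat, ATerm.val, ATerm.val_lift, consEnv] using ha
      have h2 := Proves.mp (.mp (.congr_leR _ _ (numeral a)) (.eqS ht)) (pa_num_le ha')
      have h3 := Proves.allE (Γ := PA) (.imp (.le (.var 0) (t.substAll (num ρ)))
        (φ.substAll (liftSub (num ρ)))) (numeral a)
      have e : (AFml.imp (.le (.var 0) (t.substAll (num ρ)))
        (φ.substAll (liftSub (num ρ)))).subst0 (numeral a) =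
        (AFml.imp (.le (numeral a) (t.substAll (num ρ))) (φ.substAll (num (consEnv a ρ)))) := by
        have e1 := AFml.subst_liftSub φ (num ρ) (numeral a)
        have e2 := ATerm.lift_subst0 (t.substAll (num ρ)) (numeral a)
        rw [ATerm.num_lift] at e2
        rw [consSub_num] at e1
        rw [← e1]
        simp only [AFml.subst0, AFml.substAll, e2]
        rfl
      rw [e] at h3
      exact .t3 (by intro v; simp only [AFml.evalProp]; tauto) h1 h2 h3
  | @bex φ t _ ih =>
    intro ρ
    have ht := pa_term t ρ
    simp only [AFml.substAll, ATerm.lift_subst, ATerm.num_lift]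
    refine ⟨fun h => ?_, fun h => ?_⟩
    · obtain ⟨a, ha, hna⟩ := h
      have h1 := (ih _).1 hna
      have ha' : a ≤ t.val ρ := by simpa [AFml.Sat, ATerm.val, ATerm.val_lift, consEnv] using ha
      have h2 := Proves.mp (.mp (.congr_leR _ _ (numeral a)) (.eqS ht)) (pa_num_le ha')
      have h3 := Proves.exI (Γ := PA) (.and (.le (.var 0) (t.substAll (num ρ)))
        (φ.substAll (liftSub (num ρ)))) (numeral a)
      have e : (AFml.and (.le (.var 0) (t.substAll (num ρ)))
        (φ.substAll (liftSub (num ρ)))).subst0 (numeral a) =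
        (AFml.and (.le (numeral a) (t.substAll (num ρ))) (φ.substAll (num (consEnv a ρ)))) := by
        have e1 := AFml.subst_liftSub φ (num ρ) (numeral a)
        have e2 := ATerm.lift_subst0 (t.substAll (num ρ)) (numeral a)
        rw [ATerm.num_lift] at e2
        rw [consSub_num] at e1
        rw [← e1]
        simp only [AFml.subst0, AFml.substAll, e2]
        rfl
      rw [e] at h3
      exact .t3 (by intro v; simp only [AFml.evalProp]; tauto) h1 h2 h3
    · have h1 : Proves PA (.imp (.le (.var 0) (numeral (t.val ρ)))
          (.neg (φ.substAll (liftSub (num ρ))))) := by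
        apply pa_bounded
        intro i hi
        have e := AFml.subst_liftSub φ (num ρ) (numeral i)
        rw [consSub_num] at e
        have e' : (AFml.neg (φ.substAll (liftSub (num ρ)))).subst0 (numeral i) =
          .neg (φ.substAll (num (consEnv i ρ))) := by rw [← e]; rfl
        rw [e']
        refine (ih _).2 fun hh => h ⟨i, ?_, hh⟩
        simpa [AFml.Sat, ATerm.val, ATerm.val_lift, consEnv] using hi
      have h2 := Proves.mp (.congr_leR _ _ (.var 0)) ht
      have h4 : Proves PA (.imp (.ex (.and (.le (.var 0) (t.substAll (num ρ)))
          (φ.substAll (liftSub (num ρ))))) botFml) := by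
        apply Proves.exE
        exact .t2 (by intro v; simp only [AFml.evalProp]; tauto) h1 h2
      exact .t2 (by intro v; simp only [AFml.evalProp, botFml]; tauto) h4
        (pa_num_ne (a := 0) (b := 1) (by omega))

theorem pa_not_bot : Proves PA (.neg botFml) := pa_num_ne (a := 0) (b := 1) (by omega)

/-- A simple class of `Σ₁` formulas. -/
inductive Sg : AFml → Prop
  | delta0 {φ} : IsDelta0 φ → Sg φ
  | and {φ ψ} : Sg φ → Sg ψ → Sg (.and φ ψ)
  | ex {φ} : Sg φ → Sg (.ex φ)

theorem Sg.isSigma1 {φ : AFml} (h : Sg φ) : IsSigma1 φ := by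
  induction h with
  | delta0 h => exact .delta0 h
  | and _ _ ih1 ih2 => exact .and ih1 ih2
  | ex _ ih => exact .ex ih

theorem Sg.complete {φ : AFml} (h : Sg φ) : ∀ ρ : ℕ → ℕ, φ.Sat ρ → Proves PA (φ.substAll (num ρ)) := by
  induction h with
  | delta0 h => exact fun ρ => (delta0_complete h ρ).1
  | and _ _ ih1 ih2 =>
    intro ρ hs
    exact .t2 (by intro v; simp only [AFml.evalProp, AFml.substAll]; tauto) (ih1 ρ hs.1) (ih2 ρ hs.2)
  | @ex φ _ ih =>
    intro ρ hs
    obtain ⟨a, ha⟩ := hs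
    have h1 := ih _ ha
    rw [← consSub_num, ← AFml.subst_liftSub] at h1
    exact .mp (.exI _ _) h1

end

section

/-! ### Definability: `Δ₀` and `Σ₁` predicates on environments -/

/-- `S` is defined by a `Δ₀` formula. -/
def Del (S : (ℕ → ℕ) → Prop) : Prop := ∃ φ : AFml, IsDelta0 φ ∧ ∀ ρ, φ.Sat ρ ↔ S ρ

theorem consEnv_eta (ρ : ℕ → ℕ) : consEnv (ρ 0) (fun n => ρ (n + 1)) = ρ := by
  funext n; cases n <;> rfl

theorem Del.of_iff {S S' : (ℕ → ℕ) → Prop} (h : Del S) (e : ∀ ρ, S ρ ↔ S' ρ) : Del S' := by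
  obtain ⟨φ, h1, h2⟩ := h
  exact ⟨φ, h1, fun ρ => (h2 ρ).trans (e ρ)⟩

theorem Del.eq (t s : ATerm) : Del (fun ρ => t.val ρ = s.val ρ) := ⟨_, .eq t s, fun _ => Iff.rfl⟩
theorem Del.le (t s : ATerm) : Del (fun ρ => t.val ρ ≤ s.val ρ) := ⟨_, .le t s, fun _ => Iff.rfl⟩

theorem Del.not {S : (ℕ → ℕ) → Prop} (h : Del S) : Del (fun ρ => ¬ S ρ) := by
  obtain ⟨φ, h1, h2⟩ := h
  exact ⟨_, .neg h1, fun ρ => not_congr (h2 ρ)⟩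

theorem Del.and {S S' : (ℕ → ℕ) → Prop} (h : Del S) (h' : Del S') : Del (fun ρ => S ρ ∧ S' ρ) := by
  obtain ⟨φ, h1, h2⟩ := h
  obtain ⟨ψ, h3, h4⟩ := h'
  exact ⟨_, .and h1 h3, fun ρ => and_congr (h2 ρ) (h4 ρ)⟩

theorem Del.or {S S' : (ℕ → ℕ) → Prop} (h : Del S) (h' : Del S') : Del (fun ρ => S ρ ∨ S' ρ) := by
  obtain ⟨φ, h1, h2⟩ := h
  obtain ⟨ψ, h3, h4⟩ := h'
  exact ⟨_, .or h1 h3, fun ρ => or_congr (h2 ρ) (h4 ρ)⟩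

theorem Del.sub {S : (ℕ → ℕ) → Prop} (h : Del S) (σ : ℕ → ATerm) :
    Del (fun ρ => S (fun n => (σ n).val ρ)) := by
  obtain ⟨φ, h1, h2⟩ := h
  exact ⟨_, h1.subst σ, fun ρ => (AFml.sat_subst φ σ ρ).trans (h2 _)⟩

theorem Del.ren {S : (ℕ → ℕ) → Prop} (h : Del S) (f : ℕ → ℕ) :
    Del (fun ρ => S (fun n => ρ (f n))) := h.sub (fun n => .var (f n))

theorem Del.bex {S : (ℕ → ℕ) → Prop} (h : Del S) (t : ATerm) :
    Del (fun ρ => ∃ a ≤ t.val ρ, S (consEnv a ρ)) := by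
  obtain ⟨φ, h1, h2⟩ := h
  refine ⟨_, .bex t h1, fun ρ => ?_⟩
  simp only [AFml.Sat, ATerm.val_lift, h2, ATerm.val]
  rfl

theorem Del.ball {S : (ℕ → ℕ) → Prop} (h : Del S) (t : ATerm) :
    Del (fun ρ => ∀ a ≤ t.val ρ, S (consEnv a ρ)) := by
  obtain ⟨φ, h1, h2⟩ := h
  refine ⟨_, .ball t h1, fun ρ => ?_⟩
  simp only [AFml.Sat, ATerm.val_lift, h2, ATerm.val]
  rfl

/-- `S` is `Σ₁`-definable. -/
class Sig (S : (ℕ → ℕ) → Prop) : Prop where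
  out : ∃ D : (ℕ → ℕ) → Prop, Del D ∧ (∀ ρ w w', w ≤ w' → D (consEnv w ρ) → D (consEnv w' ρ)) ∧
    ∀ ρ, S ρ ↔ ∃ w, D (consEnv w ρ)

theorem Sig.of_iff {S S' : (ℕ → ℕ) → Prop} (h : Sig S) (e : ∀ ρ, S ρ ↔ S' ρ) : Sig S' := by
  obtain ⟨D, h1, h2, h3⟩ := h
  exact ⟨D, h1, h2, fun ρ => (e ρ).symm.trans (h3 ρ)⟩

theorem Sig.ofDel {S : (ℕ → ℕ) → Prop} (h : Del S) : Sig S := by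
  refine ⟨fun ρ => S (fun n => ρ (n + 1)), h.ren _, fun ρ w w' _ h => h, fun ρ => ?_⟩
  exact ⟨fun h => ⟨0, h⟩, fun ⟨_, h⟩ => h⟩

theorem Sig.ren {S : (ℕ → ℕ) → Prop} (h : Sig S) (f : ℕ → ℕ) :
    Sig (fun ρ => S (fun n => ρ (f n))) := by
  obtain ⟨D, h1, h2, h3⟩ := h
  have e : ∀ (ρ : ℕ → ℕ) w, (fun n => consEnv w ρ (consEnv 0 (fun n => f n + 1) n))
      = consEnv w (fun n => ρ (f n)) := by
    intro ρ w; funext n; cases n <;> rfl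
  refine ⟨fun ρ => D (fun n => ρ (consEnv 0 (fun n => f n + 1) n)), h1.ren _, ?_, fun ρ => ?_⟩
  · intro ρ w w' hw
    simp only [e]; exact h2 _ _ _ hw
  · simp only [e]; exact h3 _

instance Sig.and {S S' : (ℕ → ℕ) → Prop} [h : Sig S] [h' : Sig S'] : Sig (fun ρ => S ρ ∧ S' ρ) := by
  obtain ⟨D, h1, h2, h3⟩ := h
  obtain ⟨D', k1, k2, k3⟩ := h'
  refine ⟨_, h1.and k1, fun ρ w w' hw h => ⟨h2 _ _ _ hw h.1, k2 _ _ _ hw h.2⟩, fun ρ => ?_⟩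
  rw [h3, k3]
  constructor
  · rintro ⟨⟨w, hw⟩, w', hw'⟩
    exact ⟨max w w', h2 _ _ _ (le_max_left _ _) hw, k2 _ _ _ (le_max_right _ _) hw'⟩
  · rintro ⟨w, h, h'⟩; exact ⟨⟨w, h⟩, w, h'⟩

instance Sig.or {S S' : (ℕ → ℕ) → Prop} [h : Sig S] [h' : Sig S'] : Sig (fun ρ => S ρ ∨ S' ρ) := by
  obtain ⟨D, h1, h2, h3⟩ := h
  obtain ⟨D', k1, k2, k3⟩ := h'
  refine ⟨_, h1.or k1, fun ρ w w' hw h => h.imp (h2 _ _ _ hw) (k2 _ _ _ hw), fun ρ => ?_⟩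
  rw [h3, k3, exists_or]

theorem Sig.ex' {S : (ℕ → ℕ) → Prop} (h : Sig S) : Sig (fun ρ => ∃ a, S (consEnv a ρ)) := by
  obtain ⟨D, h1, h2, h3⟩ := h
  let f : ℕ → ℕ
    | 0 => 1
    | 1 => 0
    | n + 2 => n + 2
  have e : ∀ (ρ : ℕ → ℕ) a w, (fun n => consEnv a (consEnv w ρ) (f n))
      = consEnv w (consEnv a ρ) := by
    intro ρ a w; funext n
    match n with
    | 0 => rfl
    | 1 => rfl
    | n + 2 => rfl
  refine ⟨_, (h1.ren f).bex (.var 0), ?_, fun ρ => ?_⟩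
  · rintro ρ w w' hw ⟨a, ha, h⟩
    rw [e] at h
    refine ⟨a, le_trans ha hw, ?_⟩
    rw [e]; exact h2 _ _ _ hw h
  · simp only [h3, e]
    constructor
    · rintro ⟨a, w, h⟩
      exact ⟨max a w, a, le_max_left _ _, h2 _ _ _ (le_max_right _ _) h⟩
    · rintro ⟨w, a, _, h⟩; exact ⟨a, w, h⟩

theorem Sig.ball' {S : (ℕ → ℕ) → Prop} (h : Sig S) :
    Sig (fun ρ => ∀ a ≤ ρ 0, S (consEnv a ρ)) := by
  obtain ⟨D, h1, h2, h3⟩ := h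
  let f : ℕ → ℕ
    | 0 => 1
    | 1 => 0
    | n + 2 => n + 2
  have e : ∀ (ρ : ℕ → ℕ) a w, (fun n => consEnv a (consEnv w ρ) (f n))
      = consEnv w (consEnv a ρ) := by
    intro ρ a w; funext n
    match n with
    | 0 => rfl
    | 1 => rfl
    | n + 2 => rfl
  refine ⟨_, (h1.ren f).ball (.var 1), ?_, fun ρ => ?_⟩
  · intro ρ w w' hw h a ha
    have := h a ha
    rw [e] at this ⊢
    exact h2 _ _ _ hw this
  · simp only [h3, e]
    change (∀ a ≤ ρ 0, _) ↔ ∃ w, ∀ a ≤ ρ 0, _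
    constructor
    · intro h
      choose! g hg using h
      refine ⟨(Finset.range (ρ 0 + 1)).sup g, fun a ha => h2 _ _ _ ?_ (hg a ha)⟩
      exact Finset.le_sup (Finset.mem_range.2 (Nat.lt_succ_of_le ha))
    · rintro ⟨w, h⟩ a ha; exact ⟨w, h a ha⟩

instance Sig.ex {S : (ℕ → ℕ) → ℕ → Prop} [h : Sig (fun ρ => S (fun n => ρ (n + 1)) (ρ 0))] :
    Sig (fun ρ => ∃ a, S ρ a) := h.ex'

/-- Functions with a `Σ₁` graph. -/
class SigFn (F : (ℕ → ℕ) → ℕ) : Prop where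
  out : Sig (fun ρ => ρ 0 = F (fun n => ρ (n + 1)))

theorem SigFn.graph {F : (ℕ → ℕ) → ℕ} (h : SigFn F) (i : ℕ) (f : ℕ → ℕ) :
    Sig (fun ρ => ρ i = F (fun n => ρ (f n))) :=
  h.out.ren (fun n => consEnv i f n)

/-- Relation composed with functions. -/
theorem Sig.comp1 {R : ℕ → Prop} {F : (ℕ → ℕ) → ℕ} (h : Sig (fun ρ => R (ρ 0))) (hF : SigFn F) :
    Sig (fun ρ => R (F ρ)) := by
  have h1 : Sig (fun ρ => ∃ a, a = F ρ ∧ R a) := by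
    have := hF.out
    infer_instance
  exact h1.of_iff (fun ρ => by simp)

theorem Sig.comp2 {R : ℕ → ℕ → Prop} {F G : (ℕ → ℕ) → ℕ} (h : Sig (fun ρ => R (ρ 0) (ρ 1)))
    (hF : SigFn F) (hG : SigFn G) : Sig (fun ρ => R (F ρ) (G ρ)) := by
  have h1 : Sig (fun ρ => ∃ a b, a = F ρ ∧ b = G ρ ∧ R a b) := by
    have h1 := hF.graph 1 (fun n => n + 2)
    have h2 := hG.graph 0 (fun n => n + 2)
    have h3 := h.ren (fun n => if n = 0 then 1 else 0)
    simp only [if_true] at h3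
    exact @Sig.ex _ (@Sig.ex _ (@Sig.and _ _ h1 (@Sig.and _ _ h2 h3)))
  exact h1.of_iff (fun ρ => by simp)

theorem Sig.comp3 {R : ℕ → ℕ → ℕ → Prop} {F G H : (ℕ → ℕ) → ℕ}
    (h : Sig (fun ρ => R (ρ 0) (ρ 1) (ρ 2)))
    (hF : SigFn F) (hG : SigFn G) (hH : SigFn H) : Sig (fun ρ => R (F ρ) (G ρ) (H ρ)) := by
  have h1 : Sig (fun ρ => ∃ a b c, a = F ρ ∧ b = G ρ ∧ c = H ρ ∧ R a b c) := by
    have h1 := hF.graph 2 (fun n => n + 3)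
    have h2 := hG.graph 1 (fun n => n + 3)
    have h3 := hH.graph 0 (fun n => n + 3)
    have h4 := h.ren (fun n => 2 - n)
    exact @Sig.ex _ (@Sig.ex _ (@Sig.ex _ (@Sig.and _ _ h1 (@Sig.and _ _ h2 (@Sig.and _ _ h3 h4)))))
  exact h1.of_iff (fun ρ => by simp)

theorem Sig.comp4 {R : ℕ → ℕ → ℕ → ℕ → Prop} {F G H K : (ℕ → ℕ) → ℕ}
    (h : Sig (fun ρ => R (ρ 0) (ρ 1) (ρ 2) (ρ 3)))
    (hF : SigFn F) (hG : SigFn G) (hH : SigFn H) (hK : SigFn K) :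
    Sig (fun ρ => R (F ρ) (G ρ) (H ρ) (K ρ)) := by
  have h1 : Sig (fun ρ => ∃ a b c d, a = F ρ ∧ b = G ρ ∧ c = H ρ ∧ d = K ρ ∧ R a b c d) := by
    have h1 := hF.graph 3 (fun n => n + 4)
    have h2 := hG.graph 2 (fun n => n + 4)
    have h3 := hH.graph 1 (fun n => n + 4)
    have h4 := hK.graph 0 (fun n => n + 4)
    have h5 := h.ren (fun n => 3 - n)
    exact @Sig.ex _ (@Sig.ex _ (@Sig.ex _ (@Sig.ex _ (@Sig.and _ _ h1 (@Sig.and _ _ h2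
      (@Sig.and _ _ h3 (@Sig.and _ _ h4 h5)))))))
  exact h1.of_iff (fun ρ => by simp)

/-- A unary function with `Σ₁` graph. -/
theorem SigFn.comp1 {f : ℕ → ℕ} {F : (ℕ → ℕ) → ℕ} (h : Sig (fun ρ => ρ 0 = f (ρ 1)))
    (hF : SigFn F) : SigFn (fun ρ => f (F ρ)) := by
  constructor
  have h1 : Sig (fun ρ => ∃ a, a = F (fun n => ρ (n + 1)) ∧ ρ 0 = f a) :=
    @Sig.ex _ (@Sig.and _ _ (hF.graph 0 (fun n => n + 2)) (h.ren (fun n => 1 - n)))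
  exact h1.of_iff (fun ρ => by simp)

theorem SigFn.comp2 {f : ℕ → ℕ → ℕ} {F G : (ℕ → ℕ) → ℕ} (h : Sig (fun ρ => ρ 0 = f (ρ 1) (ρ 2)))
    (hF : SigFn F) (hG : SigFn G) : SigFn (fun ρ => f (F ρ) (G ρ)) := by
  constructor
  have h1 : Sig (fun ρ => ∃ a b, a = F (fun n => ρ (n + 1)) ∧ b = G (fun n => ρ (n + 1)) ∧
      ρ 0 = f a b) :=
    @Sig.ex _ (@Sig.ex _ (@Sig.and _ _ (hF.graph 1 (fun n => n + 3)) (@Sig.and _ _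
      (hG.graph 0 (fun n => n + 3)) (h.ren (fun n => 2 - n)))))
  exact h1.of_iff (fun ρ => by simp)

instance SigFn.proj (i : ℕ) : SigFn (fun ρ => ρ i) :=
  ⟨.ofDel (Del.eq (.var 0) (.var (i + 1)))⟩

instance SigFn.const (c : ℕ) : SigFn (fun _ => c) := by
  refine ⟨.ofDel ((Del.eq (.var 0) (numeral c)).of_iff fun ρ => ?_)⟩
  rw [numeral_val]; rfl

instance SigFn.add {F G : (ℕ → ℕ) → ℕ} [hF : SigFn F] [hG : SigFn G] :
    SigFn (fun ρ => F ρ + G ρ) :=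
  .comp2 (f := fun a b => a + b) (.ofDel (Del.eq (.var 0) (.add (.var 1) (.var 2)))) hF hG

instance SigFn.mul {F G : (ℕ → ℕ) → ℕ} [hF : SigFn F] [hG : SigFn G] :
    SigFn (fun ρ => F ρ * G ρ) :=
  .comp2 (f := fun a b => a * b) (.ofDel (Del.eq (.var 0) (.mul (.var 1) (.var 2)))) hF hG

/-- Decidable predicates: both `S` and its negation are `Σ₁`. -/
class Dec (S : (ℕ → ℕ) → Prop) : Prop where
  pos : Sig S
  neg : Sig (fun ρ => ¬ S ρ)

theorem Dec.ofDel {S : (ℕ → ℕ) → Prop} (h : Del S) : Dec S := ⟨.ofDel h, .ofDel h.not⟩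

instance (priority := 50) Sig.ofDec {S : (ℕ → ℕ) → Prop} [h : Dec S] : Sig S := h.pos

theorem Dec.of_iff {S S' : (ℕ → ℕ) → Prop} (h : Dec S) (e : ∀ ρ, S ρ ↔ S' ρ) : Dec S' :=
  ⟨h.pos.of_iff e, h.neg.of_iff fun ρ => not_congr (e ρ)⟩

instance Dec.eq {F G : (ℕ → ℕ) → ℕ} [hF : SigFn F] [hG : SigFn G] : Dec (fun ρ => F ρ = G ρ) :=
  ⟨.comp2 (R := fun a b => a = b) (.ofDel (Del.eq (.var 0) (.var 1))) hF hG,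
   .comp2 (R := fun a b => ¬ a = b) (.ofDel (Del.eq (.var 0) (.var 1)).not) hF hG⟩

instance Dec.le {F G : (ℕ → ℕ) → ℕ} [hF : SigFn F] [hG : SigFn G] : Dec (fun ρ => F ρ ≤ G ρ) :=
  ⟨.comp2 (R := fun a b => a ≤ b) (.ofDel (Del.le (.var 0) (.var 1))) hF hG,
   .comp2 (R := fun a b => ¬ a ≤ b) (.ofDel (Del.le (.var 0) (.var 1)).not) hF hG⟩

instance Dec.lt {F G : (ℕ → ℕ) → ℕ} [hF : SigFn F] [hG : SigFn G] : Dec (fun ρ => F ρ < G ρ) :=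
  Dec.of_iff (S := fun ρ => F ρ + 1 ≤ G ρ) inferInstance (fun _ => Iff.rfl)

instance Dec.not {S : (ℕ → ℕ) → Prop} [h : Dec S] : Dec (fun ρ => ¬ S ρ) :=
  ⟨h.neg, h.pos.of_iff fun ρ => by simp⟩

instance Dec.and {S S' : (ℕ → ℕ) → Prop} [h : Dec S] [h' : Dec S'] : Dec (fun ρ => S ρ ∧ S' ρ) :=
  ⟨@Sig.and _ _ h.pos h'.pos, (@Sig.or _ _ h.neg h'.neg).of_iff fun ρ => by tauto⟩

instance Dec.or {S S' : (ℕ → ℕ) → Prop} [h : Dec S] [h' : Dec S'] : Dec (fun ρ => S ρ ∨ S' ρ) :=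
  ⟨@Sig.or _ _ h.pos h'.pos, (@Sig.and _ _ h.neg h'.neg).of_iff fun ρ => by tauto⟩

instance Dec.imp {S S' : (ℕ → ℕ) → Prop} [h : Dec S] [h' : Dec S'] : Dec (fun ρ => S ρ → S' ρ) :=
  ⟨(@Sig.or _ _ h.neg h'.pos).of_iff fun ρ => by tauto,
    (@Sig.and _ _ h.pos h'.neg).of_iff fun ρ => by tauto⟩

theorem Sig.ball_core {S : (ℕ → ℕ) → ℕ → Prop} {F : (ℕ → ℕ) → ℕ} (hF : SigFn F)
    (h : Sig (fun ρ => S (fun n => ρ (n + 1)) (ρ 0))) :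
    Sig (fun ρ => ∀ a ≤ F ρ, S ρ a) := by
  have h1 : Sig (fun ρ => ∃ y, y = F ρ ∧ ∀ a ≤ y, S ρ a) :=
    @Sig.ex _ (@Sig.and _ _ hF.out (h.ren (fun n => consEnv 0 (fun n => n + 2) n)).ball')
  exact h1.of_iff (fun ρ => by simp)

instance Sig.ball {S : (ℕ → ℕ) → ℕ → Prop} {F : (ℕ → ℕ) → ℕ} [hF : SigFn F]
    [h : Sig (fun ρ => S (fun n => ρ (n + 1)) (ρ 0))] :
    Sig (fun ρ => ∀ a, a ≤ F ρ → S ρ a) := Sig.ball_core hF h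

instance Sig.ball_lt {S : (ℕ → ℕ) → ℕ → Prop} {F : (ℕ → ℕ) → ℕ} [hF : SigFn F]
    [h : Sig (fun ρ => S (fun n => ρ (n + 1)) (ρ 0))] :
    Sig (fun ρ => ∀ a, a < F ρ → S ρ a) := by
  have h1 : Sig (fun ρ => F ρ = 0 ∨ ∃ y, F ρ = y + 1 ∧ ∀ a ≤ y, S ρ a) := by
    have h2 : Sig (fun ρ => ∀ a ≤ ρ 0, S (fun n => ρ (n + 1)) a) :=
      (h.ren (fun n => consEnv 0 (fun n => n + 2) n)).ball'
    have h3 : Sig (fun ρ => ρ 0 + 1 = F (fun n => ρ (n + 1))) := by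
      have : Sig (fun ρ => ∃ z, z = F (fun n => ρ (n + 1)) ∧ ρ 0 + 1 = z) :=
        @Sig.ex _ (@Sig.and _ _ (hF.graph 0 (fun n => n + 2)) (Sig.ofDec))
      exact this.of_iff (fun ρ => by simp)
    exact @Sig.or _ _ Sig.ofDec (@Sig.ex _ (@Sig.and _ _ (h3.of_iff fun ρ => eq_comm) h2))
  refine h1.of_iff (fun ρ => ?_)
  constructor
  · rintro (h | ⟨y, hy, h⟩) a ha
    · omega
    · exact h a (by omega)
  · intro h
    rcases Nat.eq_zero_or_eq_succ_pred (F ρ) with h' | h'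
    · exact Or.inl h'
    · exact Or.inr ⟨_, h', fun a ha => h a (by omega)⟩

instance Dec.ball {S : (ℕ → ℕ) → ℕ → Prop} {F : (ℕ → ℕ) → ℕ} [hF : SigFn F]
    [h : Dec (fun ρ => S (fun n => ρ (n + 1)) (ρ 0))] :
    Dec (fun ρ => ∀ a, a ≤ F ρ → S ρ a) := by
  refine ⟨Sig.ball_core hF h.pos, ?_⟩
  have h1 : Sig (fun ρ => ∃ a, a ≤ F ρ ∧ ¬ S ρ a) := by
    refine @Sig.ex _ (@Sig.and _ _ (@Sig.ofDec _ (@Dec.le _ _ (.proj 0) ?_)) h.neg)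
    exact ⟨hF.graph 0 (fun n => n + 2)⟩
  exact h1.of_iff (fun ρ => by push Not; rfl)

instance Dec.ball_lt {S : (ℕ → ℕ) → ℕ → Prop} {F : (ℕ → ℕ) → ℕ} [hF : SigFn F]
    [h : Dec (fun ρ => S (fun n => ρ (n + 1)) (ρ 0))] :
    Dec (fun ρ => ∀ a, a < F ρ → S ρ a) := by
  refine ⟨@Sig.ball_lt _ _ hF h.pos, ?_⟩
  have h1 : Sig (fun ρ => ∃ a, a < F ρ ∧ ¬ S ρ a) := by
    refine @Sig.ex _ (@Sig.and _ _ (@Sig.ofDec _ (@Dec.lt _ _ (.proj 0) ?_)) h.neg)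
    exact ⟨hF.graph 0 (fun n => n + 2)⟩
  exact h1.of_iff (fun ρ => by push Not; rfl)

instance Dec.bex {S : (ℕ → ℕ) → ℕ → Prop} {F : (ℕ → ℕ) → ℕ} [hF : SigFn F]
    [h : Dec (fun ρ => S (fun n => ρ (n + 1)) (ρ 0))] :
    Dec (fun ρ => ∃ a, a ≤ F ρ ∧ S ρ a) := by
  have h1 := @Dec.not _ (@Dec.ball (fun ρ a => ¬ S ρ a) F hF (@Dec.not _ h))
  exact h1.of_iff (fun ρ => by push Not; rfl)

instance Dec.bex_lt {S : (ℕ → ℕ) → ℕ → Prop} {F : (ℕ → ℕ) → ℕ} [hF : SigFn F]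
    [h : Dec (fun ρ => S (fun n => ρ (n + 1)) (ρ 0))] :
    Dec (fun ρ => ∃ a, a < F ρ ∧ S ρ a) := by
  have h1 := @Dec.not _ (@Dec.ball_lt (fun ρ a => ¬ S ρ a) F hF (@Dec.not _ h))
  exact h1.of_iff (fun ρ => by push Not; rfl)

/-- Functions from graphs. -/
theorem SigFn.of_graph {F : (ℕ → ℕ) → ℕ} {S : (ℕ → ℕ) → ℕ → Prop}
    (h : Sig (fun ρ => S (fun n => ρ (n + 1)) (ρ 0))) (e : ∀ ρ y, S ρ y ↔ y = F ρ) : SigFn F :=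
  ⟨h.of_iff fun ρ => e _ _⟩

end

section

instance SigFn.pair {F G : (ℕ → ℕ) → ℕ} [hF : SigFn F] [hG : SigFn G] :
    SigFn (fun ρ => Nat.pair (F ρ) (G ρ)) := by
  refine .comp2 (f := Nat.pair) ?_ hF hG
  have h : Sig (fun ρ => (ρ 1 < ρ 2 ∧ ρ 0 = ρ 2 * ρ 2 + ρ 1) ∨
      (¬ ρ 1 < ρ 2 ∧ ρ 0 = ρ 1 * ρ 1 + ρ 1 + ρ 2)) := inferInstance
  refine h.of_iff fun ρ => ?_
  unfold Nat.pair
  split_ifs with h' <;> simp [h']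

/-- First projection of a pair. -/
def lp (x : ℕ) : ℕ := x.unpair.1
/-- Second projection of a pair. -/
def rp (x : ℕ) : ℕ := x.unpair.2

@[simp] theorem lp_pair (a b : ℕ) : lp (Nat.pair a b) = a := by simp [lp]
@[simp] theorem rp_pair (a b : ℕ) : rp (Nat.pair a b) = b := by simp [rp]
@[simp] theorem pair_lp_rp (x : ℕ) : Nat.pair (lp x) (rp x) = x := by simp [lp, rp]

instance SigFn.lp {F : (ℕ → ℕ) → ℕ} [hF : SigFn F] : SigFn (fun ρ => lp (F ρ)) := by
  refine .comp1 (f := PLN.lp) ?_ hF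
  have h : Sig (fun ρ => ∃ b, ρ 1 = Nat.pair (ρ 0) b) := inferInstance
  refine h.of_iff fun ρ => ⟨?_, ?_⟩
  · rintro ⟨b, hb⟩; simp [hb]
  · intro h; exact ⟨PLN.rp (ρ 1), by simp [h]⟩

instance SigFn.rp {F : (ℕ → ℕ) → ℕ} [hF : SigFn F] : SigFn (fun ρ => rp (F ρ)) := by
  refine .comp1 (f := PLN.rp) ?_ hF
  have h : Sig (fun ρ => ∃ b, ρ 1 = Nat.pair b (ρ 0)) := inferInstance
  refine h.of_iff fun ρ => ⟨?_, ?_⟩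
  · rintro ⟨b, hb⟩; simp [hb]
  · intro h; exact ⟨PLN.lp (ρ 1), by simp [h]⟩

instance SigFn.div {F G : (ℕ → ℕ) → ℕ} [hF : SigFn F] [hG : SigFn G] :
    SigFn (fun ρ => F ρ / G ρ) := by
  refine .comp2 (f := fun a b => a / b) ?_ hF hG
  have h : Sig (fun ρ => (ρ 2 = 0 ∧ ρ 0 = 0) ∨
      (¬ ρ 2 = 0 ∧ ρ 0 * ρ 2 ≤ ρ 1 ∧ ρ 1 < (ρ 0 + 1) * ρ 2)) := inferInstance
  refine h.of_iff fun ρ => ?_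
  rcases Nat.eq_zero_or_pos (ρ 2) with h | h
  · simp [h]
  · have : ρ 2 ≠ 0 := by omega
    simp only [this, false_and, false_or, not_false_iff, true_and]
    rw [eq_comm (a := ρ 0), Nat.div_eq_iff h]
    have e : (ρ 0 + 1) * ρ 2 = ρ 0 * ρ 2 + ρ 2 := by ring
    rw [e]
    omega

instance SigFn.mod {F G : (ℕ → ℕ) → ℕ} [hF : SigFn F] [hG : SigFn G] :
    SigFn (fun ρ => F ρ % G ρ) := by
  refine .comp2 (f := fun a b => a % b) ?_ hF hG
  have h : Sig (fun ρ => ρ 2 * (ρ 1 / ρ 2) + ρ 0 = ρ 1) := inferInstance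
  refine h.of_iff fun ρ => ?_
  have := Nat.div_add_mod (ρ 1) (ρ 2)
  omega

instance SigFn.beta {F G : (ℕ → ℕ) → ℕ} [hF : SigFn F] [hG : SigFn G] :
    SigFn (fun ρ => Nat.beta (F ρ) (G ρ)) := by
  have : SigFn (fun ρ => PLN.lp (F ρ) % ((G ρ + 1) * PLN.rp (F ρ) + 1)) := inferInstance
  exact this

/-! ### Inductively generated sets -/

/-- The closure of `A` under the rules `R`. -/
inductive Cl (A : ℕ → Prop) (R : ℕ → ℕ → ℕ → Prop) : ℕ → Prop
  | ax {x} : A x → Cl A R x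
  | step {a b x} : Cl A R a → Cl A R b → R a b x → Cl A R x

/-- A derivation, as a list with the newest element last. -/
def IsDer (A : ℕ → Prop) (R : ℕ → ℕ → ℕ → Prop) (l : List ℕ) : Prop :=
  ∀ i, (hi : i < l.length) → A l[i] ∨ ∃ j k, ∃ hj : j < i, ∃ hk : k < i, R l[j] l[k] l[i]

theorem IsDer.append {A : ℕ → Prop} {R : ℕ → ℕ → ℕ → Prop} {l l' : List ℕ} (h : IsDer A R l)
    (h' : IsDer A R l') : IsDer A R (l ++ l') := by
  intro i hi
  rcases Nat.lt_or_ge i l.length with hl | hl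
  · rcases h i hl with h1 | ⟨j, k, hj, hk, h1⟩
    · left; rwa [List.getElem_append_left hl]
    · refine Or.inr ⟨j, k, hj, hk, ?_⟩
      rwa [List.getElem_append_left, List.getElem_append_left, List.getElem_append_left]
  · have hi' : i - l.length < l'.length := by simp at hi; omega
    rcases h' (i - l.length) hi' with h1 | ⟨j, k, hj, hk, h1⟩
    · left; rwa [List.getElem_append_right hl]
    · refine Or.inr ⟨l.length + j, l.length + k, by omega, by omega, ?_⟩
      rw [List.getElem_append_right hl, List.getElem_append_right (by omega),
        List.getElem_append_right (by omega)]
      simpa using h1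

theorem IsDer.snoc {A : ℕ → Prop} {R : ℕ → ℕ → ℕ → Prop} {l : List ℕ} (h : IsDer A R l) {x : ℕ}
    (hx : A x ∨ ∃ a ∈ l, ∃ b ∈ l, R a b x) : IsDer A R (l ++ [x]) := by
  intro i hi
  rcases Nat.lt_or_ge i l.length with hl | hl
  · rcases h i hl with h1 | ⟨j, k, hj, hk, h1⟩
    · left; rwa [List.getElem_append_left hl]
    · refine Or.inr ⟨j, k, hj, hk, ?_⟩
      rwa [List.getElem_append_left, List.getElem_append_left, List.getElem_append_left]
  · obtain rfl : i = l.length := by simp at hi; omega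
    rcases hx with hx | ⟨a, ha, b, hb, hx⟩
    · left; simpa using hx
    · obtain ⟨j, hj, rfl⟩ := List.mem_iff_getElem.1 ha
      obtain ⟨k, hk, rfl⟩ := List.mem_iff_getElem.1 hb
      refine Or.inr ⟨j, k, hj, hk, ?_⟩
      rw [List.getElem_append_left, List.getElem_append_left]
      simpa using hx

theorem Cl.exists_der {A : ℕ → Prop} {R : ℕ → ℕ → ℕ → Prop} {x : ℕ} (h : Cl A R x) :
    ∃ l : List ℕ, IsDer A R (l ++ [x]) := by
  induction h with
  | ax h =>
    refine ⟨[], IsDer.snoc ?_ (Or.inl h)⟩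
    intro i hi; simp at hi
  | @step a b x _ _ hr ih1 ih2 =>
    obtain ⟨l1, h1⟩ := ih1
    obtain ⟨l2, h2⟩ := ih2
    exact ⟨_, (h1.append h2).snoc (Or.inr ⟨a, by simp, b, by simp, hr⟩)⟩

theorem cl_iff {A : ℕ → Prop} {R : ℕ → ℕ → ℕ → Prop} {x : ℕ} : Cl A R x ↔
    ∃ c n, Nat.beta c n = x ∧ ∀ i, i ≤ n → (A (Nat.beta c i) ∨
      ∃ j, j < i ∧ ∃ k, k < i ∧ R (Nat.beta c j) (Nat.beta c k) (Nat.beta c i)) := by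
  constructor
  · intro h
    obtain ⟨l, hl⟩ := h.exists_der
    have hb : ∀ i, (hi : i < (l ++ [x]).length) → Nat.beta (Nat.unbeta (l ++ [x])) i = (l ++ [x])[i] :=
      fun i hi => Nat.beta_unbeta_coe (l ++ [x]) ⟨i, hi⟩
    refine ⟨Nat.unbeta (l ++ [x]), l.length, ?_, fun i hi => ?_⟩
    · rw [hb _ (by simp)]; simp
    · rcases hl i (by simp; omega) with h1 | ⟨j, k, hj, hk, h1⟩
      · left; rwa [hb]
      · refine Or.inr ⟨j, hj, k, hk, ?_⟩
        rwa [hb j (by simp; omega), hb k (by simp; omega), hb i (by simp; omega)]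
  · rintro ⟨c, n, rfl, h⟩
    have : ∀ i, i ≤ n → Cl A R (Nat.beta c i) := by
      intro i
      induction i using Nat.strong_induction_on with
      | _ i ih =>
        intro hi
        rcases h i hi with h1 | ⟨j, hj, k, hk, h1⟩
        · exact .ax h1
        · exact .step (ih j hj (by omega)) (ih k hk (by omega)) h1
    exact this n le_rfl

theorem Sig.cl {A : (ℕ → ℕ) → ℕ → Prop} {R : (ℕ → ℕ) → ℕ → ℕ → ℕ → Prop}
    {F : (ℕ → ℕ) → ℕ}
    (hF : SigFn F)
    (hA : Sig (fun ρ => A (fun n => ρ (n + 1)) (ρ 0)))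
    (hR : Sig (fun ρ => R (fun n => ρ (n + 3)) (ρ 2) (ρ 1) (ρ 0))) :
    Sig (fun ρ => Cl (A ρ) (R ρ) (F ρ)) := by
  have hA' : ∀ {G : (ℕ → ℕ) → ℕ} (f : ℕ → ℕ), SigFn G → Sig (fun ρ => A (fun n => ρ (f n)) (G ρ)) := by
    intro G f hG
    have : Sig (fun ρ => ∃ a, a = G ρ ∧ A (fun n => ρ (f n)) a) :=
      @Sig.ex _ (@Sig.and _ _ hG.out (hA.ren (consEnv 0 (fun n => f n + 1))))
    exact this.of_iff fun ρ => by simp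
  have hR' : ∀ {G H K : (ℕ → ℕ) → ℕ} (f : ℕ → ℕ), SigFn G → SigFn H → SigFn K →
      Sig (fun ρ => R (fun n => ρ (f n)) (G ρ) (H ρ) (K ρ)) := by
    intro G H K f hG hH hK
    have : Sig (fun ρ => ∃ a b c, a = G ρ ∧ b = H ρ ∧ c = K ρ ∧ R (fun n => ρ (f n)) a b c) :=
      @Sig.ex _ (@Sig.ex _ (@Sig.ex _ (@Sig.and _ _ (hG.graph 2 (fun n => n + 3))
        (@Sig.and _ _ (hH.graph 1 (fun n => n + 3)) (@Sig.and _ _ (hK.graph 0 (fun n => n + 3))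
        (hR.ren (consEnv 0 (consEnv 1 (consEnv 2 (fun n => f n + 3))))))))))
    exact this.of_iff fun ρ => by simp
  have h1 : Sig (fun ρ => ∃ c n, Nat.beta c n = F ρ ∧ ∀ i, i ≤ n → (A ρ (Nat.beta c i) ∨
      ∃ j, j < i ∧ ∃ k, k < i ∧ R ρ (Nat.beta c j) (Nat.beta c k) (Nat.beta c i))) := by
    have hF' : SigFn (fun ρ => F (fun n => ρ (n + 2))) := ⟨hF.graph 0 (fun n => n + 3)⟩
    have a1 : Sig (fun ρ => A (fun n => ρ (n + 3)) (Nat.beta (ρ 2) (ρ 0))) :=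
      hA' _ inferInstance
    have a2 : Sig (fun ρ => R (fun n => ρ (n + 5)) (Nat.beta (ρ 4) (ρ 1)) (Nat.beta (ρ 4) (ρ 0))
      (Nat.beta (ρ 4) (ρ 2))) := hR' _ inferInstance inferInstance inferInstance
    exact @Sig.ex _ (@Sig.ex _ (@Sig.and _ _ Sig.ofDec (@Sig.ball _ _ inferInstance
      (@Sig.or _ _ a1 (@Sig.ex _ (@Sig.and _ _ Sig.ofDec (@Sig.ex _ (@Sig.and _ _ Sig.ofDec a2))))))))
  exact h1.of_iff fun ρ => cl_iff.symm

/-! ### Primitive recursive functions -/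

theorem sigFn_primrec {f : ℕ → ℕ} (h : Nat.Primrec f) : ∀ {F : (ℕ → ℕ) → ℕ}, SigFn F →
    SigFn (fun ρ => f (F ρ)) := by
  induction h with
  | zero => intro F hF; exact .const 0
  | succ => intro F hF; exact SigFn.add (G := fun _ => 1)
  | left => intro F hF; exact SigFn.lp
  | right => intro F hF; exact SigFn.rp
  | pair _ _ ih1 ih2 => intro F hF; exact @SigFn.pair _ _ (ih1 hF) (ih2 hF)
  | comp _ _ ih1 ih2 => intro F hF; exact ih1 (ih2 hF)
  | @prec f g _ _ ih1 ih2 =>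
    intro F hF
    have e : ∀ x y z : ℕ, Cl (fun u => u = Nat.pair 0 (f z))
        (fun a _ u => u = Nat.pair (lp a + 1) (g (Nat.pair z (Nat.pair (lp a) (rp a))))) (Nat.pair x y)
        ↔ y = Nat.rec (f z) (fun y IH => g (Nat.pair z (Nat.pair y IH))) x := by
      intro x y z
      constructor
      · intro h
        have key : ∀ u, Cl (fun u => u = Nat.pair 0 (f z))
          (fun a _ u => u = Nat.pair (lp a + 1) (g (Nat.pair z (Nat.pair (lp a) (rp a))))) u →
          rp u = Nat.rec (f z) (fun y IH => g (Nat.pair z (Nat.pair y IH))) (lp u) := by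
          intro u hu
          induction hu with
          | ax h => subst h; simp
          | step _ _ h ih1 ih2 => subst h; simp only [rp_pair, lp_pair]; rw [ih1]
        simpa using key _ h
      · rintro rfl
        induction x with
        | zero => exact .ax rfl
        | succ x ih => exact .step ih ih (by simp)
    refine .comp1 ?_ hF
    have i1 : SigFn (fun ρ => f (lp (ρ 2))) := ih1 inferInstance
    have i2 : SigFn (fun ρ => g (Nat.pair (lp (ρ 4)) (Nat.pair (lp (ρ 2)) (rp (ρ 2))))) :=
      ih2 inferInstance
    have := Sig.cl (A := fun ρ u => u = Nat.pair 0 (f (lp (ρ 1))))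
      (R := fun ρ a _ u => u = Nat.pair (lp a + 1) (g (Nat.pair (lp (ρ 1)) (Nat.pair (lp a) (rp a)))))
      (F := fun ρ => Nat.pair (rp (ρ 1)) (ρ 0)) inferInstance inferInstance inferInstance
    exact this.of_iff fun ρ => e _ _ _

theorem sigFn_primrec2 {f : ℕ → ℕ → ℕ} (h : Primrec₂ f) {F G : (ℕ → ℕ) → ℕ} (hF : SigFn F)
    (hG : SigFn G) : SigFn (fun ρ => f (F ρ) (G ρ)) := by
  have h1 : Primrec (fun n : ℕ => f n.unpair.1 n.unpair.2) :=
    h.comp (Primrec.fst.comp Primrec.unpair) (Primrec.snd.comp Primrec.unpair)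
  have h2 := sigFn_primrec (Primrec.nat_iff.1 h1) (F := fun ρ => Nat.pair (F ρ) (G ρ)) inferInstance
  simpa using h2

instance SigFn.pow {F G : (ℕ → ℕ) → ℕ} [hF : SigFn F] [hG : SigFn G] :
    SigFn (fun ρ => F ρ ^ G ρ) := by
  have h : Primrec₂ (fun a b : ℕ => a ^ b) := by
    exact Primrec₂.unpaired'.1 Nat.Primrec.pow
  exact sigFn_primrec2 h hF hG

end

section

theorem Sig.app2 {V : (ℕ → ℕ) → ℕ → ℕ → Prop}
    (hV : Sig (fun ρ => V (fun n => ρ (n + 2)) (ρ 1) (ρ 0))) (f : ℕ → ℕ)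
    {G H : (ℕ → ℕ) → ℕ} (hG : SigFn G) (hH : SigFn H) :
    Sig (fun ρ => V (fun n => ρ (f n)) (G ρ) (H ρ)) := by
  have : Sig (fun ρ => ∃ a b, a = G ρ ∧ b = H ρ ∧ V (fun n => ρ (f n)) a b) :=
    @Sig.ex _ (@Sig.ex _ (@Sig.and _ _ (hG.graph 1 (fun n => n + 2))
      (@Sig.and _ _ (hH.graph 0 (fun n => n + 2)) (hV.ren (consEnv 0 (consEnv 1 (fun n => f n + 2)))))))
  exact this.of_iff fun ρ => by simp

theorem Sig.app3 {V : (ℕ → ℕ) → ℕ → ℕ → ℕ → Prop}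
    (hV : Sig (fun ρ => V (fun n => ρ (n + 3)) (ρ 2) (ρ 1) (ρ 0))) (f : ℕ → ℕ)
    {G H K : (ℕ → ℕ) → ℕ} (hG : SigFn G) (hH : SigFn H) (hK : SigFn K) :
    Sig (fun ρ => V (fun n => ρ (f n)) (G ρ) (H ρ) (K ρ)) := by
  have : Sig (fun ρ => ∃ a b c, a = G ρ ∧ b = H ρ ∧ c = K ρ ∧ V (fun n => ρ (f n)) a b c) :=
    @Sig.ex _ (@Sig.ex _ (@Sig.ex _ (@Sig.and _ _ (hG.graph 2 (fun n => n + 3))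
      (@Sig.and _ _ (hH.graph 1 (fun n => n + 3)) (@Sig.and _ _ (hK.graph 0 (fun n => n + 3))
      (hV.ren (consEnv 0 (consEnv 1 (consEnv 2 (fun n => f n + 3))))))))))
  exact this.of_iff fun ρ => by simp

/-! ### Substitution on codes -/

def TmA (V : ℕ → ℕ → Prop) (x : ℕ) : Prop :=
  (lp (lp x) = 0 ∧ V (rp (lp x)) (rp x)) ∨ x = Nat.pair (Nat.pair 1 0) (Nat.pair 1 0)

def TmR (a b x : ℕ) : Prop :=
  x = Nat.pair (Nat.pair 2 (lp a)) (Nat.pair 2 (rp a)) ∨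
  x = Nat.pair (Nat.pair 3 (Nat.pair (lp a) (lp b))) (Nat.pair 3 (Nat.pair (rp a) (rp b))) ∨
  x = Nat.pair (Nat.pair 4 (Nat.pair (lp a) (lp b))) (Nat.pair 4 (Nat.pair (rp a) (rp b)))

def TmMap (V : ℕ → ℕ → Prop) (x y : ℕ) : Prop := Cl (TmA V) TmR (Nat.pair x y)

theorem tmMap_iff {V : ℕ → ℕ → Prop} {σ : ℕ → ATerm} (hV : ∀ n y, V n y ↔ y = (σ n).code)
    {x y : ℕ} : TmMap V x y ↔ ∃ t : ATerm, x = t.code ∧ y = (t.substAll σ).code := by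
  constructor
  · intro h
    have key : ∀ u, Cl (TmA V) TmR u → ∃ t : ATerm, lp u = t.code ∧ rp u = (t.substAll σ).code := by
      intro u hu
      induction hu with
      | @ax x h =>
        rcases h with ⟨h1, h2⟩ | h
        · refine ⟨.var (rp (lp x)), ?_, (hV _ _).1 h2⟩
          rw [ATerm.code, ← h1, pair_lp_rp]
        · exact ⟨.zero, by simp [h, ATerm.code], by simp [h, ATerm.code, ATerm.substAll]⟩
      | @step a b x _ _ h ih1 ih2 =>
        obtain ⟨t, t1, t2⟩ := ih1
        obtain ⟨s, s1, s2⟩ := ih2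
        rcases h with h | h | h
        · exact ⟨.succ t, by simp [h, ATerm.code, t1], by simp [h, ATerm.code, ATerm.substAll, t2]⟩
        · exact ⟨.add t s, by simp [h, ATerm.code, t1, s1],
            by simp [h, ATerm.code, ATerm.substAll, t2, s2]⟩
        · exact ⟨.mul t s, by simp [h, ATerm.code, t1, s1],
            by simp [h, ATerm.code, ATerm.substAll, t2, s2]⟩
    simpa using key _ h
  · rintro ⟨t, rfl, rfl⟩
    induction t with
    | var n => exact .ax (Or.inl (by simp [ATerm.code, ATerm.substAll, hV]))
    | zero => exact .ax (Or.inr (by simp [ATerm.code, ATerm.substAll]))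
    | succ t ih => exact .step ih ih (Or.inl (by simp [ATerm.code, ATerm.substAll]))
    | add t s ih1 ih2 => exact .step ih1 ih2 (Or.inr (Or.inl (by simp [ATerm.code, ATerm.substAll])))
    | mul t s ih1 ih2 => exact .step ih1 ih2 (Or.inr (Or.inr (by simp [ATerm.code, ATerm.substAll])))

theorem sig_tmMap {V : (ℕ → ℕ) → ℕ → ℕ → Prop}
    (hV : Sig (fun ρ => V (fun n => ρ (n + 2)) (ρ 1) (ρ 0)))
    {G H : (ℕ → ℕ) → ℕ} (hG : SigFn G) (hH : SigFn H) :
    Sig (fun ρ => TmMap (V ρ) (G ρ) (H ρ)) := by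
  unfold TmMap
  refine Sig.cl (A := fun ρ => TmA (V ρ)) (R := fun _ => TmR) inferInstance ?_ ?_
  · unfold TmA
    have := hV.app2 (fun n => n + 1) (G := fun ρ => rp (lp (ρ 0))) (H := fun ρ => rp (ρ 0))
      inferInstance inferInstance
    infer_instance
  · unfold TmR; infer_instance

def FmA (V : ℕ → ℕ → ℕ → Prop) (u : ℕ) : Prop :=
  ((lp (lp (rp u)) = 0 ∧ lp (rp (rp u)) = 0) ∨ (lp (lp (rp u)) = 1 ∧ lp (rp (rp u)) = 1)) ∧
  TmMap (V (lp u)) (lp (rp (lp (rp u)))) (lp (rp (rp (rp u)))) ∧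
  TmMap (V (lp u)) (rp (rp (lp (rp u)))) (rp (rp (rp (rp u))))

def FmR (a b u : ℕ) : Prop :=
  u = Nat.pair (lp a) (Nat.pair (Nat.pair 2 (lp (rp a))) (Nat.pair 2 (rp (rp a)))) ∨
  (lp a = lp b ∧
    (u = Nat.pair (lp a) (Nat.pair (Nat.pair 3 (Nat.pair (lp (rp a)) (lp (rp b))))
        (Nat.pair 3 (Nat.pair (rp (rp a)) (rp (rp b))))) ∨
     u = Nat.pair (lp a) (Nat.pair (Nat.pair 4 (Nat.pair (lp (rp a)) (lp (rp b))))
        (Nat.pair 4 (Nat.pair (rp (rp a)) (rp (rp b))))) ∨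
     u = Nat.pair (lp a) (Nat.pair (Nat.pair 5 (Nat.pair (lp (rp a)) (lp (rp b))))
        (Nat.pair 5 (Nat.pair (rp (rp a)) (rp (rp b))))))) ∨
  (∃ e, lp a = e + 1 ∧
    (u = Nat.pair e (Nat.pair (Nat.pair 6 (lp (rp a))) (Nat.pair 6 (rp (rp a)))) ∨
     u = Nat.pair e (Nat.pair (Nat.pair 7 (lp (rp a))) (Nat.pair 7 (rp (rp a))))))

def FmMap (V : ℕ → ℕ → ℕ → Prop) (d x y : ℕ) : Prop := Cl (FmA V) FmR (Nat.pair d (Nat.pair x y))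

theorem fmMap_iff {V : ℕ → ℕ → ℕ → Prop} {σ : ℕ → ℕ → ATerm}
    (hV : ∀ d n y, V d n y ↔ y = (σ d n).code) (hσ : ∀ d, liftSub (σ d) = σ (d + 1))
    {d x y : ℕ} : FmMap V d x y ↔ ∃ φ : AFml, x = φ.code ∧ y = (φ.substAll (σ d)).code := by
  constructor
  · intro h
    have key : ∀ u, Cl (FmA V) FmR u → ∃ φ : AFml, lp (rp u) = φ.code ∧
        rp (rp u) = (φ.substAll (σ (lp u))).code := by
      intro u hu
      induction hu with
      | @ax u h =>
        obtain ⟨h0, h1, h2⟩ := h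
        rw [tmMap_iff (hV _)] at h1 h2
        obtain ⟨t, t1, t2⟩ := h1
        obtain ⟨s, s1, s2⟩ := h2
        rcases h0 with ⟨h3, h4⟩ | ⟨h3, h4⟩
        · refine ⟨.eq t s, ?_, ?_⟩
          · rw [AFml.code, ← t1, ← s1, pair_lp_rp, ← h3, pair_lp_rp]
          · rw [AFml.substAll, AFml.code, ← t2, ← s2, pair_lp_rp, ← h4, pair_lp_rp]
        · refine ⟨.le t s, ?_, ?_⟩
          · rw [AFml.code, ← t1, ← s1, pair_lp_rp, ← h3, pair_lp_rp]
          · rw [AFml.substAll, AFml.code, ← t2, ← s2, pair_lp_rp, ← h4, pair_lp_rp]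
      | @step a b x _ _ h ih1 ih2 =>
        obtain ⟨t, t1, t2⟩ := ih1
        obtain ⟨s, s1, s2⟩ := ih2
        rcases h with h | ⟨h0, h | h | h⟩ | ⟨e, he, h | h⟩
        · exact ⟨.neg t, by simp [h, AFml.code, t1], by simp [h, AFml.code, AFml.substAll, t2]⟩
        · exact ⟨.and t s, by simp [h, AFml.code, t1, s1],
            by simp [h, AFml.code, AFml.substAll, t2, s2, h0]⟩
        · exact ⟨.or t s, by simp [h, AFml.code, t1, s1],
            by simp [h, AFml.code, AFml.substAll, t2, s2, h0]⟩
        · exact ⟨.imp t s, by simp [h, AFml.code, t1, s1],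
            by simp [h, AFml.code, AFml.substAll, t2, s2, h0]⟩
        · exact ⟨.all t, by simp [h, AFml.code, t1],
            by simp [h, AFml.code, AFml.substAll, t2, hσ, he]⟩
        · exact ⟨.ex t, by simp [h, AFml.code, t1],
            by simp [h, AFml.code, AFml.substAll, t2, hσ, he]⟩
    simpa using key _ h
  · rintro ⟨φ, rfl, rfl⟩
    induction φ generalizing d with
    | eq t s =>
      refine .ax ⟨Or.inl (by simp [AFml.code, AFml.substAll]), ?_, ?_⟩ <;>
        rw [tmMap_iff (hV _)] <;> [exact ⟨t, by simp [AFml.code, AFml.substAll]⟩;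
          exact ⟨s, by simp [AFml.code, AFml.substAll]⟩]
    | le t s =>
      refine .ax ⟨Or.inr (by simp [AFml.code, AFml.substAll]), ?_, ?_⟩ <;>
        rw [tmMap_iff (hV _)] <;> [exact ⟨t, by simp [AFml.code, AFml.substAll]⟩;
          exact ⟨s, by simp [AFml.code, AFml.substAll]⟩]
    | neg φ ih => exact .step (ih (d := d)) (ih (d := d)) (Or.inl (by simp [AFml.code, AFml.substAll]))
    | and φ ψ ih1 ih2 =>
      exact .step (ih1 (d := d)) (ih2 (d := d)) (Or.inr (Or.inl ⟨by simp, by simp [AFml.code, AFml.substAll]⟩))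
    | or φ ψ ih1 ih2 =>
      exact .step (ih1 (d := d)) (ih2 (d := d)) (Or.inr (Or.inl ⟨by simp, by simp [AFml.code, AFml.substAll]⟩))
    | imp φ ψ ih1 ih2 =>
      exact .step (ih1 (d := d)) (ih2 (d := d)) (Or.inr (Or.inl ⟨by simp, by simp [AFml.code, AFml.substAll]⟩))
    | all φ ih =>
      exact .step (ih (d := d + 1)) (ih (d := d + 1))
        (Or.inr (Or.inr ⟨d, by simp, by simp [AFml.code, AFml.substAll, hσ]⟩))
    | ex φ ih =>
      exact .step (ih (d := d + 1)) (ih (d := d + 1))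
        (Or.inr (Or.inr ⟨d, by simp, by simp [AFml.code, AFml.substAll, hσ]⟩))

set_option synthInstance.maxHeartbeats 400000 in
set_option synthInstance.maxSize 2048 in
theorem sig_fmMap {V : (ℕ → ℕ) → ℕ → ℕ → ℕ → Prop}
    (hV : Sig (fun ρ => V (fun n => ρ (n + 3)) (ρ 2) (ρ 1) (ρ 0)))
    {F G H : (ℕ → ℕ) → ℕ} (hF : SigFn F) (hG : SigFn G) (hH : SigFn H) :
    Sig (fun ρ => FmMap (V ρ) (F ρ) (G ρ) (H ρ)) := by
  unfold FmMap
  refine Sig.cl (A := fun ρ => FmA (V ρ)) (R := fun _ => FmR) inferInstance ?_ ?_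
  · unfold FmA
    have hT : ∀ {K L : (ℕ → ℕ) → ℕ} [SigFn K] [SigFn L],
        Sig (fun ρ => TmMap (V (fun n => ρ (n + 1)) (lp (ρ 0))) (K ρ) (L ρ)) := by
      intro K L hK hL
      refine sig_tmMap (V := fun ρ => V (fun n => ρ (n + 1)) (lp (ρ 0))) ?_ hK hL
      exact hV.app3 (fun n => n + 3) (G := fun ρ => lp (ρ 2)) (H := fun ρ => ρ 1)
        (K := fun ρ => ρ 0) inferInstance inferInstance inferInstance
    have h1 := @hT (fun ρ => (lp (rp (lp (rp (ρ 0)))))) (fun ρ => (lp (rp (rp (rp (ρ 0)))))) _ _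
    have h2 := @hT (fun ρ => (rp (rp (lp (rp (ρ 0)))))) (fun ρ => (rp (rp (rp (rp (ρ 0)))))) _ _
    infer_instance
  · unfold FmR; infer_instance

/-! Instances -/

def VShift (d n y : ℕ) : Prop := (n < d ∧ y = Nat.pair 0 n) ∨ (d ≤ n ∧ y = Nat.pair 0 (n + 1))
def VShiftBy (k n y : ℕ) : Prop := y = Nat.pair 0 (n + k)
def VSub (t d n y : ℕ) : Prop :=
  (n < d ∧ y = Nat.pair 0 n) ∨ (n = d ∧ TmMap (VShiftBy d) t y) ∨
    (d < n ∧ ∃ k, n = k + 1 ∧ y = Nat.pair 0 k)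

def ShiftF (x y : ℕ) : Prop := FmMap VShift 0 x y
def IsF (x : ℕ) : Prop := ∃ y, ShiftF x y
def IsT (x : ℕ) : Prop := ∃ y, TmMap (VShiftBy 0) x y
def SubF (t x y : ℕ) : Prop := IsT t ∧ FmMap (VSub t) 0 x y

theorem shiftF_iff {x y : ℕ} : ShiftF x y ↔ ∃ φ : AFml, x = φ.code ∧ y = (φ.lift 0).code := by
  unfold ShiftF
  rw [fmMap_iff (σ := fun d n => .var (if n < d then n else n + 1)) ?_ (fun d => liftSub_liftEnv d)]
  · simp only [AFml.lift_eq]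
  · intro d n y
    unfold VShift
    by_cases h : n < d
    · simp [h, ATerm.code, not_le.2 h]
    · simp [h, ATerm.code, not_lt.1 h]

theorem isF_iff {x : ℕ} : IsF x ↔ ∃ φ : AFml, x = φ.code := by
  simp only [IsF, shiftF_iff]
  constructor
  · rintro ⟨y, φ, h, _⟩; exact ⟨φ, h⟩
  · rintro ⟨φ, h⟩; exact ⟨_, φ, h, rfl⟩

theorem tmMap_shiftBy {k x y : ℕ} : TmMap (VShiftBy k) x y ↔
    ∃ t : ATerm, x = t.code ∧ y = (t.substAll (fun n => .var (n + k))).code :=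
  tmMap_iff (fun n y => by simp [VShiftBy, ATerm.code])

theorem isT_iff {x : ℕ} : IsT x ↔ ∃ t : ATerm, x = t.code := by
  simp only [IsT, tmMap_shiftBy]
  constructor
  · rintro ⟨y, φ, h, _⟩; exact ⟨φ, h⟩
  · rintro ⟨φ, h⟩; exact ⟨_, φ, h, rfl⟩

theorem subF_iff {u x y : ℕ} : SubF u x y ↔
    ∃ (t : ATerm) (φ : AFml), u = t.code ∧ x = φ.code ∧ y = (φ.subst0 t).code := by
  have key : ∀ t : ATerm, FmMap (VSub t.code) 0 x y ↔
      ∃ φ : AFml, x = φ.code ∧ y = (φ.subst0 t).code := by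
    intro t
    rw [fmMap_iff (σ := fun d n => if n < d then .var n else if n = d then
      t.substAll (fun n => .var (n + d)) else .var (n - 1))]
    · have : (fun n => if n < 0 then ATerm.var n else if n = 0 then
        t.substAll (fun n => .var (n + 0)) else .var (n - 1)) = subst0Env t := by
        funext n; cases n with
        | zero => simp only [lt_irrefl, if_false, if_true, add_zero, subst0Env]; exact ATerm.subst_var t
        | succ n => simp [subst0Env]
      rw [this]; rfl
    · intro d n y
      unfold VSub
      rw [tmMap_shiftBy]
      rcases lt_trichotomy n d with h | h | h
      · simp [h, ATerm.code, h.ne, not_lt.2 h.le]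
      · subst h
        simp only [lt_irrefl, false_and, false_or, true_and, or_false, if_false, if_true]
        constructor
        · rintro ⟨s, hs, rfl⟩; rw [ATerm.code_inj hs]
        · rintro rfl; exact ⟨t, rfl, rfl⟩
      · simp only [not_lt.2 h.le, h.ne', h, false_and, false_or, true_and, if_false, ATerm.code]
        constructor
        · rintro ⟨k, rfl, rfl⟩; simp
        · rintro rfl; exact ⟨n - 1, by omega, rfl⟩
    · intro d; funext n
      cases n with
      | zero => simp [liftSub]
      | succ n =>
        simp only [liftSub, add_lt_add_iff_right, add_left_inj]
        split_ifs with h1 h2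
        · simp [ATerm.lift]
        · rw [ATerm.lift_eq, ATerm.subst_subst]
          simp [ATerm.substAll, add_assoc]
        · simp only [ATerm.lift]; congr 1; simp; omega
  unfold SubF
  rw [isT_iff]
  constructor
  · rintro ⟨⟨t, rfl⟩, h⟩
    obtain ⟨φ, h⟩ := (key t).1 h
    exact ⟨t, φ, rfl, h⟩
  · rintro ⟨t, φ, rfl, h⟩
    exact ⟨⟨t, rfl⟩, (key t).2 ⟨φ, h⟩⟩

instance sig_shiftF {F G : (ℕ → ℕ) → ℕ} [hF : SigFn F] [hG : SigFn G] :
    Sig (fun ρ => ShiftF (F ρ) (G ρ)) := by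
  refine sig_fmMap (V := fun _ => VShift) ?_ (.const 0) hF hG
  unfold VShift; infer_instance

instance sig_isF {F : (ℕ → ℕ) → ℕ} [hF : SigFn F] : Sig (fun ρ => IsF (F ρ)) := by
  refine Sig.comp1 ?_ hF
  unfold IsF; infer_instance

theorem sig_tmShiftBy {F G H : (ℕ → ℕ) → ℕ} (hF : SigFn F) (hG : SigFn G) (hH : SigFn H) :
    Sig (fun ρ => TmMap (VShiftBy (F ρ)) (G ρ) (H ρ)) := by
  refine Sig.comp3 (R := fun a b c => TmMap (VShiftBy a) b c) ?_ hF hG hH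
  refine sig_tmMap (V := fun ρ => VShiftBy (ρ 0)) ?_ inferInstance inferInstance
  unfold VShiftBy; infer_instance

instance sig_isT {F : (ℕ → ℕ) → ℕ} [hF : SigFn F] : Sig (fun ρ => IsT (F ρ)) := by
  refine Sig.comp1 ?_ hF
  unfold IsT
  have := sig_tmShiftBy (F := fun _ => 0) (G := fun ρ => ρ 1) (H := fun ρ => ρ 0)
    inferInstance inferInstance inferInstance
  infer_instance

instance sig_subF {F G H : (ℕ → ℕ) → ℕ} [hF : SigFn F] [hG : SigFn G] [hH : SigFn H] :
    Sig (fun ρ => SubF (F ρ) (G ρ) (H ρ)) := by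
  refine Sig.comp3 (R := fun a b c => SubF a b c) ?_ hF hG hH
  unfold SubF
  have : Sig (fun ρ => FmMap (VSub (ρ 0)) 0 (ρ 1) (ρ 2)) := by
    refine sig_fmMap (V := fun ρ => VSub (ρ 0)) ?_ inferInstance inferInstance inferInstance
    unfold VSub
    have := sig_tmShiftBy (F := fun ρ => ρ 2) (G := fun ρ => ρ 3) (H := fun ρ => ρ 0)
      inferInstance inferInstance inferInstance
    infer_instance
  infer_instance

end

section

instance SigFn.ite {S : (ℕ → ℕ) → Prop} {F G : (ℕ → ℕ) → ℕ} [∀ ρ, Decidable (S ρ)] [hS : Dec S]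
    [hF : SigFn F] [hG : SigFn G] : SigFn (fun ρ => if S ρ then F ρ else G ρ) := by
  have h : Sig (fun ρ => (S (fun n => ρ (n + 1)) ∧ ρ 0 = F (fun n => ρ (n + 1))) ∨
      (¬ S (fun n => ρ (n + 1)) ∧ ρ 0 = G (fun n => ρ (n + 1)))) :=
    @Sig.or _ _ (@Sig.and _ _ (hS.pos.ren _) hF.out) (@Sig.and _ _ (hS.neg.ren _) hG.out)
  refine ⟨h.of_iff fun ρ => ?_⟩
  by_cases hs : S (fun n => ρ (n + 1)) <;> simp [hs]

/-- The `x`-th bit of `b`. -/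
def bt (b x : ℕ) : ℕ := b / 2 ^ x % 2

instance SigFn.bt {F G : (ℕ → ℕ) → ℕ} [hF : SigFn F] [hG : SigFn G] :
    SigFn (fun ρ => bt (F ρ) (G ρ)) := by
  unfold PLN.bt; infer_instance

theorem bt_lt (b x : ℕ) : bt b x < 2 := Nat.mod_lt _ (by norm_num)

theorem bt_of_lt {b s x : ℕ} (h : b < 2 ^ (s + 1)) (hx : bt b x = 1) : x ≤ s := by
  by_contra hc
  have : b < 2 ^ x := h.trans_le (Nat.pow_le_pow_right (by norm_num) (by omega))
  rw [bt, Nat.div_eq_of_lt this] at hx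
  simp at hx

theorem exists_bits (S : ℕ → Prop) (s : ℕ) : ∃ b, b < 2 ^ (s + 1) ∧
    ∀ x, bt b x = 1 ↔ x ≤ s ∧ S x := by
  classical
  refine ⟨Nat.ofBits (fun i : Fin (s + 1) => decide (S i)), Nat.ofBits_lt_two_pow _, fun x => ?_⟩
  have h := Nat.testBit_eq_decide_div_mod_eq (x := Nat.ofBits (fun i : Fin (s + 1) => decide (S i))) (i := x)
  by_cases hx : x < s + 1
  · rw [Nat.testBit_ofBits_lt _ _ hx] at h
    have h2 : x ≤ s := by omega
    simp only [bt, h2, true_and]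
    simpa using h.symm
  · constructor
    · intro h1; exact absurd (bt_of_lt (Nat.ofBits_lt_two_pow _) h1) (by omega)
    · intro h1; omega

/-- Propositional operations; `2` is undefined. -/
def opv (t a b : ℕ) : ℕ :=
  if a < 2 ∧ b < 2 then (if t = 3 then a * b else if t = 4 then (a + b + a * b) % 2
    else (1 + a + a * b) % 2) else 2

instance SigFn.opv {F G H : (ℕ → ℕ) → ℕ} [hF : SigFn F] [hG : SigFn G] [hH : SigFn H] :
    SigFn (fun ρ => opv (F ρ) (G ρ) (H ρ)) := by
  unfold PLN.opv; infer_instance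

theorem rp_lt {x : ℕ} (h : lp x ≠ 0) : rp x < x := by
  have := Nat.add_le_pair (lp x) (rp x)
  rw [pair_lp_rp] at this; omega

theorem lp_le (x : ℕ) : lp x ≤ x := Nat.unpair_left_le x
theorem rp_le (x : ℕ) : rp x ≤ x := Nat.unpair_right_le x

/-- Propositional evaluation of codes. -/
def evl (α : ℕ → ℕ) (x : ℕ) : ℕ :=
  if _h : lp x = 2 then opv 5 (evl α (rp x)) 0
  else if _h : 3 ≤ lp x ∧ lp x ≤ 5 then opv (lp x) (evl α (lp (rp x))) (evl α (rp (rp x)))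
  else α x
termination_by x
decreasing_by
  · exact rp_lt (by omega)
  · exact (lp_le _).trans_lt (rp_lt (by omega))
  · exact (rp_le _).trans_lt (rp_lt (by omega))

theorem evl_neg (α : ℕ → ℕ) (x : ℕ) : evl α (Nat.pair 2 x) = opv 5 (evl α x) 0 := by
  rw [evl]; simp

theorem evl_bin (α : ℕ → ℕ) {t : ℕ} (h1 : 3 ≤ t) (h2 : t ≤ 5) (x y : ℕ) :
    evl α (Nat.pair t (Nat.pair x y)) = opv t (evl α x) (evl α y) := by
  rw [evl]
  have : t ≠ 2 := by omega
  simp [this, h1, h2]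

theorem evl_at (α : ℕ → ℕ) {x : ℕ} (h : ¬ (2 ≤ lp x ∧ lp x ≤ 5)) : evl α x = α x := by
  rw [evl]
  have h1 : lp x ≠ 2 := by omega
  have h2 : ¬ (3 ≤ lp x ∧ lp x ≤ 5) := by omega
  simp [h1, h2]

theorem evl_cl {α : ℕ → ℕ} {x v : ℕ} :
    Cl (fun u => ¬ (2 ≤ lp (lp u) ∧ lp (lp u) ≤ 5) ∧ rp u = α (lp u))
      (fun a b u => u = Nat.pair (Nat.pair 2 (lp a)) (opv 5 (rp a) 0) ∨
        ∃ t, t ≤ 5 ∧ 3 ≤ t ∧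
          u = Nat.pair (Nat.pair t (Nat.pair (lp a) (lp b))) (opv t (rp a) (rp b)))
      (Nat.pair x v) ↔ v = evl α x := by
  constructor
  · intro h
    have key : ∀ u, Cl (fun u => ¬ (2 ≤ lp (lp u) ∧ lp (lp u) ≤ 5) ∧ rp u = α (lp u))
      (fun a b u => u = Nat.pair (Nat.pair 2 (lp a)) (opv 5 (rp a) 0) ∨
        ∃ t, t ≤ 5 ∧ 3 ≤ t ∧
          u = Nat.pair (Nat.pair t (Nat.pair (lp a) (lp b))) (opv t (rp a) (rp b))) u →
        rp u = evl α (lp u) := by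
      intro u hu
      induction hu with
      | ax h => rw [evl_at _ h.1, h.2]
      | step _ _ h ih1 ih2 =>
        rcases h with rfl | ⟨t, h1, h2, rfl⟩
        · simp [evl_neg, ih1]
        · simp [evl_bin α h2 h1, ih1, ih2]
    simpa using key _ h
  · rintro rfl
    induction x using Nat.strong_induction_on with
    | _ x ih =>
      by_cases h1 : lp x = 2
      · refine .step (ih (rp x) (rp_lt (by omega))) (ih (rp x) (rp_lt (by omega))) (Or.inl ?_)
        conv_lhs => rw [← pair_lp_rp x, h1, evl_neg]
        simp
      · by_cases h2 : 3 ≤ lp x ∧ lp x ≤ 5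
        · refine .step (ih (lp (rp x)) ((lp_le _).trans_lt (rp_lt (by omega))))
            (ih (rp (rp x)) ((rp_le _).trans_lt (rp_lt (by omega)))) (Or.inr ⟨lp x, h2.2, h2.1, ?_⟩)
          conv_lhs => rw [← pair_lp_rp x, ← pair_lp_rp (rp x), evl_bin α h2.1 h2.2]
          simp
        · refine .ax ?_
          have h3 : ¬ (2 ≤ lp x ∧ lp x ≤ 5) := by omega
          simp only [lp_pair, rp_pair]
          exact ⟨h3, evl_at _ h3⟩

theorem sigFn_evl {α : (ℕ → ℕ) → ℕ → ℕ} (hα : SigFn (fun ρ => α (fun n => ρ (n + 1)) (ρ 0)))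
    {F : (ℕ → ℕ) → ℕ} (hF : SigFn F) : SigFn (fun ρ => evl (α ρ) (F ρ)) := by
  refine SigFn.of_graph (S := fun ρ y => Cl (fun u => ¬ (2 ≤ lp (lp u) ∧ lp (lp u) ≤ 5) ∧ rp u = α ρ (lp u))
      (fun a b u => u = Nat.pair (Nat.pair 2 (lp a)) (opv 5 (rp a) 0) ∨
        ∃ t, t ≤ 5 ∧ 3 ≤ t ∧
          u = Nat.pair (Nat.pair t (Nat.pair (lp a) (lp b))) (opv t (rp a) (rp b)))
      (Nat.pair (F ρ) y)) ?_ (fun ρ y => evl_cl)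
  have hF' : SigFn (fun ρ => F (fun n => ρ (n + 1))) := ⟨hF.out.ren (consEnv 0 (fun n => n + 2))⟩
  refine Sig.cl (A := fun ρ u => ¬ (2 ≤ lp (lp u) ∧ lp (lp u) ≤ 5) ∧ rp u = α (fun n => ρ (n + 1)) (lp u)) (R := fun ρ a b u => u = Nat.pair (Nat.pair 2 (lp a)) (opv 5 (rp a) 0) ∨
        ∃ t, t ≤ 5 ∧ 3 ≤ t ∧
          u = Nat.pair (Nat.pair t (Nat.pair (lp a) (lp b))) (opv t (rp a) (rp b))) inferInstance ?_ inferInstance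
  have h2 : Sig (fun ρ => rp (ρ 0) = α (fun n => ρ (n + 1 + 1)) (lp (ρ 0))) := by
    exact hα.out.app2 (V := fun ρ u v => v = α ρ u) (fun n => n + 1 + 1)
      (G := fun ρ => lp (ρ 0)) (H := fun ρ => rp (ρ 0)) inferInstance inferInstance
  infer_instance

theorem opv_cases {a b : ℕ} (ha : a < 2) (hb : b < 2) :
    (opv 3 a b = 1 ↔ a = 1 ∧ b = 1) ∧ (opv 4 a b = 1 ↔ a = 1 ∨ b = 1) ∧
    (opv 5 a b = 1 ↔ (a = 1 → b = 1)) ∧ opv 3 a b < 2 ∧ opv 4 a b < 2 ∧ opv 5 a b < 2 := by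
  interval_cases a <;> interval_cases b <;> simp [opv]

theorem evl_code {α : ℕ → ℕ} (hα : ∀ x, α x < 2) (φ : AFml) :
    evl α φ.code < 2 ∧ (evl α φ.code = 1 ↔ φ.evalProp (fun ψ => α ψ.code = 1)) := by
  induction φ with
  | eq t s => rw [evl_at _ (by simp [AFml.code])]; exact ⟨hα _, Iff.rfl⟩
  | le t s => rw [evl_at _ (by simp [AFml.code])]; exact ⟨hα _, Iff.rfl⟩
  | all φ => rw [evl_at _ (by simp [AFml.code])]; exact ⟨hα _, Iff.rfl⟩
  | ex φ => rw [evl_at _ (by simp [AFml.code])]; exact ⟨hα _, Iff.rfl⟩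
  | neg φ ih =>
    have := opv_cases ih.1 (b := 0) (by norm_num)
    rw [AFml.code, evl_neg, this.2.2.1, ih.2]
    exact ⟨this.2.2.2.2.2, by simp [AFml.evalProp]⟩
  | and φ ψ ih1 ih2 =>
    have := opv_cases ih1.1 ih2.1
    rw [AFml.code, evl_bin _ (by norm_num) (by norm_num), this.1, ih1.2, ih2.2]
    exact ⟨this.2.2.2.1, Iff.rfl⟩
  | or φ ψ ih1 ih2 =>
    have := opv_cases ih1.1 ih2.1
    rw [AFml.code, evl_bin _ (by norm_num) (by norm_num), this.2.1, ih1.2, ih2.2]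
    exact ⟨this.2.2.2.2.1, Iff.rfl⟩
  | imp φ ψ ih1 ih2 =>
    have := opv_cases ih1.1 ih2.1
    rw [AFml.code, evl_bin _ (by norm_num) (by norm_num), this.2.2.1, ih1.2, ih2.2]
    exact ⟨this.2.2.2.2.2, Iff.rfl⟩

theorem evalProp_congr {v v' : AFml → Prop} (φ : AFml)
    (h : ∀ ψ : AFml, ψ.code ≤ φ.code → (v ψ ↔ v' ψ)) : φ.evalProp v ↔ φ.evalProp v' := by
  induction φ with
  | eq t s => exact h _ le_rfl
  | le t s => exact h _ le_rfl
  | all φ => exact h _ le_rfl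
  | ex φ => exact h _ le_rfl
  | neg φ ih =>
    exact not_congr (ih fun ψ hψ => h ψ (hψ.trans (Nat.right_le_pair _ _)))
  | and φ ψ ih1 ih2 =>
    exact and_congr
      (ih1 fun χ hχ => h χ (hχ.trans ((Nat.left_le_pair _ _).trans (Nat.right_le_pair _ _))))
      (ih2 fun χ hχ => h χ (hχ.trans ((Nat.right_le_pair _ _).trans (Nat.right_le_pair _ _))))
  | or φ ψ ih1 ih2 =>
    exact or_congr
      (ih1 fun χ hχ => h χ (hχ.trans ((Nat.left_le_pair _ _).trans (Nat.right_le_pair _ _))))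
      (ih2 fun χ hχ => h χ (hχ.trans ((Nat.right_le_pair _ _).trans (Nat.right_le_pair _ _))))
  | imp φ ψ ih1 ih2 =>
    exact imp_congr
      (ih1 fun χ hχ => h χ (hχ.trans ((Nat.left_le_pair _ _).trans (Nat.right_le_pair _ _))))
      (ih2 fun χ hχ => h χ (hχ.trans ((Nat.right_le_pair _ _).trans (Nat.right_le_pair _ _))))

def TautC (x : ℕ) : Prop := IsF x ∧ ∀ b, b < 2 ^ (x + 1) → evl (bt b) x = 1

theorem tautC_iff {x : ℕ} : TautC x ↔ ∃ φ : AFml, x = φ.code ∧ ATaut φ := by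
  rw [TautC, isF_iff]
  constructor
  · rintro ⟨⟨φ, rfl⟩, h⟩
    refine ⟨φ, rfl, fun v => ?_⟩
    obtain ⟨b, hb, hbit⟩ := exists_bits (fun y => ∃ ψ : AFml, y = ψ.code ∧ v ψ) φ.code
    have := h b hb
    rw [(evl_code (bt_lt b) φ).2] at this
    refine (evalProp_congr φ fun ψ hψ => ?_).1 this
    rw [hbit]
    constructor
    · rintro ⟨_, χ, h1, h2⟩; rwa [AFml.code_inj h1]
    · intro h2; exact ⟨hψ, ψ, rfl, h2⟩
  · rintro ⟨φ, rfl, h⟩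
    exact ⟨⟨φ, rfl⟩, fun b _ => (evl_code (bt_lt b) φ).2.2 (h _)⟩

instance sig_tautC {F : (ℕ → ℕ) → ℕ} [hF : SigFn F] : Sig (fun ρ => TautC (F ρ)) := by
  refine Sig.comp1 ?_ hF
  unfold TautC
  have : SigFn (fun ρ => evl (bt (ρ 0)) (ρ 1)) :=
    sigFn_evl (α := fun ρ => bt (ρ 0)) inferInstance inferInstance
  infer_instance

/-- Logical axioms, on codes. -/
def LAx (x : ℕ) : Prop :=
  (∃ f t y, SubF t f y ∧ x = Nat.pair 5 (Nat.pair (Nat.pair 6 f) y)) ∨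
  (∃ f t y, SubF t f y ∧ x = Nat.pair 5 (Nat.pair y (Nat.pair 7 f))) ∨
  (∃ f g, IsF f ∧ IsF g ∧ x = Nat.pair 5 (Nat.pair (Nat.pair 6 (Nat.pair 5 (Nat.pair f g)))
    (Nat.pair 5 (Nat.pair (Nat.pair 6 f) (Nat.pair 6 g))))) ∨
  (∃ f y, ShiftF f y ∧ x = Nat.pair 5 (Nat.pair f (Nat.pair 6 y))) ∨
  (∃ f, IsF f ∧ x = Nat.pair 3 (Nat.pair
    (Nat.pair 5 (Nat.pair (Nat.pair 7 f) (Nat.pair 2 (Nat.pair 6 (Nat.pair 2 f)))))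
    (Nat.pair 5 (Nat.pair (Nat.pair 2 (Nat.pair 6 (Nat.pair 2 f))) (Nat.pair 7 f))))) ∨
  (∃ t, IsT t ∧ x = Nat.pair 0 (Nat.pair t t)) ∨
  (∃ f t s y z, SubF t f y ∧ SubF s f z ∧
    x = Nat.pair 5 (Nat.pair (Nat.pair 0 (Nat.pair t s)) (Nat.pair 5 (Nat.pair y z))))

instance sig_lAx : Sig (fun ρ => LAx (ρ 0)) := by
  unfold LAx
  refine @Sig.or _ _ inferInstance (@Sig.or _ _ inferInstance (@Sig.or _ _ inferInstance
    (@Sig.or _ _ inferInstance (@Sig.or _ _ inferInstance (@Sig.or _ _ inferInstance ?_)))))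
  infer_instance

def AxC (p : ℕ → Bool) (x : ℕ) : Prop := (IsF x ∧ p x = true) ∨ TautC x ∨ LAx x
def RuC (a b x : ℕ) : Prop := a = Nat.pair 5 (Nat.pair b x) ∨ x = Nat.pair 6 a
/-- Provability on codes. -/
def ThmC (p : ℕ → Bool) (x : ℕ) : Prop := Cl (AxC p) RuC x

theorem thmC_iff {Tax : Set AFml} {p : ℕ → Bool} (hp : ∀ φ : AFml, φ ∈ Tax ↔ p φ.code = true)
    {x : ℕ} : ThmC p x ↔ ∃ φ : AFml, x = φ.code ∧ Proves Tax φ := by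
  constructor
  · intro h
    induction h with
    | ax h =>
      rcases h with ⟨h1, h2⟩ | h | h
      · obtain ⟨φ, rfl⟩ := isF_iff.1 h1
        exact ⟨φ, rfl, .ax ((hp φ).2 h2)⟩
      · obtain ⟨φ, h1, h2⟩ := tautC_iff.1 h
        exact ⟨φ, h1, .taut h2⟩
      · rcases h with ⟨f, t, y, h1, h2⟩ | ⟨f, t, y, h1, h2⟩ | ⟨f, g, h1, h2, h3⟩ | ⟨f, y, h1, h2⟩ |
          ⟨f, h1, h2⟩ | ⟨t, h1, h2⟩ | ⟨f, t, s, y, z, h1, h2, h3⟩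
        · obtain ⟨t, φ, rfl, rfl, rfl⟩ := subF_iff.1 h1
          exact ⟨_, by exact h2, .allE φ t⟩
        · obtain ⟨t, φ, rfl, rfl, rfl⟩ := subF_iff.1 h1
          exact ⟨_, by exact h2, .exI φ t⟩
        · obtain ⟨φ, rfl⟩ := isF_iff.1 h1
          obtain ⟨ψ, rfl⟩ := isF_iff.1 h2
          exact ⟨_, by exact h3, .allImp φ ψ⟩
        · obtain ⟨φ, rfl, rfl⟩ := shiftF_iff.1 h1
          exact ⟨_, by exact h2, .vacAll φ⟩
        · obtain ⟨φ, rfl⟩ := isF_iff.1 h1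
          exact ⟨_, by exact h2, .exDef φ⟩
        · obtain ⟨t, rfl⟩ := isT_iff.1 h1
          exact ⟨_, by exact h2, .eqRefl t⟩
        · obtain ⟨t, φ, rfl, rfl, rfl⟩ := subF_iff.1 h1
          obtain ⟨s, ψ, rfl, h4, rfl⟩ := subF_iff.1 h2
          cases AFml.code_inj h4
          exact ⟨_, by exact h3, .eqSubst φ t s⟩
    | step _ _ h ih1 ih2 =>
      obtain ⟨φ, rfl, h1⟩ := ih1
      obtain ⟨ψ, rfl, h2⟩ := ih2
      rcases h with h | rfl
      · cases φ with
        | imp φ χ =>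
          simp only [AFml.code, Nat.pair_eq_pair] at h
          obtain ⟨_, h3, rfl⟩ := h
          cases AFml.code_inj h3
          exact ⟨χ, rfl, .mp h1 h2⟩
        | _ => simp [AFml.code, Nat.pair_eq_pair] at h
      · exact ⟨_, rfl, .gen h1⟩
  · rintro ⟨φ, rfl, h⟩
    induction h with
    | ax h => exact .ax (Or.inl ⟨isF_iff.2 ⟨_, rfl⟩, (hp _).1 h⟩)
    | taut h => exact .ax (Or.inr (Or.inl (tautC_iff.2 ⟨_, rfl, h⟩)))
    | mp _ _ ih1 ih2 => exact .step ih1 ih2 (Or.inl rfl)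
    | gen _ ih => exact .step ih ih (Or.inr rfl)
    | allE φ t =>
      exact .ax (Or.inr (Or.inr (Or.inl ⟨_, _, _, subF_iff.2 ⟨t, φ, rfl, rfl, rfl⟩, rfl⟩)))
    | exI φ t =>
      exact .ax (Or.inr (Or.inr (Or.inr (Or.inl ⟨_, _, _, subF_iff.2 ⟨t, φ, rfl, rfl, rfl⟩, rfl⟩))))
    | allImp φ ψ =>
      exact .ax (Or.inr (Or.inr (Or.inr (Or.inr (Or.inl
        ⟨_, _, isF_iff.2 ⟨φ, rfl⟩, isF_iff.2 ⟨ψ, rfl⟩, rfl⟩)))))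
    | vacAll φ =>
      exact .ax (Or.inr (Or.inr (Or.inr (Or.inr (Or.inr (Or.inl
        ⟨_, _, shiftF_iff.2 ⟨φ, rfl, rfl⟩, rfl⟩))))))
    | exDef φ =>
      exact .ax (Or.inr (Or.inr (Or.inr (Or.inr (Or.inr (Or.inr (Or.inl
        ⟨_, isF_iff.2 ⟨φ, rfl⟩, rfl⟩)))))))
    | eqRefl t =>
      exact .ax (Or.inr (Or.inr (Or.inr (Or.inr (Or.inr (Or.inr (Or.inr (Or.inl
        ⟨_, isT_iff.2 ⟨t, rfl⟩, rfl⟩))))))))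
    | eqSubst φ t s =>
      exact .ax (Or.inr (Or.inr (Or.inr (Or.inr (Or.inr (Or.inr (Or.inr (Or.inr
        ⟨_, _, _, _, _, subF_iff.2 ⟨t, φ, rfl, rfl, rfl⟩, subF_iff.2 ⟨s, φ, rfl, rfl, rfl⟩,
          rfl⟩))))))))

theorem sig_thmC {p : ℕ → Bool} (hp : Primrec p) : Sig (fun ρ => ThmC p (ρ 0)) := by
  unfold ThmC
  have h1 : Sig (fun ρ => p (ρ 0) = true) := by
    have h2 : Primrec (fun x => (p x).toNat) :=
      (Primrec.cond hp (Primrec.const 1) (Primrec.const 0)).of_eq fun x => by cases p x <;> rfl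
    have h3 := sigFn_primrec (Primrec.nat_iff.1 h2) (SigFn.proj 0)
    have h4 : Sig (fun ρ => (p (ρ 0)).toNat = 1) := inferInstance
    exact h4.of_iff fun ρ => by cases p (ρ 0) <;> simp
  refine Sig.cl (A := fun _ => AxC p) (R := fun _ => RuC) inferInstance ?_ ?_
  · unfold AxC; infer_instance
  · unfold RuC; infer_instance

end

section

theorem Sig.kernel1 {R : ℕ → Prop} (h : Sig (fun ρ => R (ρ 0))) :
    ∃ D : ℕ → ℕ → Prop, Del (fun ρ => D (ρ 0) (ρ 1)) ∧ (∀ x w w', w ≤ w' → D x w → D x w') ∧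
      ∀ x, R x ↔ ∃ w, D x w := by
  obtain ⟨D, h1, h2, h3⟩ := h.out
  refine ⟨fun x w => D (consEnv w (fun _ => x)), ?_, fun x w w' hw => h2 _ _ _ hw, fun x => h3 (fun _ => x)⟩
  refine (h1.ren (consEnv 1 (fun _ => 0))).of_iff fun ρ => ?_
  rw [iff_iff_eq]; congr 1; funext n; cases n <;> rfl

theorem Sig.kernel2 {R : ℕ → ℕ → Prop} (h : Sig (fun ρ => R (ρ 0) (ρ 1))) :
    ∃ D : ℕ → ℕ → ℕ → Prop, Del (fun ρ => D (ρ 0) (ρ 1) (ρ 2)) ∧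
      (∀ x y w w', w ≤ w' → D x y w → D x y w') ∧
      ∀ x y, R x y ↔ ∃ w, D x y w := by
  obtain ⟨D, h1, h2, h3⟩ := h.out
  refine ⟨fun x y w => D (consEnv w (consEnv x (fun _ => y))), ?_, fun x y w w' hw => h2 _ _ _ hw,
    fun x y => h3 (consEnv x (fun _ => y))⟩
  refine (h1.ren (consEnv 2 (consEnv 0 (fun _ => 1)))).of_iff fun ρ => ?_
  rw [iff_iff_eq]; congr 1; funext n; rcases n with _ | _ | n <;> rfl

theorem Sig.kernel3 {R : ℕ → ℕ → ℕ → Prop} (h : Sig (fun ρ => R (ρ 0) (ρ 1) (ρ 2))) :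
    ∃ D : ℕ → ℕ → ℕ → ℕ → Prop, Del (fun ρ => D (ρ 0) (ρ 1) (ρ 2) (ρ 3)) ∧
      (∀ x y z w w', w ≤ w' → D x y z w → D x y z w') ∧
      ∀ x y z, R x y z ↔ ∃ w, D x y z w := by
  obtain ⟨D, h1, h2, h3⟩ := h.out
  refine ⟨fun x y z w => D (consEnv w (consEnv x (consEnv y (fun _ => z)))), ?_,
    fun x y z w w' hw => h2 _ _ _ hw, fun x y z => h3 (consEnv x (consEnv y (fun _ => z)))⟩
  refine (h1.ren (consEnv 3 (consEnv 0 (consEnv 1 (fun _ => 2))))).of_iff fun ρ => ?_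
  rw [iff_iff_eq]; congr 1; funext n; rcases n with _ | _ | _ | n <;> rfl

/-- A decidable kernel. -/
structure Ker where
  r : ℕ → ℕ → Prop
  del : Del (fun ρ => r (ρ 0) (ρ 1))
  mono : ∀ x w w', w ≤ w' → r x w → r x w'
  le : ∀ x w, r x w → x ≤ w

theorem exists_ker {R : ℕ → Prop} (h : Sig (fun ρ => R (ρ 0))) :
    ∃ K : Ker, ∀ x, R x ↔ ∃ w, K.r x w := by
  obtain ⟨D, h1, h2, h3⟩ := h.kernel1
  refine ⟨⟨fun x w => x ≤ w ∧ D x w, (Del.le (.var 0) (.var 1)).and h1,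
    fun x w w' hw h => ⟨h.1.trans hw, h2 _ _ _ hw h.2⟩, fun x w h => h.1⟩, fun x => ?_⟩
  rw [h3]
  constructor
  · rintro ⟨w, hw⟩; exact ⟨max x w, le_max_left _ _, h2 _ _ _ (le_max_right _ _) hw⟩
  · rintro ⟨w, _, hw⟩; exact ⟨w, hw⟩

instance dec_ker (K : Ker) {F G : (ℕ → ℕ) → ℕ} [hF : SigFn F] [hG : SigFn G] :
    Dec (fun ρ => K.r (F ρ) (G ρ)) :=
  ⟨.comp2 (.ofDel K.del) hF hG, .comp2 (R := fun a b => ¬ K.r a b) (.ofDel K.del.not) hF hG⟩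

/-- The code of the numeral `n`. -/
def nc (n : ℕ) : ℕ := (numeral n).code

instance SigFn.nc {F : (ℕ → ℕ) → ℕ} [hF : SigFn F] : SigFn (fun ρ => nc (F ρ)) := by
  have h : Primrec PLN.nc := by
    have := Primrec.nat_rec₁ (f := fun _ r => Nat.pair 2 r) (Nat.pair 1 0)
      (Primrec₂.natPair.comp (Primrec.const 2) Primrec.snd).to₂
    refine this.of_eq fun n => ?_
    induction n with
    | zero => rfl
    | succ n ih => simp only [ih]; rfl
  exact sigFn_primrec (Primrec.nat_iff.1 h) hF

theorem le_nc (n : ℕ) : n ≤ nc n := by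
  induction n with
  | zero => exact Nat.zero_le _
  | succ n ih =>
    have : nc (n + 1) = Nat.pair 2 (nc n) := rfl
    have := Nat.add_le_pair 2 (nc n)
    omega

theorem nc_inj {a b : ℕ} (h : nc a = nc b) : a = b := numeral_inj (ATerm.code_inj h)

/-- The code of `P_q(c)`. -/
def Bx (q c : ℕ) : ℕ :=
  Nat.pair 7 (Nat.pair 3 (Nat.pair (Nat.pair 0 (Nat.pair (Nat.pair 0 0) (nc c)))
    (Nat.pair 7 (Nat.pair 3 (Nat.pair (Nat.pair 0 (Nat.pair (Nat.pair 0 0) (nc q))) q)))))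

instance SigFn.Bx {F G : (ℕ → ℕ) → ℕ} [hF : SigFn F] [hG : SigFn G] :
    SigFn (fun ρ => Bx (F ρ) (G ρ)) := by
  unfold PLN.Bx; infer_instance

theorem Bx_inj {q a b : ℕ} (h : Bx q a = Bx q b) : a = b := by
  simp only [Bx, Nat.pair_eq_pair, true_and, and_true] at h
  exact nc_inj h

theorem lt_Bx (q c : ℕ) : c < Bx q c := by
  have h1 := Nat.add_le_pair 7 (Nat.pair 3 (Nat.pair (Nat.pair 0 (Nat.pair (Nat.pair 0 0) (nc c)))
    (Nat.pair 7 (Nat.pair 3 (Nat.pair (Nat.pair 0 (Nat.pair (Nat.pair 0 0) (nc q))) q)))))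
  have h2 := Nat.right_le_pair 3 (Nat.pair (Nat.pair 0 (Nat.pair (Nat.pair 0 0) (nc c)))
    (Nat.pair 7 (Nat.pair 3 (Nat.pair (Nat.pair 0 (Nat.pair (Nat.pair 0 0) (nc q))) q))))
  have h3 := Nat.left_le_pair (Nat.pair 0 (Nat.pair (Nat.pair 0 0) (nc c)))
    (Nat.pair 7 (Nat.pair 3 (Nat.pair (Nat.pair 0 (Nat.pair (Nat.pair 0 0) (nc q))) q)))
  have h4 := Nat.right_le_pair 0 (Nat.pair (Nat.pair 0 0) (nc c))
  have h5 := Nat.right_le_pair (Nat.pair 0 0) (nc c)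
  have h6 := le_nc c
  unfold Bx
  omega

/-- Iterated boxes. -/
def Bi (q : ℕ) : ℕ → ℕ → ℕ
  | 0, c => c
  | k + 1, c => Bx q (Bi q k c)

instance SigFn.Bi (k : ℕ) {F G : (ℕ → ℕ) → ℕ} [hF : SigFn F] [hG : SigFn G] :
    SigFn (fun ρ => Bi (F ρ) k (G ρ)) := by
  induction k with
  | zero => exact hG
  | succ k ih => unfold PLN.Bi; infer_instance

theorem le_Bi (q k c : ℕ) : c ≤ Bi q k c := by
  induction k with
  | zero => exact le_rfl
  | succ k ih => exact ih.trans (lt_Bx _ _).le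

/-- The code of `0 = 1`. -/
def botc : ℕ := botFml.code

open Classical in
/-- Values of atoms. -/
noncomputable def atv (q b x : ℕ) : ℕ :=
  if x = botc then 0 else if h : ∃ c, x = Bx q c then bt b h.choose else 2

theorem atv_Bx (q b c : ℕ) : atv q b (Bx q c) = bt b c := by
  have h : ∃ c', Bx q c = Bx q c' := ⟨c, rfl⟩
  have h1 : Bx q c ≠ botc := by simp [Bx, botc, botFml, AFml.code]
  rw [atv, if_neg h1, dif_pos h, ← Bx_inj h.choose_spec]

theorem sigFn_atv : SigFn (fun ρ => atv (ρ 0) (ρ 1) (ρ 2)) := by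
  refine SigFn.of_graph (S := fun ρ y => (ρ 2 = botc ∧ y = 0) ∨ (∃ c, ρ 2 = Bx (ρ 0) c ∧ y = bt (ρ 1) c) ∨
    (¬ ρ 2 = botc ∧ (¬ ∃ c, c ≤ ρ 2 ∧ ρ 2 = Bx (ρ 0) c) ∧ y = 2)) inferInstance (fun ρ y => ?_)
  by_cases h1 : ρ 2 = botc
  · have h2 : ∀ q c, ¬ botc = Bx q c := by intro q c; simp [Bx, botc, botFml, AFml.code]
    simp [h1, atv, h2]
  · by_cases h2 : ∃ c, ρ 2 = Bx (ρ 0) c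
    · obtain ⟨c, hc⟩ := h2
      rw [hc, atv_Bx]
      constructor
      · rintro (h | ⟨c', h, h'⟩ | ⟨_, h, _⟩)
        · exact absurd (hc.trans h.1) h1
        · rw [h', Bx_inj h]
        · exact absurd ⟨c, (lt_Bx _ _).le, rfl⟩ h
      · intro h; exact Or.inr (Or.inl ⟨c, rfl, h⟩)
    · rw [atv, if_neg h1, dif_neg h2]
      constructor
      · rintro (h | ⟨c', h, h'⟩ | ⟨_, _, h⟩)
        · exact absurd h.1 h1
        · exact absurd ⟨_, h⟩ h2
        · exact h
      · intro h; exact Or.inr (Or.inr ⟨h1, fun ⟨c, _, hc⟩ => h2 ⟨c, hc⟩, h⟩)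

noncomputable def ev (q b x : ℕ) : ℕ := evl (atv q b) x

instance sigFn_ev {F G H : (ℕ → ℕ) → ℕ} [hF : SigFn F] [hG : SigFn G] [hH : SigFn H] :
    SigFn (fun ρ => ev (F ρ) (G ρ) (H ρ)) := by
  have h1 : SigFn (fun ρ => ev (ρ 0) (ρ 1) (ρ 2)) := by
    refine sigFn_evl (α := fun ρ => atv (ρ 0) (ρ 1)) ?_ inferInstance
    exact ⟨sigFn_atv.graph 0 (fun n => if n = 0 then 2 else if n = 1 then 3 else 1)⟩
  refine ⟨?_⟩
  exact Sig.comp4 (R := fun a b c d => a = ev b c d) h1.out (SigFn.proj 0)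
    ⟨hF.graph 0 (fun n => n + 2)⟩ ⟨hG.graph 0 (fun n => n + 2)⟩ ⟨hH.graph 0 (fun n => n + 2)⟩

/-- A non-code. -/
def bad : ℕ := Nat.pair 8 0

section
variable (K : Ker) (M N q s b : ℕ)

def TrigCond : Prop :=
  (∃ ψ, ψ ≤ s ∧ K.r ψ s ∧ ev q b ψ = 0) ∧
  (∀ x, x ≤ s → ∀ w, w < s → K.r x w → bt b x = 1) ∧
  (∀ c, c ≤ s → bt b (Bi q N c) = 1 → bt b (Bi q M c) = 1) ∧
  (∀ c, c ≤ s → ∀ w, w < s → bt b (Bx q c) = 1 → ¬ K.r (Nat.pair 2 (Bx q c)) w) ∧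
  ¬ bt b bad = 1

def Trig : Prop := ∃ b, b < 2 ^ (s + 1) ∧ TrigCond K M N q s b

def Rel (x : ℕ) : Prop := ∃ w, K.r x w ∧ ∀ s, s ≤ w → ¬ Trig K M N q s

def In (x : ℕ) : Prop := Rel K M N q x ∨ ∃ s b, b < 2 ^ (s + 1) ∧ TrigCond K M N q s b ∧
  (∀ s', s' < s → ¬ Trig K M N q s') ∧ (∀ b', b' < b → ¬ TrigCond K M N q s b') ∧ bt b x = 1

def dP (y z : ℕ) : Prop := (∃ c, y = Bi q N c ∧ z = Bi q M c) ∨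
  (∃ c, y = Bx q c ∧ Rel K M N q (Nat.pair 2 y) ∧ z = bad)

theorem Dec.comp {R : ℕ → ℕ → ℕ → Prop} {F G H : (ℕ → ℕ) → ℕ}
    (h : Dec (fun ρ => R (ρ 0) (ρ 1) (ρ 2))) (hF : SigFn F) (hG : SigFn G) (hH : SigFn H) :
    Dec (fun ρ => R (F ρ) (G ρ) (H ρ)) :=
  ⟨Sig.comp3 h.pos hF hG hH, Sig.comp3 (R := fun a b c => ¬ R a b c) h.neg hF hG hH⟩

instance dec_trigCond {F G H : (ℕ → ℕ) → ℕ} [hF : SigFn F] [hG : SigFn G] [hH : SigFn H] :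
    Dec (fun ρ => TrigCond K M N (F ρ) (G ρ) (H ρ)) := by
  refine Dec.comp ?_ hF hG hH
  unfold TrigCond
  refine @Dec.and _ _ inferInstance (@Dec.and _ _ inferInstance (@Dec.and _ _ inferInstance
    (@Dec.and _ _ inferInstance inferInstance)))

instance dec_trig {F G : (ℕ → ℕ) → ℕ} [hF : SigFn F] [hG : SigFn G] :
    Dec (fun ρ => Trig K M N (F ρ) (G ρ)) := by
  refine Dec.comp (R := fun a b _ => Trig K M N a b) ?_ hF hG hF
  unfold Trig; infer_instance

instance sig_rel {F G : (ℕ → ℕ) → ℕ} [hF : SigFn F] [hG : SigFn G] :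
    Sig (fun ρ => Rel K M N (F ρ) (G ρ)) := by
  refine Sig.comp2 ?_ hF hG
  unfold Rel; infer_instance

theorem sig_in : Sig (fun ρ => In K M N (ρ 0) (ρ 1)) := by
  unfold In; infer_instance

theorem sig_dP : Sig (fun ρ => dP K M N (ρ 0) (ρ 1) (ρ 2)) := by
  unfold dP; infer_instance
end

end

section

def g3 (φ : AFml) (a b c : ATerm) : AFml := φ.substAll (consSub a (consSub b (fun _ => c)))
def g4 (φ : AFml) (a b c d : ATerm) : AFml :=
  φ.substAll (consSub a (consSub b (consSub c (fun _ => d))))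

theorem ATerm.lift_liftSub (t : ATerm) (σ : ℕ → ATerm) :
    (t.lift 0).substAll (liftSub σ) = (t.substAll σ).lift 0 := by
  induction t with
  | var n => simp [ATerm.lift, ATerm.substAll, liftSub]
  | zero => rfl
  | succ t ih => simp [ATerm.lift, ATerm.substAll, ih]
  | add t s ih ih' => simp [ATerm.lift, ATerm.substAll, ih, ih']
  | mul t s ih ih' => simp [ATerm.lift, ATerm.substAll, ih, ih']

theorem g3_subst (φ : AFml) (a b c : ATerm) (σ : ℕ → ATerm) :
    (g3 φ a b c).substAll σ = g3 φ (a.substAll σ) (b.substAll σ) (c.substAll σ) := by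
  rw [g3, AFml.subst_subst, g3]
  congr 1; funext n
  rcases n with _ | _ | n <;> rfl

theorem g4_subst (φ : AFml) (a b c d : ATerm) (σ : ℕ → ATerm) :
    (g4 φ a b c d).substAll σ =
      g4 φ (a.substAll σ) (b.substAll σ) (c.substAll σ) (d.substAll σ) := by
  rw [g4, AFml.subst_subst, g4]
  congr 1; funext n
  rcases n with _ | _ | _ | n <;> rfl

theorem g3_free {φ : AFml} {a b c : ATerm} {n : ℕ} (ha : a.FreeLt n) (hb : b.FreeLt n)
    (hc : c.FreeLt n) : (g3 φ a b c).FreeLt n := by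
  refine AFml.FreeLt.subst φ fun i => ?_
  rcases i with _ | _ | i
  exacts [ha, hb, hc]

theorem g4_free {φ : AFml} {a b c d : ATerm} {n : ℕ} (ha : a.FreeLt n) (hb : b.FreeLt n)
    (hc : c.FreeLt n) (hd : d.FreeLt n) : (g4 φ a b c d).FreeLt n := by
  refine AFml.FreeLt.subst φ fun i => ?_
  rcases i with _ | _ | _ | i
  exacts [ha, hb, hc, hd]

theorem g3_sat {φ : AFml} {R : ℕ → ℕ → ℕ → Prop} (h : ∀ ρ, φ.Sat ρ ↔ R (ρ 0) (ρ 1) (ρ 2))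
    (a b c : ATerm) (ρ : ℕ → ℕ) : (g3 φ a b c).Sat ρ ↔ R (a.val ρ) (b.val ρ) (c.val ρ) := by
  rw [g3, AFml.sat_subst, h]; rfl

theorem g4_sat {φ : AFml} {R : ℕ → ℕ → ℕ → ℕ → Prop}
    (h : ∀ ρ, φ.Sat ρ ↔ R (ρ 0) (ρ 1) (ρ 2) (ρ 3))
    (a b c d : ATerm) (ρ : ℕ → ℕ) :
    (g4 φ a b c d).Sat ρ ↔ R (a.val ρ) (b.val ρ) (c.val ρ) (d.val ρ) := by
  rw [g4, AFml.sat_subst, h]; rfl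

section
variable (μ α γ : AFml)

def Imf (q y z w u k : ATerm) : AFml := .imp (g4 γ q y z w) (.imp (g3 μ y u k) (g3 μ z u k))

def Cl1 (q y z u k : ATerm) : AFml :=
  .all (.imp (.le (.var 0) (k.lift 0))
    (Imf μ γ (q.lift 0) (y.lift 0) (z.lift 0) (.var 0) (u.lift 0) (k.lift 0)))

def Cl2 (q y u k : ATerm) : AFml :=
  .all (.imp (.le (.var 0) (k.lift 0))
    (Cl1 μ γ (q.lift 0) (y.lift 0) (.var 0) (u.lift 0) (k.lift 0)))

def Cl3 (q u k : ATerm) : AFml :=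
  .all (.imp (.le (.var 0) (k.lift 0))
    (Cl2 μ γ (q.lift 0) (.var 0) (u.lift 0) (k.lift 0)))

def Bdy (q x u k : ATerm) : AFml := .and (g3 μ x u k) (.and (g3 α u k q) (Cl3 μ γ q u k))

def Bk (q x k : ATerm) : AFml :=
  .ex (.and (.le (.var 0) (k.lift 0)) (Bdy μ α γ (q.lift 0) (x.lift 0) (.var 0) (k.lift 0)))

def Th (q x : ATerm) : AFml := .ex (Bk μ α γ (q.lift 0) (x.lift 0) (.var 0))

theorem Imf_subst (q y z w u k : ATerm) (σ : ℕ → ATerm) :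
    (Imf μ γ q y z w u k).substAll σ = Imf μ γ (q.substAll σ) (y.substAll σ) (z.substAll σ)
      (w.substAll σ) (u.substAll σ) (k.substAll σ) := by
  simp [Imf, AFml.substAll, g3_subst, g4_subst]

theorem Cl1_subst (q y z u k : ATerm) (σ : ℕ → ATerm) :
    (Cl1 μ γ q y z u k).substAll σ = Cl1 μ γ (q.substAll σ) (y.substAll σ) (z.substAll σ)
      (u.substAll σ) (k.substAll σ) := by
  simp [Cl1, AFml.substAll, Imf_subst, ATerm.lift_liftSub, ATerm.substAll, liftSub]

theorem Cl2_subst (q y u k : ATerm) (σ : ℕ → ATerm) :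
    (Cl2 μ γ q y u k).substAll σ = Cl2 μ γ (q.substAll σ) (y.substAll σ)
      (u.substAll σ) (k.substAll σ) := by
  simp [Cl2, AFml.substAll, Cl1_subst, ATerm.lift_liftSub, ATerm.substAll, liftSub]

theorem Cl3_subst (q u k : ATerm) (σ : ℕ → ATerm) :
    (Cl3 μ γ q u k).substAll σ = Cl3 μ γ (q.substAll σ)
      (u.substAll σ) (k.substAll σ) := by
  simp [Cl3, AFml.substAll, Cl2_subst, ATerm.lift_liftSub, ATerm.substAll, liftSub]

theorem Bk_subst (q x k : ATerm) (σ : ℕ → ATerm) :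
    (Bk μ α γ q x k).substAll σ = Bk μ α γ (q.substAll σ) (x.substAll σ) (k.substAll σ) := by
  simp [Bk, Bdy, AFml.substAll, g3_subst, Cl3_subst, ATerm.lift_liftSub, ATerm.substAll, liftSub]

theorem Th_subst (q x : ATerm) (σ : ℕ → ATerm) :
    (Th μ α γ q x).substAll σ = Th μ α γ (q.substAll σ) (x.substAll σ) := by
  simp [Th, AFml.substAll, Bk_subst, ATerm.lift_liftSub, ATerm.substAll, liftSub]

theorem Bk_lift (q x k : ATerm) (c : ℕ) :
    (Bk μ α γ q x k).lift c = Bk μ α γ (q.lift c) (x.lift c) (k.lift c) := by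
  simp only [AFml.lift_eq, ATerm.lift_eq, Bk_subst]

theorem Th_lift (q x : ATerm) (c : ℕ) :
    (Th μ α γ q x).lift c = Th μ α γ (q.lift c) (x.lift c) := by
  simp only [AFml.lift_eq, ATerm.lift_eq, Th_subst]

theorem Bdy_free {q x u k : ATerm} {n : ℕ} (hq : q.FreeLt n) (hx : x.FreeLt n) (hu : u.FreeLt n)
    (hk : k.FreeLt n) : (Bdy μ α γ q x u k).FreeLt n := by
  refine ⟨g3_free hx hu hk, g3_free hu hk hq, ⟨Nat.succ_pos _, hk.lift⟩,
    ⟨Nat.succ_pos _, hk.lift.lift⟩, ⟨Nat.succ_pos _, hk.lift.lift.lift⟩, g4_free ?_ ?_ ?_ ?_,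
    g3_free ?_ ?_ ?_, g3_free ?_ ?_ ?_⟩
  all_goals first
    | exact hq.lift.lift.lift
    | exact hu.lift.lift.lift
    | exact hk.lift.lift.lift
    | (simp [ATerm.FreeLt, ATerm.lift])

theorem Bk_free {q x k : ATerm} {n : ℕ} (hq : q.FreeLt n) (hx : x.FreeLt n)
    (hk : k.FreeLt n) : (Bk μ α γ q x k).FreeLt n :=
  ⟨⟨Nat.succ_pos _, hk.lift⟩, Bdy_free _ _ _ hq.lift hx.lift (Nat.succ_pos _) hk.lift⟩

theorem Th_free {q x : ATerm} {n : ℕ} (hq : q.FreeLt n) (hx : x.FreeLt n) :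
    (Th μ α γ q x).FreeLt n := Bk_free _ _ _ hq.lift hx.lift (Nat.succ_pos _)

variable {μ α γ}

theorem Bk_delta0 (hμ : IsDelta0 μ) (hα : IsDelta0 α) (hγ : IsDelta0 γ) (q x k : ATerm) :
    IsDelta0 (Bk μ α γ q x k) :=
  .bex _ (.and (hμ.subst _) (.and (hα.subst _) (.ball _ (.ball _ (.ball _
    (.imp (hγ.subst _) (.imp (hμ.subst _) (hμ.subst _))))))))

def BkS (m' : ℕ → ℕ → ℕ → Prop) (a' : ℕ → ℕ → ℕ → Prop) (c' : ℕ → ℕ → ℕ → ℕ → Prop)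
    (q x k : ℕ) : Prop := ∃ u, u ≤ k ∧ m' x u k ∧ a' u k q ∧
    ∀ y, y ≤ k → ∀ z, z ≤ k → ∀ w, w ≤ k → c' q y z w → m' y u k → m' z u k

theorem Bk_sat {m' a' c'} (hμ : ∀ ρ, μ.Sat ρ ↔ m' (ρ 0) (ρ 1) (ρ 2))
    (hα : ∀ ρ, α.Sat ρ ↔ a' (ρ 0) (ρ 1) (ρ 2)) (hγ : ∀ ρ, γ.Sat ρ ↔ c' (ρ 0) (ρ 1) (ρ 2) (ρ 3))
    (q x k : ATerm) (ρ : ℕ → ℕ) :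
    (Bk μ α γ q x k).Sat ρ ↔ BkS m' a' c' (q.val ρ) (x.val ρ) (k.val ρ) := by
  simp only [Bk, Bdy, Cl3, Cl2, Cl1, Imf, AFml.Sat, g3_sat hμ, g3_sat hα, g4_sat hγ, ATerm.val_lift,
    ATerm.val, consEnv, BkS]

theorem Th_sat {m' a' c'} (hμ : ∀ ρ, μ.Sat ρ ↔ m' (ρ 0) (ρ 1) (ρ 2))
    (hα : ∀ ρ, α.Sat ρ ↔ a' (ρ 0) (ρ 1) (ρ 2)) (hγ : ∀ ρ, γ.Sat ρ ↔ c' (ρ 0) (ρ 1) (ρ 2) (ρ 3))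
    (q x : ATerm) (ρ : ℕ → ℕ) :
    (Th μ α γ q x).Sat ρ ↔ ∃ k, BkS m' a' c' (q.val ρ) (x.val ρ) k := by
  simp only [Th, AFml.Sat, Bk_sat hμ hα hγ, ATerm.val_lift, ATerm.val, consEnv]

end

theorem Proves.ex_mono {Γ : Set AFml} {χ φ ψ : AFml}
    (h : Proves Γ (.imp (χ.lift 0) (.imp φ ψ))) : Proves Γ (.imp χ (.imp (.ex φ) (.ex ψ))) := by
  have h1 : Proves Γ (.imp ψ ((AFml.ex ψ).lift 0)) := by
    have := Proves.exI (Γ := Γ) (ψ.lift 1) (.var 0)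
    have e : (ψ.lift 1).subst0 (.var 0) = ψ := by
      rw [AFml.lift_eq, AFml.subst0, AFml.subst_subst]
      conv_rhs => rw [← AFml.subst_var ψ]
      congr 1; funext n
      rcases n with _ | n
      · rfl
      · simp [ATerm.substAll, subst0Env, ATerm.lift]
    rwa [e] at this
  have h2 : Proves Γ (.imp (.ex φ) (.imp χ (.ex ψ))) := by
    refine .exE ?_
    exact .t2 (by intro v; simp only [AFml.evalProp, AFml.lift]; tauto) h h1
  exact .t1 (by intro v; simp only [AFml.evalProp]; tauto) h2

/-- The rule for existential statements with small witnesses treated separately. -/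
theorem pa_ex_rule {β χ : AFml} (hβ : IsDelta0 β) (hf : β.FreeLt 1) (N : ℕ)
    (h : Proves PA (.imp (.le (numeral N) (.var 0)) (.imp β (χ.lift 0))))
    (h' : Proves PA χ ∨ ∀ i, ¬ β.Sat (fun _ => i)) : Proves PA (.imp (.ex β) χ) := by
  rcases h' with h' | h'
  · exact .triv h'
  · refine .exE ?_
    have h2 : Proves PA (.imp (.le (.var 0) (numeral N)) (.neg β)) := by
      refine pa_bounded N fun i _ => ?_
      have := (delta0_complete hβ (fun _ => i)).2 (h' i)
      have e : β.subst0 (numeral i) = β.substAll (num fun _ => i) := by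
        refine AFml.subst_congr β (fun n hn => ?_) hf
        obtain rfl : n = 0 := by omega
        rfl
      change Proves PA (.neg (β.subst0 (numeral i)))
      rw [e]; exact this
    exact .t3 (by intro v; simp only [AFml.evalProp]; tauto) h h2 (pa_dichotomy N (.var 0))

theorem Cl_inst (μ γ : AFml) (hγ : IsDelta0 γ) {c' : ℕ → ℕ → ℕ → ℕ → Prop}
    (hγs : ∀ ρ, γ.Sat ρ ↔ c' (ρ 0) (ρ 1) (ρ 2) (ρ 3)) {q y z w N : ℕ}
    (hy : y ≤ N) (hz : z ≤ N) (hw : w ≤ N) (hc : c' q y z w) (u k : ATerm) :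
    Proves PA (.imp (.le (numeral N) k) (.imp (Cl3 μ γ (numeral q) u k)
      (.imp (g3 μ (numeral y) u k) (g3 μ (numeral z) u k)))) := by
  have h3 : Proves PA (.imp (Cl3 μ γ (numeral q) u k)
      (.imp (.le (numeral y) k) (Cl2 μ γ (numeral q) (numeral y) u k))) := by
    have := Proves.allE (Γ := PA) (.imp (.le (.var 0) (k.lift 0))
      (Cl2 μ γ (numeral q) (.var 0) (u.lift 0) (k.lift 0))) (numeral y)
    simpa [AFml.subst0, AFml.substAll, Cl2_subst, ATerm.substAll, subst0Env, Cl3] using this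
  have h2 : Proves PA (.imp (Cl2 μ γ (numeral q) (numeral y) u k)
      (.imp (.le (numeral z) k) (Cl1 μ γ (numeral q) (numeral y) (numeral z) u k))) := by
    have := Proves.allE (Γ := PA) (.imp (.le (.var 0) (k.lift 0))
      (Cl1 μ γ (numeral q) (numeral y) (.var 0) (u.lift 0) (k.lift 0))) (numeral z)
    simpa [AFml.subst0, AFml.substAll, Cl1_subst, ATerm.substAll, subst0Env, Cl2] using this
  have h1 : Proves PA (.imp (Cl1 μ γ (numeral q) (numeral y) (numeral z) u k)
      (.imp (.le (numeral w) k) (Imf μ γ (numeral q) (numeral y) (numeral z) (numeral w) u k))) := by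
    have := Proves.allE (Γ := PA) (.imp (.le (.var 0) (k.lift 0))
      (Imf μ γ (numeral q) (numeral y) (numeral z) (.var 0) (u.lift 0) (k.lift 0))) (numeral w)
    simpa [AFml.subst0, AFml.substAll, Imf_subst, ATerm.substAll, subst0Env, Cl1] using this
  have h0 : Proves PA (g4 γ (numeral q) (numeral y) (numeral z) (numeral w)) := by
    have := (delta0_complete hγ (consEnv q (consEnv y (consEnv z (fun _ => w))))).1
      ((hγs _).2 hc)
    have e : num (consEnv q (consEnv y (consEnv z (fun _ => w)))) =
      consSub (numeral q) (consSub (numeral y) (consSub (numeral z) (fun _ => numeral w))) := by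
      funext n; rcases n with _ | _ | _ | n <;> rfl
    rwa [e] at this
  have a := Proves.t2 (C := .imp (.le (numeral N) k) (.imp (Cl3 μ γ (numeral q) u k)
     (Cl2 μ γ (numeral q) (numeral y) u k)))
    (by intro v; simp only [AFml.evalProp]; tauto) h3 (pa_num_le_of_le hy k)
  have b := Proves.t3 (D := .imp (.le (numeral N) k) (.imp (Cl3 μ γ (numeral q) u k)
     (Cl1 μ γ (numeral q) (numeral y) (numeral z) u k)))
    (by intro v; simp only [AFml.evalProp]; tauto) h2 (pa_num_le_of_le hz k) a
  exact .t4 (by intro v; simp only [AFml.evalProp, Imf]; tauto) h1 (pa_num_le_of_le hw k) h0 b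

end

section

/-- The shape of the provability predicate. -/
def Pf (q : ℕ) (Θ : AFml) (x : ATerm) : AFml :=
  .ex (.and (.eq (.var 0) x) (.ex (.and (.eq (.var 0) (numeral q)) Θ)))

theorem Pf_subst0 {q : ℕ} {Θ : AFml} (h : Θ.FreeLt 2) (c : ℕ) :
    (Pf q Θ (.var 1)).subst0 (numeral c) = Pf q Θ (numeral c) := by
  have e : Θ.substAll (liftSub (liftSub (subst0Env (numeral c)))) = Θ := by
    refine AFml.subst_id Θ (fun n hn => ?_) h
    rcases n with _ | _ | n
    · rfl
    · rfl
    · omega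
  simp [Pf, AFml.subst0, AFml.substAll, ATerm.substAll, liftSub, subst0Env, e]

theorem Pf_code (Θ : AFml) (c : ℕ) : (Pf Θ.code Θ (numeral c)).code = Bx Θ.code c := rfl

theorem Pf_iff (μ α γ : AFml) (q c : ℕ) :
    Proves PA (.imp (Pf q (Th μ α γ (.var 0) (.var 1)) (numeral c))
      (Th μ α γ (numeral q) (numeral c))) ∧
    Proves PA (.imp (Th μ α γ (numeral q) (numeral c))
      (Pf q (Th μ α γ (.var 0) (.var 1)) (numeral c))) := by
  constructor
  · refine .exE ?_
    have h1 : Proves PA (.imp (.ex (.and (.eq (.var 0) (numeral q)) (Th μ α γ (.var 0) (.var 1))))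
        (Th μ α γ (numeral q) (.var 0))) := by
      refine .exE ?_
      rw [Th_lift]
      have := Proves.eqSubst (Γ := PA) (Th μ α γ (.var 0) (.var 2)) (.var 0) (numeral q)
      simp only [AFml.subst0, Th_subst, ATerm.substAll, subst0Env] at this
      simp only [numeral_lift, ATerm.lift]
      exact .t1 (by intro v; simp only [AFml.evalProp]; tauto) this
    have h2 : Proves PA (.imp (.eq (.var 0) (numeral c)) (.imp (Th μ α γ (numeral q) (.var 0))
        (Th μ α γ (numeral q) (numeral c)))) := by
      have := Proves.eqSubst (Γ := PA) (Th μ α γ (numeral q) (.var 0)) (.var 0) (numeral c)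
      simpa only [AFml.subst0, Th_subst, ATerm.substAll, subst0Env, numeral_subst] using this
    rw [Th_lift]
    simp only [numeral_lift]
    exact .t2 (by intro v; simp only [AFml.evalProp]; tauto) h1 h2
  · have h1 := Proves.exI (Γ := PA) (.and (.eq (.var 0) (numeral q)) (Th μ α γ (.var 0) (numeral c)))
      (numeral q)
    have h2 := Proves.exI (Γ := PA) (.and (.eq (.var 0) (numeral c))
      (.ex (.and (.eq (.var 0) (numeral q)) (Th μ α γ (.var 0) (.var 1))))) (numeral c)
    simp only [AFml.subst0, AFml.substAll, Th_subst, ATerm.substAll, subst0Env, numeral_subst, liftSub,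
      numeral_lift] at h1 h2
    have h3 := Proves.eqRefl (Γ := PA) (numeral q)
    have h4 := Proves.eqRefl (Γ := PA) (numeral c)
    exact .t4 (by intro v; simp only [AFml.evalProp, Pf]; tauto) h1 h2 h3 h4

theorem bt_dec {F G : (ℕ → ℕ) → ℕ} [SigFn F] [SigFn G] : Sig (fun ρ => bt (F ρ) (G ρ) = 1) := by
  infer_instance

theorem exists_P {InR : ℕ → ℕ → Prop} {dR : ℕ → ℕ → ℕ → Prop}
    (hIn : Sig (fun ρ => InR (ρ 0) (ρ 1))) (hd : Sig (fun ρ => dR (ρ 0) (ρ 1) (ρ 2))) :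
    ∃ (q : ℕ) (P : AFml), IsSigma1 P ∧ P.FreeLt 1 ∧
      (∀ c, IsSigma1 (P.subst0 (numeral c)) ∧ (P.subst0 (numeral c)).FreeLt 0) ∧
      (∀ c, (P.subst0 (numeral c)).code = Bx q c) ∧
      (∀ c, TrueN (P.subst0 (numeral c)) → Proves PA (P.subst0 (numeral c))) ∧
      (∀ c, TrueN (P.subst0 (numeral c)) → InR q c) ∧
      (∀ u, (∀ y, bt u y = 1 → InR q y ∧ y ≠ bad ∧ ∀ z, dR q y z → bt u z = 1) →
        ∀ c, bt u c = 1 → TrueN (P.subst0 (numeral c))) ∧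
      (∀ c c', dR q c c' → (TrueN (P.subst0 (numeral c)) → TrueN (P.subst0 (numeral c'))) →
        Proves PA (.imp (P.subst0 (numeral c)) (P.subst0 (numeral c')))) ∧
      Proves PA (.neg (P.subst0 (numeral bad))) := by
  have hmem : Sig (fun ρ => bt (ρ 1) (ρ 0) = 1) := bt_dec
  obtain ⟨π, π1, π2, π3⟩ := Sig.kernel2 (R := fun y u => bt u y = 1) hmem
  obtain ⟨δ, δ1, δ2, δ3⟩ := hIn.kernel2
  obtain ⟨c', γ1, γ2, γ3⟩ := hd.kernel3
  obtain ⟨γ, hγ, hγs⟩ := γ1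
  obtain ⟨α, hα, hαs⟩ : Del (fun ρ => (fun u k q => ∀ y, y ≤ k → (¬ π y u k ∨ δ q y k)) (ρ 0) (ρ 1) (ρ 2)) := by
    have h1 := ((π1.ren (fun n => if n = 0 then 0 else if n = 1 then 1 else 2)).not.or
      (δ1.ren (fun n => if n = 0 then 3 else if n = 1 then 0 else 2))).ball (.var 1)
    exact h1.of_iff fun ρ => Iff.rfl
  obtain ⟨μ0, hμ0, hμ0s⟩ : Del (fun ρ => (fun y u k => y ≤ k ∧ π y u k) (ρ 0) (ρ 1) (ρ 2)) :=
    (Del.le (.var 0) (.var 2)).and π1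
  obtain ⟨μ, hμdef⟩ : ∃ μ : AFml, μ = .and μ0 (.neg (.eq (.var 0) (numeral bad))) := ⟨_, rfl⟩
  have hμ : IsDelta0 μ := hμdef ▸ .and hμ0 (.neg (.eq _ _))
  have hμs : ∀ ρ, μ.Sat ρ ↔ (fun y u k => (y ≤ k ∧ π y u k) ∧ y ≠ bad) (ρ 0) (ρ 1) (ρ 2) := by
    intro ρ; rw [hμdef]; simp only [AFml.Sat, hμ0s, numeral_val, ATerm.val, ne_eq]
  have hfree : (Th μ α γ (.var 0) (.var 1)).FreeLt 2 := Th_free _ _ _ (by simp [ATerm.FreeLt]) (by simp [ATerm.FreeLt])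
  obtain ⟨q, hq⟩ : ∃ q, q = (Th μ α γ (.var 0) (.var 1)).code := ⟨_, rfl⟩
  have hsg : ∀ x, Sg (Pf q (Th μ α γ (.var 0) (.var 1)) x) := fun x =>
    .ex (.and (.delta0 (.eq _ _)) (.ex (.and (.delta0 (.eq _ _)) (.ex (.delta0 (Bk_delta0 hμ hα hγ _ _ _))))))
  have hpf : ∀ x n, x.FreeLt (n+1) → (Pf q (Th μ α γ (.var 0) (.var 1)) x).FreeLt n := fun x n hx =>
    ⟨⟨Nat.succ_pos _, hx⟩, ⟨Nat.succ_pos _, numeral_freeLt _ _⟩,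
      Th_free _ _ _ (by simp [ATerm.FreeLt]) (by simp [ATerm.FreeLt])⟩
  have htrue : ∀ c, TrueN (Pf q (Th μ α γ (.var 0) (.var 1)) (numeral c)) ↔
      ∃ k, BkS (fun y u k => (y ≤ k ∧ π y u k) ∧ y ≠ bad)
        (fun u k q => ∀ y, y ≤ k → (¬ π y u k ∨ δ q y k)) c' q c k := by
    intro c
    simp only [TrueN, Pf, AFml.Sat, ATerm.val, numeral_val, Th_sat (m' := fun y u k => (y ≤ k ∧ π y u k) ∧ y ≠ bad) (a' := fun u k q => ∀ y, y ≤ k → (¬ π y u k ∨ δ q y k)) (c' := c') hμs hαs hγs, consEnv]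
    simp
  have hR1 : ∀ c d, dR q c d → (TrueN (Pf q (Th μ α γ (.var 0) (.var 1)) (numeral c)) →
      TrueN (Pf q (Th μ α γ (.var 0) (.var 1)) (numeral d))) →
        Proves PA (.imp (Pf q (Th μ α γ (.var 0) (.var 1)) (numeral c))
          (Pf q (Th μ α γ (.var 0) (.var 1)) (numeral d))) := by
    intro c d hcd himp
    obtain ⟨w, hw⟩ := (γ3 _ _ _).1 hcd
    have h1 := (Pf_iff μ α γ q c).1
    have h2 := (Pf_iff μ α γ q d).2
    refine h1.trans (.trans ?_ h2)
    refine pa_ex_rule (Bk_delta0 hμ hα hγ _ _ _) (Bk_free _ _ _ ?_ ?_ (Nat.succ_pos _))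
      (max (max c d) w) ?_ ?_
    · simp only [numeral_lift]; exact numeral_freeLt _ _
    · simp only [numeral_lift]; exact numeral_freeLt _ _
    · have a : Proves PA (.imp (.le (numeral (max (max c d) w)) (.var 0))
          (.imp (Bk μ α γ (numeral q) (numeral c) (.var 0)) (Bk μ α γ (numeral q) (numeral d) (.var 0)))) := by
        refine .ex_mono ?_
        simp only [AFml.lift, ATerm.lift, numeral_lift]
        have := Cl_inst μ γ hγ hγs (N := max (max c d) w) (by omega) (by omega) (by omega) hw
          (.var 0) (.var 1)
        exact .t1 (by intro v; simp only [AFml.evalProp, Bdy]; tauto) this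
      have b : Proves PA (.imp (Bk μ α γ (numeral q) (numeral d) (.var 0))
          ((Th μ α γ (numeral q) (numeral d)).lift 0)) := by
        rw [Th_lift]
        have := Proves.exI (Γ := PA) (Bk μ α γ (numeral q) (numeral d) (.var 0)) (.var 0)
        simpa [AFml.subst0, Bk_subst, ATerm.substAll, subst0Env, Th] using this
      simp only [numeral_lift]
      exact .t2 (by intro v; simp only [AFml.evalProp]; tauto) a b
    · by_cases hc : TrueN (Pf q (Th μ α γ (.var 0) (.var 1)) (numeral c))
      · left
        have h3 := (Pf_iff μ α γ q d).1
        have h4 := (hsg (numeral d)).complete (fun _ => 0) (himp hc)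
        rw [AFml.subst_id _ (c := 0) (by omega) (hpf _ _ (numeral_freeLt _ _))] at h4
        exact h3.mp h4
      · right
        intro i hi
        rw [htrue] at hc
        rw [Bk_sat (m' := fun y u k => (y ≤ k ∧ π y u k) ∧ y ≠ bad) (a' := fun u k q => ∀ y, y ≤ k → (¬ π y u k ∨ δ q y k)) (c' := c') hμs hαs hγs] at hi
        simp only [numeral_lift, numeral_val] at hi
        exact hc ⟨_, hi⟩
  have hbad : Proves PA (.neg (Pf q (Th μ α γ (.var 0) (.var 1)) (numeral bad))) := by
    have h1 := (Pf_iff μ α γ q bad).1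
    have : Proves PA (.imp (Th μ α γ (numeral q) (numeral bad)) botFml) := by
      refine .exE (.exE ?_)
      simp only [numeral_lift]
      have e : g3 μ (numeral bad) (.var 0) ((ATerm.var 0).lift 0) =
        .and (g3 μ0 (numeral bad) (.var 0) ((ATerm.var 0).lift 0)) (.neg (.eq (numeral bad) (numeral bad))) := by
        rw [hμdef]
        simp [g3, AFml.substAll, ATerm.substAll, consSub]
      rw [Bdy, e]
      exact .t1 (by intro v; simp only [AFml.evalProp]; tauto) (.eqRefl (numeral bad))
    exact .t3 (by intro v; simp only [AFml.evalProp]; tauto) h1 this pa_not_bot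
  refine ⟨q, Pf q (Th μ α γ (.var 0) (.var 1)) (.var 1), (hsg _).isSigma1, hpf _ _ (by simp [ATerm.FreeLt]), ?_⟩
  simp only [Pf_subst0 hfree]
  refine ⟨fun c => ⟨(hsg _).isSigma1, hpf _ _ (numeral_freeLt _ _)⟩, fun c => by rw [hq, Pf_code], ?_, ?_, ?_, hR1, hbad⟩
  · intro c hc
    have h4 := (hsg (numeral c)).complete (fun _ => 0) hc
    rwa [AFml.subst_id _ (c := 0) (by omega) (hpf _ _ (numeral_freeLt _ _))] at h4
  · intro c hc
    obtain ⟨k, u, hu, ⟨⟨h1, h2⟩, h3⟩, h4, h5⟩ := (htrue c).1 hc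
    exact (δ3 _ _).2 ⟨k, (h4 c h1).resolve_left (not_not.2 h2)⟩
  · intro u hu c hc
    rw [htrue]
    have : ∀ s, ∃ k, ∀ y, y ≤ s → bt u y = 1 → π y u k ∧ δ q y k := by
      intro s
      induction s with
      | zero =>
        by_cases h : bt u 0 = 1
        · obtain ⟨k1, h1⟩ := (π3 0 u).1 h
          obtain ⟨k2, h2⟩ := (δ3 q 0).1 (hu 0 h).1
          refine ⟨max k1 k2, fun y hy _ => ?_⟩
          obtain rfl : y = 0 := by omega
          exact ⟨π2 _ _ _ _ (le_max_left _ _) h1, δ2 _ _ _ _ (le_max_right _ _) h2⟩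
        · refine ⟨0, fun y hy h' => ?_⟩
          obtain rfl : y = 0 := by omega
          exact absurd h' h
      | succ s ih =>
        obtain ⟨k, hk⟩ := ih
        by_cases h : bt u (s+1) = 1
        · obtain ⟨k1, h1⟩ := (π3 (s+1) u).1 h
          obtain ⟨k2, h2⟩ := (δ3 q (s+1)).1 (hu _ h).1
          refine ⟨max k (max k1 k2), fun y hy h' => ?_⟩
          rcases Nat.lt_or_ge s y with h3 | h3
          · obtain rfl : y = s + 1 := by omega
            exact ⟨π2 _ _ _ _ (by omega) h1, δ2 _ _ _ _ (by omega) h2⟩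
          · exact ⟨π2 _ _ _ _ (by omega) (hk y h3 h').1, δ2 _ _ _ _ (by omega) (hk y h3 h').2⟩
        · refine ⟨k, fun y hy h' => ?_⟩
          rcases Nat.lt_or_ge s y with h3 | h3
          · obtain rfl : y = s + 1 := by omega
            exact absurd h' h
          · exact hk y h3 h'
    obtain ⟨k, hk⟩ := this u
    have hle : ∀ y, bt u y = 1 → y ≤ u := by
      intro y hy
      exact bt_of_lt (Nat.lt_of_lt_of_le (Nat.lt_two_pow_self) (Nat.pow_le_pow_right (by omega) (Nat.le_succ u))) hy
    refine ⟨max k u, u, le_max_right _ _, ⟨⟨(hle c hc).trans (le_max_right _ _),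
      π2 _ _ _ _ (le_max_left _ _) (hk c (hle c hc) hc).1⟩, (hu c hc).2.1⟩, ?_, ?_⟩
    · intro y hy
      by_cases h : bt u y = 1
      · exact Or.inr (δ2 _ _ _ _ (le_max_left _ _) (hk y (hle y h) h).2)
      · exact Or.inl fun h' => h ((π3 _ _).2 ⟨_, h'⟩)
    · intro y hy z hz w hw hc ⟨⟨h1, h2⟩, h3⟩
      have h4 : bt u y = 1 := (π3 _ _).2 ⟨_, h2⟩
      have h5 : bt u z = 1 := (hu y h4).2.2 z ((γ3 _ _ _).2 ⟨w, hc⟩)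
      exact ⟨⟨hz, π2 _ _ _ _ (le_max_left _ _) (hk z (hle z h5) h5).1⟩, (hu z h5).2.1⟩

end

section

/-- The data of the construction. -/
structure PP (Tax : Set AFml) (K : Ker) (M N q : ℕ) (P : AFml) : Prop where
  ext : PA ⊆ Tax
  cons : ¬ Proves Tax botFml
  sound : Sigma1Sound Tax
  ker : ∀ x, (∃ w, K.r x w) ↔ ∃ φ : AFml, x = φ.code ∧ Proves Tax φ
  lt : M < N
  sig : IsSigma1 P
  free : P.FreeLt 1
  sent : ∀ c, IsSigma1 (P.subst0 (numeral c)) ∧ (P.subst0 (numeral c)).FreeLt 0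
  code : ∀ c, (P.subst0 (numeral c)).code = Bx q c
  compl : ∀ c, TrueN (P.subst0 (numeral c)) → Proves PA (P.subst0 (numeral c))
  sub : ∀ c, TrueN (P.subst0 (numeral c)) → In K M N q c
  sup : ∀ u, (∀ y, bt u y = 1 → In K M N q y ∧ y ≠ bad ∧ ∀ z, dP K M N q y z → bt u z = 1) →
        ∀ c, bt u c = 1 → TrueN (P.subst0 (numeral c))
  r1 : ∀ c c', dP K M N q c c' → (TrueN (P.subst0 (numeral c)) → TrueN (P.subst0 (numeral c'))) →
        Proves PA (.imp (P.subst0 (numeral c)) (P.subst0 (numeral c')))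
  rbad : Proves PA (.neg (P.subst0 (numeral bad)))

/-- False `Σ₁` sentences. -/
def FS (σ : AFml) : Prop := IsSigma1 σ ∧ σ.FreeLt 0 ∧ ¬ TrueN σ

theorem FS.or {σ τ : AFml} (h : FS σ) (h' : FS τ) : FS (.or σ τ) :=
  ⟨.or h.1 h'.1, ⟨h.2.1, h'.2.1⟩, fun x => x.elim h.2.2 h'.2.2⟩

theorem FS_bot : FS botFml := by
  refine ⟨.delta0 (.eq _ _), ⟨trivial, trivial⟩, ?_⟩
  simp [TrueN, botFml, AFml.Sat, ATerm.val]

theorem opv_lt {t a b : ℕ} (h : opv t a b < 2) : a < 2 ∧ b < 2 := by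
  unfold opv at h
  by_contra hc
  rw [if_neg hc] at h
  omega

variable {Tax : Set AFml} {K : Ker} {M N q : ℕ} {P : AFml}

theorem atv_bot (q b : ℕ) : atv q b botc = 0 := by rw [atv, if_pos rfl]

theorem PP.at_lemma (H : PP Tax K M N q P) {b : ℕ}
    (hb : ∀ c, TrueN (P.subst0 (numeral c)) ↔ bt b c = 1) (φ : AFml) (h : atv q b φ.code < 2) :
    ∃ σ, FS σ ∧ (atv q b φ.code = 1 → Proves Tax (.or σ φ)) ∧
      (atv q b φ.code = 0 → Proves Tax (.or σ (.neg φ))) := by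
  by_cases h1 : φ.code = botc
  · have h2 := AFml.code_inj (ψ := botFml) h1
    refine ⟨botFml, FS_bot, fun h3 => ?_, fun _ => ?_⟩
    · rw [h1, atv_bot] at h3; omega
    · rw [h2]
      exact .t1 (by intro v; simp only [AFml.evalProp]; tauto) (pa_not_bot.mono H.ext)
  · by_cases h2 : ∃ c, φ.code = Bx q c
    · obtain ⟨c, hc⟩ := h2
      have h3 : φ = P.subst0 (numeral c) := AFml.code_inj (hc.trans (H.code c).symm)
      rw [hc, atv_Bx]
      by_cases h4 : bt b c = 1
      · refine ⟨botFml, FS_bot, fun _ => ?_, fun h => by omega⟩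
        rw [h3]
        exact .t1 (by intro v; simp only [AFml.evalProp]; tauto)
          ((H.compl c ((hb c).2 h4)).mono H.ext)
      · refine ⟨φ, ?_, fun h => absurd h h4, fun _ => .taut ?_⟩
        · rw [h3]; exact ⟨(H.sent c).1, (H.sent c).2, fun h => h4 ((hb c).1 h)⟩
        · intro v; simp only [AFml.evalProp]; tauto
    · rw [atv, if_neg h1, dif_neg h2] at h; omega

theorem PP.ev_lemma (H : PP Tax K M N q P) {b : ℕ}
    (hb : ∀ c, TrueN (P.subst0 (numeral c)) ↔ bt b c = 1) (φ : AFml) (h : ev q b φ.code < 2) :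
    ∃ σ, FS σ ∧ (ev q b φ.code = 1 → Proves Tax (.or σ φ)) ∧
      (ev q b φ.code = 0 → Proves Tax (.or σ (.neg φ))) := by
  have two : ∀ {φ ψ θ : AFml} {a c d : ℕ}, a < 2 → c < 2 → d < 2 →
      (∃ σ, FS σ ∧ (a = 1 → Proves Tax (.or σ φ)) ∧ (a = 0 → Proves Tax (.or σ (.neg φ)))) →
      (∃ σ, FS σ ∧ (c = 1 → Proves Tax (.or σ ψ)) ∧ (c = 0 → Proves Tax (.or σ (.neg ψ)))) →
      (∀ v : AFml → Prop, (a = 1 ↔ φ.evalProp v) → (c = 1 ↔ ψ.evalProp v) → (d = 1 ↔ θ.evalProp v)) →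
      (∃ σ, FS σ ∧ (d = 1 → Proves Tax (.or σ θ)) ∧ (d = 0 → Proves Tax (.or σ (.neg θ)))) := by
    rintro φ ψ θ a c d ha hc hd ⟨σ, h1, h2, h3⟩ ⟨τ, h4, h5, h6⟩ hv
    have e1 : ∃ φ', Proves Tax (.or σ φ') ∧ ∀ v, φ'.evalProp v → (a = 1 ↔ φ.evalProp v) := by
      interval_cases a
      · exact ⟨_, h3 rfl, fun v => by simp [AFml.evalProp]⟩
      · exact ⟨_, h2 rfl, fun v => by simp⟩
    have e2 : ∃ φ', Proves Tax (.or τ φ') ∧ ∀ v, φ'.evalProp v → (c = 1 ↔ ψ.evalProp v) := by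
      interval_cases c
      · exact ⟨_, h6 rfl, fun v => by simp [AFml.evalProp]⟩
      · exact ⟨_, h5 rfl, fun v => by simp⟩
    obtain ⟨φ', p1, p2⟩ := e1
    obtain ⟨ψ', p3, p4⟩ := e2
    refine ⟨_, h1.or h4, fun hd1 => ?_, fun hd0 => ?_⟩
    · refine .t2 (fun v => ?_) p1 p3
      rintro (x | x) (y | y)
      · exact Or.inl (Or.inl x)
      · exact Or.inl (Or.inl x)
      · exact Or.inl (Or.inr y)
      · exact Or.inr ((hv v (p2 v x) (p4 v y)).1 hd1)
    · refine .t2 (fun v => ?_) p1 p3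
      rintro (x | x) (y | y)
      · exact Or.inl (Or.inl x)
      · exact Or.inl (Or.inl x)
      · exact Or.inl (Or.inr y)
      · refine Or.inr fun z => ?_
        have := (hv v (p2 v x) (p4 v y)).2 z
        omega
  unfold ev at h ⊢
  induction φ with
  | eq t s => rw [evl_at _ (by simp [AFml.code])] at h ⊢; exact H.at_lemma hb _ h
  | le t s => rw [evl_at _ (by simp [AFml.code])] at h ⊢; exact H.at_lemma hb _ h
  | all φ => rw [evl_at _ (by simp [AFml.code])] at h ⊢; exact H.at_lemma hb _ h
  | ex φ => rw [evl_at _ (by simp [AFml.code])] at h ⊢; exact H.at_lemma hb _ h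
  | neg φ ih =>
    rw [AFml.code, evl_neg] at h ⊢
    have h1 := (opv_lt h).1
    refine two h1 h1 h (ih h1) (ih h1) fun v h2 _ => ?_
    rw [(opv_cases h1 (show 0 < 2 by omega)).2.2.1, AFml.evalProp, ← h2]
    simp
  | and φ ψ ih1 ih2 =>
    rw [AFml.code, evl_bin _ (by omega) (by omega)] at h ⊢
    have h1 := opv_lt h
    refine two h1.1 h1.2 h (ih1 h1.1) (ih2 h1.2) fun v h2 h3 => ?_
    rw [(opv_cases h1.1 h1.2).1, AFml.evalProp, ← h2, ← h3]
  | or φ ψ ih1 ih2 =>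
    rw [AFml.code, evl_bin _ (by omega) (by omega)] at h ⊢
    have h1 := opv_lt h
    refine two h1.1 h1.2 h (ih1 h1.1) (ih2 h1.2) fun v h2 h3 => ?_
    rw [(opv_cases h1.1 h1.2).2.1, AFml.evalProp, ← h2, ← h3]
  | imp φ ψ ih1 ih2 =>
    rw [AFml.code, evl_bin _ (by omega) (by omega)] at h ⊢
    have h1 := opv_lt h
    refine two h1.1 h1.2 h (ih1 h1.1) (ih2 h1.2) fun v h2 h3 => ?_
    rw [(opv_cases h1.1 h1.2).2.2.1, AFml.evalProp, ← h2, ← h3]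

theorem PP.no_trig (H : PP Tax K M N q P) (s : ℕ) : ¬ Trig K M N q s := by
  classical
  intro hs
  have ex : ∃ s, Trig K M N q s := ⟨s, hs⟩
  obtain ⟨s, hs, hmin⟩ : ∃ s, Trig K M N q s ∧ ∀ s' < s, ¬ Trig K M N q s' :=
    ⟨Nat.find ex, Nat.find_spec ex, fun s' h => Nat.find_min ex h⟩
  obtain ⟨b, ⟨hb, hT⟩, hbmin⟩ : ∃ b, (b < 2 ^ (s + 1) ∧ TrigCond K M N q s b) ∧
      ∀ b' < b, ¬ (b' < 2 ^ (s + 1) ∧ TrigCond K M N q s b') :=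
    ⟨Nat.find hs, Nat.find_spec hs, fun b' h => Nat.find_min hs h⟩
  have hrel : ∀ x, Rel K M N q x → ∃ w, w < s ∧ K.r x w := by
    rintro x ⟨w, hw, hn⟩
    refine ⟨w, ?_, hw⟩
    by_contra hc
    exact hn s (by omega) hs
  have hbmin' : ∀ b', b' < b → ¬ TrigCond K M N q s b' := fun b' h h' => hbmin b' h ⟨h.trans hb, h'⟩
  have hin : ∀ x, In K M N q x ↔ bt b x = 1 := by
    intro x
    constructor
    · rintro (h | ⟨s', b', h1, h2, h3, h4, h5⟩)
      · obtain ⟨w, hw, hr⟩ := hrel x h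
        exact hT.2.1 x ((K.le _ _ hr).trans hw.le) w hw hr
      · have e : s' = s := by
          rcases Nat.lt_trichotomy s' s with h | h | h
          · exact absurd ⟨b', h1, h2⟩ (hmin s' h)
          · exact h
          · exact absurd hs (h3 s h)
        subst e
        have e : b' = b := by
          rcases Nat.lt_trichotomy b' b with h | h | h
          · exact absurd h2 (hbmin' b' h)
          · exact h
          · exact absurd hT (h4 b h)
        subst e
        exact h5
    · intro h
      exact Or.inr ⟨s, b, hb, hT, hmin, hbmin', h⟩
  have hE : ∀ c, TrueN (P.subst0 (numeral c)) ↔ bt b c = 1 := by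
    intro c
    refine ⟨fun h => (hin c).1 (H.sub c h), fun h => H.sup b (fun y hy => ⟨(hin y).2 hy, ?_, ?_⟩) c h⟩
    · rintro rfl; exact hT.2.2.2.2 hy
    · rintro z (⟨c, rfl, rfl⟩ | ⟨c, rfl, h1, rfl⟩)
      · exact hT.2.2.1 c ((le_Bi _ _ _).trans (bt_of_lt hb hy)) hy
      · obtain ⟨w, hw, hr⟩ := hrel _ h1
        exact absurd hr (hT.2.2.2.1 c ((lt_Bx q c).le.trans (bt_of_lt hb hy)) w hw hy)
  obtain ⟨⟨ψ, _, h1, h2⟩, _⟩ := hT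
  obtain ⟨φ, rfl, hφ⟩ := (H.ker ψ).1 ⟨_, h1⟩
  obtain ⟨σ, hσ, _, h3⟩ := H.ev_lemma hE φ (by omega)
  have h4 : Proves Tax σ := .t2 (by intro v; simp only [AFml.evalProp]; tauto) (h3 h2) hφ
  exact hσ.2.2 (H.sound σ hσ.1 hσ.2.1 h4)

theorem PP.rel_iff (H : PP Tax K M N q P) (x : ℕ) :
    Rel K M N q x ↔ ∃ φ : AFml, x = φ.code ∧ Proves Tax φ := by
  rw [← H.ker]
  exact ⟨fun ⟨w, h, _⟩ => ⟨w, h⟩, fun ⟨w, h⟩ => ⟨w, h, fun s _ => H.no_trig s⟩⟩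

theorem PP.in_iff (H : PP Tax K M N q P) (x : ℕ) :
    In K M N q x ↔ ∃ φ : AFml, x = φ.code ∧ Proves Tax φ := by
  rw [← H.rel_iff]
  exact ⟨fun h => h.resolve_right fun ⟨s, b, h1, h2, _⟩ => H.no_trig s ⟨b, h1, h2⟩, Or.inl⟩

theorem PP.Bx_down (H : PP Tax K M N q P) {c : ℕ}
    (h : ∃ φ : AFml, Bx q c = φ.code ∧ Proves Tax φ) : ∃ φ : AFml, c = φ.code ∧ Proves Tax φ := by
  obtain ⟨φ, h1, h2⟩ := h
  rw [← H.code] at h1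
  rw [← AFml.code_inj h1] at h2
  exact (H.in_iff c).1 (H.sub c (H.sound _ (H.sent c).1 (H.sent c).2 h2))

theorem Bi_add (q a b c : ℕ) : Bi q (a + b) c = Bi q a (Bi q b c) := by
  induction a with
  | zero => simp [Bi]
  | succ a ih => rw [Nat.succ_add, Bi, ih, Bi]

theorem PP.Bi_down (H : PP Tax K M N q P) {c : ℕ} (k : ℕ)
    (h : ∃ φ : AFml, Bi q k c = φ.code ∧ Proves Tax φ) : ∃ φ : AFml, c = φ.code ∧ Proves Tax φ := by
  induction k with
  | zero => exact h
  | succ k ih => exact ih (H.Bx_down h)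

theorem PP.NM_down (H : PP Tax K M N q P) {c : ℕ}
    (h : ∃ φ : AFml, Bi q N c = φ.code ∧ Proves Tax φ) :
    ∃ φ : AFml, Bi q M c = φ.code ∧ Proves Tax φ := by
  have e : N = (N - M) + M := by have := H.lt; omega
  rw [e, Bi_add] at h
  exact H.Bi_down _ h

theorem PP.NM_le (H : PP Tax K M N q P) (c : ℕ) : Bi q M c ≤ Bi q N c := by
  have e : N = (N - M) + M := by have := H.lt; omega
  rw [e, Bi_add]
  exact le_Bi _ _ _

theorem PP.no_ref (H : PP Tax K M N q P) {c : ℕ}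
    (h : ∃ φ : AFml, Bx q c = φ.code ∧ Proves Tax φ)
    (h' : ∃ φ : AFml, Nat.pair 2 (Bx q c) = φ.code ∧ Proves Tax φ) : False := by
  obtain ⟨φ, h1, h2⟩ := h
  obtain ⟨ψ, h3, h4⟩ := h'
  have e : ψ = .neg φ := AFml.code_inj (by rw [← h3, h1]; rfl)
  subst e
  exact H.cons (.t2 (by intro v; simp only [AFml.evalProp]; tauto) h2 h4)

theorem bad_ne (φ : AFml) : bad ≠ φ.code := by
  cases φ <;> simp [bad, AFml.code]

theorem PP.true_iff (H : PP Tax K M N q P) (x : ℕ) :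
    TrueN (P.subst0 (numeral x)) ↔ ∃ φ : AFml, x = φ.code ∧ Proves Tax φ := by
  refine ⟨fun h => (H.in_iff x).1 (H.sub x h), fun h => ?_⟩
  obtain ⟨u, _, hu⟩ := exists_bits (fun y => ∃ φ : AFml, y = φ.code ∧ Proves Tax φ) x
  refine H.sup u (fun y hy => ?_) x ((hu x).2 ⟨le_rfl, h⟩)
  obtain ⟨h1, h2⟩ := (hu y).1 hy
  refine ⟨(H.in_iff y).2 h2, ?_, ?_⟩
  · rintro rfl
    obtain ⟨φ, h3, _⟩ := h2
    exact bad_ne φ h3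
  · rintro z (⟨c, rfl, rfl⟩ | ⟨c, rfl, h3, rfl⟩)
    · exact (hu _).2 ⟨(H.NM_le c).trans h1, H.NM_down h2⟩
    · exact (H.no_ref h2 ((H.rel_iff _).1 h3)).elim

theorem PP.provPred (H : PP Tax K M N q P) : IsProvPred Tax P := by
  refine ⟨H.free, fun φ => ⟨fun h => ?_, fun h => ?_⟩⟩
  · exact H.compl _ ((H.true_iff _).2 ⟨φ, rfl, h⟩)
  · obtain ⟨ψ, h1, h2⟩ := (H.true_iff _).1 (H.sound _ (H.sent _).1 (H.sent _).2 (h.mono H.ext))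
    rwa [AFml.code_inj h1]

theorem PP.R1 (H : PP Tax K M N q P) (c : ℕ) :
    Proves Tax (.imp (P.subst0 (numeral (Bi q N c))) (P.subst0 (numeral (Bi q M c)))) := by
  refine (H.r1 _ _ (Or.inl ⟨c, rfl, rfl⟩) fun h => ?_).mono H.ext
  rw [H.true_iff] at h ⊢
  exact H.NM_down h

theorem PP.R2 (H : PP Tax K M N q P) {c : ℕ} (h : Proves Tax (.neg (P.subst0 (numeral c)))) :
    Proves Tax (.neg (P.subst0 (numeral (Bx q c)))) := by
  have h1 : ∃ φ : AFml, Nat.pair 2 (Bx q c) = φ.code ∧ Proves Tax φ :=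
    ⟨_, by rw [← H.code]; rfl, h⟩
  have := H.r1 (Bx q c) bad (Or.inr ⟨c, rfl, (H.rel_iff _).2 h1, rfl⟩) fun h2 =>
    (H.no_ref ((H.true_iff _).1 h2) h1).elim
  exact Proves.mono H.ext (.t2 (by intro v; simp only [AFml.evalProp]; tauto) this H.rbad)

end

section

variable {Tax : Set AFml} {K : Ker} {M N q : ℕ} {P : AFml}

theorem PP.boxIter_eq (H : PP Tax K M N q P) {f : MFml → AFml}
    (hf : ∀ A, f (.box A) = P.appNum (f A)) (A : MFml) (k : ℕ) :
    f (boxIter (k + 1) A) = P.subst0 (numeral (Bi q k (f A).code)) := by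
  induction k with
  | zero => exact hf A
  | succ k ih =>
    change f (.box (boxIter (k + 1) A)) = _
    rw [hf, ih, AFml.appNum, gnum, H.code]
    rfl

theorem interp_eval {f : MFml → AFml} (hf : IsInterp P f) (v : AFml → Prop) (hv : ¬ v botFml)
    (A : MFml) : A.evalTC (fun B => (f B).evalProp v) ↔ (f A).evalProp v := by
  obtain ⟨_, h1, h2, h3, h4, h5, _⟩ := hf
  induction A with
  | var i => rfl
  | box A _ => rfl
  | bot => rw [h1]; simp only [MFml.evalTC, false_iff]; exact hv
  | neg A ih => rw [h2, MFml.evalTC, ih]; rfl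
  | and A B ih1 ih2 => rw [h3, MFml.evalTC, ih1, ih2]; rfl
  | or A B ih1 ih2 => rw [h4, MFml.evalTC, ih1, ih2]; rfl
  | imp A B ih1 ih2 => rw [h5, MFml.evalTC, ih1, ih2]; rfl

theorem PP.soundness (H : PP Tax K M N q P) {f : MFml → AFml} (hf : IsInterp P f) {A : MFml}
    (h : NAProves (M + 1) (N + 1) A) : Proves Tax (f A) := by
  have hf' := hf
  obtain ⟨_, h1, h2, h3, h4, h5, h6⟩ := hf'
  induction h with
  | taut h =>
    rename_i A
    have a : Proves Tax (.imp (.neg botFml) (f A)) := by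
      refine .taut fun v hv => ?_
      exact (interp_eval hf v hv A).1 (h _)
    exact a.mp (pa_not_bot.mono H.ext)
  | acc A =>
    rw [h5, H.boxIter_eq h6, H.boxIter_eq h6]
    exact H.R1 _
  | mp _ _ ih1 ih2 => rw [h5] at ih1; exact ih1.mp ih2
  | nec _ ih => rw [h6]; exact ((H.provPred.2 _).1 ih).mono H.ext
  | ros _ ih =>
    rename_i A _
    rw [h2, h6] at ih ⊢
    have := H.R2 ih
    rw [h6, AFml.appNum, gnum, AFml.appNum, gnum, H.code]
    exact this

/-- The canonical interpretation. -/
def fI (P : AFml) : MFml → AFml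
  | .var i => .neg (P.subst0 (numeral (Nat.pair 9 i)))
  | .bot => botFml
  | .neg A => .neg (fI P A)
  | .and A B => .and (fI P A) (fI P B)
  | .or A B => .or (fI P A) (fI P B)
  | .imp A B => .imp (fI P A) (fI P B)
  | .box A => P.appNum (fI P A)

theorem PP.interp (H : PP Tax K M N q P) : IsInterp P (fI P) :=
  ⟨fun _ => (H.sent _).2, rfl, fun _ => rfl, fun _ _ => rfl, fun _ _ => rfl, fun _ _ => rfl,
    fun _ => rfl⟩

theorem PP.code_box (H : PP Tax K M N q P) (A : MFml) :
    (fI P (.box A)).code = Bx q (fI P A).code := H.code _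

theorem code_ne9 (φ : AFml) (i : ℕ) : φ.code ≠ Nat.pair 9 i := by
  cases φ <;> simp [AFml.code]

theorem PP.code_Bx (H : PP Tax K M N q P) {C : MFml} {d : ℕ} (h : (fI P C).code = Bx q d) :
    ∃ C', C = .box C' ∧ d = (fI P C').code := by
  cases C with
  | box C => exact ⟨C, rfl, (Bx_inj ((H.code_box C).symm.trans h)).symm⟩
  | _ => simp [fI, AFml.code, Bx, botFml] at h

theorem PP.code_Bi (H : PP Tax K M N q P) {d : ℕ} (k : ℕ) : ∀ {C : MFml}, (fI P C).code = Bi q k d →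
    ∃ C', C = boxIter k C' ∧ d = (fI P C').code := by
  induction k with
  | zero => exact fun {C} h => ⟨C, rfl, h.symm⟩
  | succ k ih =>
    intro C h
    obtain ⟨C1, rfl, h1⟩ := H.code_Bx h
    obtain ⟨C2, rfl, h2⟩ := ih h1.symm
    exact ⟨C2, rfl, h2⟩

theorem PP.Bi_code (H : PP Tax K M N q P) (A : MFml) (k : ℕ) :
    (fI P (boxIter k A)).code = Bi q k (fI P A).code := by
  induction k with
  | zero => rfl
  | succ k ih => rw [boxIter, H.code_box, ih]; rfl

theorem PP.inj (H : PP Tax K M N q P) : ∀ A B : MFml, (fI P A).code = (fI P B).code → A = B := by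
  have hv : ∀ i B, (P.subst0 (numeral (Nat.pair 9 i))).code ≠ (fI P B).code := by
    intro i B h
    rw [H.code] at h
    obtain ⟨C, rfl, h2⟩ := H.code_Bx h.symm
    exact code_ne9 _ _ h2.symm
  intro A
  induction A with
  | var i =>
    intro B h
    cases B with
    | var j =>
      simp only [fI, AFml.code, Nat.pair_eq_pair, true_and, H.code] at h
      have := Bx_inj h
      simp only [Nat.pair_eq_pair, true_and] at this
      rw [this]
    | neg B =>
      simp only [fI, AFml.code, Nat.pair_eq_pair, true_and] at h
      exact absurd h (hv _ _)
    | box B => rw [H.code_box] at h; simp [fI, AFml.code, Bx] at h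
    | _ => simp [fI, AFml.code, botFml] at h
  | bot =>
    intro B h
    cases B with
    | bot => rfl
    | box B => rw [H.code_box] at h; simp [fI, AFml.code, Bx, botFml] at h
    | _ => simp [fI, AFml.code, botFml] at h
  | neg A ih =>
    intro B h
    cases B with
    | var j =>
      simp only [fI, AFml.code, Nat.pair_eq_pair, true_and] at h
      exact absurd h.symm (hv _ _)
    | neg B =>
      simp only [fI, AFml.code, Nat.pair_eq_pair, true_and] at h
      rw [ih _ h]
    | box B => rw [H.code_box] at h; simp [fI, AFml.code, Bx] at h
    | _ => simp [fI, AFml.code, botFml] at h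
  | and A A' ih ih' =>
    intro B h
    cases B with
    | and B B' =>
      simp only [fI, AFml.code, Nat.pair_eq_pair, true_and] at h
      rw [ih _ h.1, ih' _ h.2]
    | box B => rw [H.code_box] at h; simp [fI, AFml.code, Bx] at h
    | _ => simp [fI, AFml.code, botFml] at h
  | or A A' ih ih' =>
    intro B h
    cases B with
    | or B B' =>
      simp only [fI, AFml.code, Nat.pair_eq_pair, true_and] at h
      rw [ih _ h.1, ih' _ h.2]
    | box B => rw [H.code_box] at h; simp [fI, AFml.code, Bx] at h
    | _ => simp [fI, AFml.code, botFml] at h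
  | imp A A' ih ih' =>
    intro B h
    cases B with
    | imp B B' =>
      simp only [fI, AFml.code, Nat.pair_eq_pair, true_and] at h
      rw [ih _ h.1, ih' _ h.2]
    | box B => rw [H.code_box] at h; simp [fI, AFml.code, Bx] at h
    | _ => simp [fI, AFml.code, botFml] at h
  | box A ih =>
    intro B h
    rw [H.code_box] at h
    obtain ⟨C, rfl, h1⟩ := H.code_Bx h.symm
    rw [ih _ h1]

theorem IsSub.trans {A B C : MFml} (h : IsSub A B) (h' : IsSub B C) : IsSub A C := by
  induction h' with
  | refl => exact h
  | neg _ ih => exact .neg ih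
  | andL _ ih => exact .andL ih
  | andR _ ih => exact .andR ih
  | orL _ ih => exact .orL ih
  | orR _ ih => exact .orR ih
  | impL _ ih => exact .impL ih
  | impR _ ih => exact .impR ih
  | box _ ih => exact .box ih

theorem PP.sub_le (H : PP Tax K M N q P) {A B : MFml} (h : IsSub A B) :
    (fI P A).code ≤ (fI P B).code := by
  induction h with
  | refl => exact le_rfl
  | neg _ ih => exact ih.trans (Nat.right_le_pair _ _)
  | andL _ ih => exact ih.trans ((Nat.left_le_pair _ _).trans (Nat.right_le_pair _ _))
  | andR _ ih => exact ih.trans ((Nat.right_le_pair _ _).trans (Nat.right_le_pair _ _))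
  | orL _ ih => exact ih.trans ((Nat.left_le_pair _ _).trans (Nat.right_le_pair _ _))
  | orR _ ih => exact ih.trans ((Nat.right_le_pair _ _).trans (Nat.right_le_pair _ _))
  | impL _ ih => exact ih.trans ((Nat.left_le_pair _ _).trans (Nat.right_le_pair _ _))
  | impR _ ih => exact ih.trans ((Nat.right_le_pair _ _).trans (Nat.right_le_pair _ _))
  | box _ ih => rw [H.code_box]; exact ih.trans (lt_Bx _ _).le

/-- List of subformulas. -/
def subs : MFml → List MFml
  | .var i => [.var i]
  | .bot => [.bot]
  | .neg A => .neg A :: subs A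
  | .and A B => .and A B :: (subs A ++ subs B)
  | .or A B => .or A B :: (subs A ++ subs B)
  | .imp A B => .imp A B :: (subs A ++ subs B)
  | .box A => .box A :: subs A

theorem self_mem_subs (A : MFml) : A ∈ subs A := by cases A <;> simp [subs]

theorem mem_subs {A B : MFml} (h : IsSub A B) : A ∈ subs B := by
  induction h with
  | refl => exact self_mem_subs _
  | _ _ ih => simp [subs, ih]

theorem finite_conseq {m n : ℕ} (L : List MFml) : ∀ X : MFml, (∀ h ∈ L, NAProves m n h) →
    (∀ v, (∀ h ∈ L, h.evalTC v) → X.evalTC v) → NAProves m n X := by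
  induction L with
  | nil => intro X _ h; exact .taut fun v => h v (by simp)
  | cons a L ih =>
    intro X h1 h2
    refine .mp (ih (.imp a X) (fun h hh => h1 h (List.mem_cons_of_mem _ hh)) fun v hv ha => ?_)
      (h1 a List.mem_cons_self)
    refine h2 v fun h hh => ?_
    rcases List.mem_cons.1 hh with rfl | hh
    · exact ha
    · exact hv h hh

theorem exists_val {m n : ℕ} {X : MFml} (hX : ¬ NAProves m n X) :
    ∃ v : MFml → Prop, ¬ X.evalTC v ∧
      (∀ C, IsSub C X → NAProves m n (.box C) → v (.box C)) ∧
      (∀ C, IsSub C X → NAProves m n (.neg (.box C)) → ¬ v (.box C)) ∧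
      (∀ C C', IsSub C X → IsSub C' X → NAProves m n (.imp (.box C) (.box C')) →
        v (.box C) → v (.box C')) := by
  classical
  by_contra hc
  push Not at hc
  refine hX (finite_conseq (((subs X).flatMap fun C => (subs X).flatMap fun C' =>
    [MFml.box C, .neg (.box C), .imp (.box C) (.box C')]).filter fun h => NAProves m n h) X ?_ ?_)
  · intro h hh
    simpa using (List.mem_filter.1 hh).2
  · intro v hv
    have key : ∀ C C' h, IsSub C X → IsSub C' X →
        h ∈ [MFml.box C, .neg (.box C), .imp (.box C) (.box C')] → NAProves m n h → h.evalTC v := by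
      intro C C' h h1 h2 h3 h4
      refine hv h (List.mem_filter.2 ⟨?_, by simpa using h4⟩)
      exact List.mem_flatMap.2 ⟨C, mem_subs h1, List.mem_flatMap.2 ⟨C', mem_subs h2, h3⟩⟩
    by_contra hX'
    obtain ⟨C, C', h1, h2, h3, h4, h5⟩ := hc v hX'
      (fun C h1 h2 => key C C _ h1 h1 (by simp) h2)
      (fun C h1 h2 => key C C _ h1 h1 (by simp) h2)
    exact h5 (key C C' _ h1 h2 (by simp) h3 h4)

/-- Closure of the short theorems under the accessibility rule. -/
inductive Dcl (K : Ker) (M N q s : ℕ) : ℕ → Prop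
  | base {x w} : w < s → K.r x w → Dcl K M N q s x
  | step {c} : Dcl K M N q s (Bi q N c) → Dcl K M N q s (Bi q M c)

theorem PP.dcl_thm (H : PP Tax K M N q P) {s x : ℕ} (h : Dcl K M N q s x) :
    ∃ φ : AFml, x = φ.code ∧ Proves Tax φ := by
  induction h with
  | base _ h => exact (H.ker _).1 ⟨_, h⟩
  | step _ ih => exact H.NM_down ih

theorem PP.dcl_box (H : PP Tax K M N q P) {s x : ℕ}
    (IH : ∀ w, w < s → ∀ X, K.r (fI P X).code w → NAProves (M + 1) (N + 1) X)
    (h : Dcl K M N q s x) : ∀ C, x = (fI P C).code → NAProves (M + 1) (N + 1) (.box C) := by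
  induction h with
  | base hw h => rintro C rfl; exact .nec (IH _ hw C h)
  | step _ ih =>
    intro C hC
    obtain ⟨C', rfl, rfl⟩ := H.code_Bi M hC.symm
    exact .mp (.acc C') (ih (boxIter N C') (H.Bi_code _ _).symm)

theorem sub_boxIter (k : ℕ) (C : MFml) : IsSub C (boxIter k C) := by
  induction k with
  | zero => exact .refl _
  | succ k ih => exact .box ih

theorem boxIter_add (a b : ℕ) (C : MFml) : boxIter (a + b) C = boxIter a (boxIter b C) := by
  induction a with
  | zero => simp [boxIter]
  | succ a ih => rw [Nat.succ_add, boxIter, ih, boxIter]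

theorem PP.main (H : PP Tax K M N q P) (s : ℕ) :
    ∀ X, K.r (fI P X).code s → NAProves (M + 1) (N + 1) X := by
  induction s using Nat.strong_induction_on with
  | _ s IH =>
  intro X hX
  by_contra hnX
  obtain ⟨v, v1, v2, v3, v4⟩ := exists_val hnX
  have hXs : (fI P X).code ≤ s := K.le _ _ hX
  obtain ⟨b, hb, hbs⟩ := exists_bits (fun x => Dcl K M N q s x ∨
    (∃ C, IsSub C X ∧ x = (fI P C).code ∧ v (.box C)) ∨
    (∃ i, IsSub (.var i) X ∧ x = Nat.pair 9 i ∧ ¬ v (.var i))) s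
  have hsub : ∀ C, IsSub C X → (fI P C).code ≤ s := fun C hC => (H.sub_le hC).trans hXs
  have hN : ∃ N', N = N' + 1 := ⟨N - 1, by have := H.lt; omega⟩
  have n9 : ∀ c i, Bx q c ≠ Nat.pair 9 i := by intro c i; simp [Bx]
  have hbox : ∀ A, IsSub A X → (bt b (fI P A).code = 1 ↔ v (.box A)) := by
    intro A hA
    rw [hbs]
    constructor
    · rintro ⟨_, h | ⟨C, _, h1, h2⟩ | ⟨i, _, h, _⟩⟩
      · exact v2 A hA (H.dcl_box IH h A rfl)
      · rw [H.inj _ _ h1]; exact h2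
      · exact absurd h (code_ne9 _ _)
    · intro h
      exact ⟨hsub A hA, Or.inr (Or.inl ⟨A, hA, rfl, h⟩)⟩
  have hvar : ∀ i, IsSub (.var i) X → (bt b (Nat.pair 9 i) = 1 ↔ ¬ v (.var i)) := by
    intro i hi
    rw [hbs]
    constructor
    · rintro ⟨_, h | ⟨C, _, h1, h2⟩ | ⟨j, _, h, h'⟩⟩
      · obtain ⟨φ, h, _⟩ := H.dcl_thm h
        exact absurd h.symm (code_ne9 _ _)
      · exact absurd h1.symm (code_ne9 _ _)
      · simp only [Nat.pair_eq_pair, true_and] at h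
        rw [h]; exact h'
    · intro h
      refine ⟨?_, Or.inr (Or.inr ⟨i, hi, rfl, h⟩)⟩
      refine le_trans ?_ (hsub _ hi)
      have h1 := lt_Bx q (Nat.pair 9 i)
      have h2 : (fI P (.var i)).code = Nat.pair 2 (Bx q (Nat.pair 9 i)) := by
        rw [← H.code]; rfl
      rw [h2]
      exact h1.le.trans (Nat.right_le_pair _ _)
  have hev : ∀ A, IsSub A X → ev q b (fI P A).code < 2 ∧
      (ev q b (fI P A).code = 1 ↔ A.evalTC v) := by
    have bin : ∀ {a c : ℕ} {p r : Prop}, (a < 2 ∧ (a = 1 ↔ p)) → (c < 2 ∧ (c = 1 ↔ r)) →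
        (opv 3 a c < 2 ∧ (opv 3 a c = 1 ↔ p ∧ r)) ∧ (opv 4 a c < 2 ∧ (opv 4 a c = 1 ↔ p ∨ r)) ∧
        (opv 5 a c < 2 ∧ (opv 5 a c = 1 ↔ (p → r))) := by
      rintro a c p r ⟨h1, h2⟩ ⟨h3, h4⟩
      obtain ⟨o1, o2, o3, o4, o5, o6⟩ := opv_cases h1 h3
      rw [o1, o2, o3, h2, h4]
      exact ⟨⟨o4, Iff.rfl⟩, ⟨o5, Iff.rfl⟩, ⟨o6, Iff.rfl⟩⟩
    have hB : ∀ c, ev q b (Bx q c) = bt b c := by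
      intro c
      rw [ev, evl_at _ (by simp [Bx]), atv_Bx]
    intro A
    induction A with
    | var i =>
      intro hi
      have h2 : (fI P (.var i)).code = Nat.pair 2 (Bx q (Nat.pair 9 i)) := by
        rw [← H.code]; rfl
      rw [h2, ev, evl_neg]
      change opv 5 (ev q b _) 0 < 2 ∧ (opv 5 (ev q b _) 0 = 1 ↔ _)
      rw [hB]
      have := (bin (r := False) ⟨bt_lt b _, hvar i hi⟩ (c := 0) (by simp)).2.2
      refine ⟨this.1, this.2.trans ?_⟩
      simp only [MFml.evalTC]; tauto
    | bot =>
      intro _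
      have : ev q b (fI P .bot).code = 0 := by
        rw [ev, evl_at _ (by simp [fI, AFml.code, botFml])]
        exact atv_bot q b
      rw [this]; simp [MFml.evalTC]
    | neg A ih =>
      intro hi
      have := (bin (r := False) (ih (IsSub.trans (.neg (.refl _)) hi)) (c := 0) (by simp)).2.2
      rw [fI, AFml.code, ev, evl_neg]
      exact this
    | and A B ih1 ih2 =>
      intro hi
      rw [fI, AFml.code, ev, evl_bin _ (by omega) (by omega)]
      exact (bin (ih1 (IsSub.trans (.andL (.refl _)) hi)) (ih2 (IsSub.trans (.andR (.refl _)) hi))).1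
    | or A B ih1 ih2 =>
      intro hi
      rw [fI, AFml.code, ev, evl_bin _ (by omega) (by omega)]
      exact (bin (ih1 (IsSub.trans (.orL (.refl _)) hi)) (ih2 (IsSub.trans (.orR (.refl _)) hi))).2.1
    | imp A B ih1 ih2 =>
      intro hi
      rw [fI, AFml.code, ev, evl_bin _ (by omega) (by omega)]
      exact (bin (ih1 (IsSub.trans (.impL (.refl _)) hi)) (ih2 (IsSub.trans (.impR (.refl _)) hi))).2.2
    | box A _ =>
      intro hi
      rw [H.code_box, hB]
      exact ⟨bt_lt _ _, hbox A (IsSub.trans (.box (.refl _)) hi)⟩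
  refine H.no_trig s ⟨b, hb, ⟨_, hXs, hX, ?_⟩, ?_, ?_, ?_, ?_⟩
  · have h1 := hev X (.refl _)
    have h2 : ¬ ev q b (fI P X).code = 1 := fun h => v1 (h1.2.1 h)
    omega
  · intro x hx w hw hr
    exact (hbs x).2 ⟨hx, Or.inl (.base hw hr)⟩
  · intro c _ h
    obtain ⟨h1, h2⟩ := (hbs _).1 h
    have h3 : Bi q M c ≤ s := (H.NM_le c).trans h1
    rcases h2 with h2 | ⟨C, hC, h4, h5⟩ | ⟨i, _, h4, _⟩
    · exact (hbs _).2 ⟨h3, Or.inl h2.step⟩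
    · obtain ⟨C', rfl, rfl⟩ := H.code_Bi N h4.symm
      have e : boxIter N C' = boxIter (N - M) (boxIter M C') := by
        rw [← boxIter_add]; congr 1; have := H.lt; omega
      have hs : IsSub (boxIter M C') X := by
        refine IsSub.trans ?_ hC
        rw [e]; exact sub_boxIter _ _
      exact (hbs _).2 ⟨h3, Or.inr (Or.inl ⟨boxIter M C', hs, (H.Bi_code _ _).symm,
        v4 _ _ hC hs (.acc C') h5⟩)⟩
    · obtain ⟨N', rfl⟩ := hN
      exact absurd h4 (n9 _ _)
  · intro c _ w hw h hr
    obtain ⟨_, h2⟩ := (hbs _).1 h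
    rcases h2 with h2 | ⟨C, hC, h4, h5⟩ | ⟨i, _, h4, _⟩
    · exact H.no_ref (H.dcl_thm h2) ((H.ker _).1 ⟨w, hr⟩)
    · obtain ⟨C', rfl, rfl⟩ := H.code_Bx h4.symm
      have h6 : NAProves (M + 1) (N + 1) (.neg (.box C')) := by
        refine IH w hw _ ?_
        have e : (fI P (.neg (.box C'))).code = Nat.pair 2 (Bx q (fI P C').code) := by
          rw [← H.code_box]; rfl
        rw [e]; exact hr
      exact v3 _ hC (.ros h6) h5
    · exact absurd h4 (n9 _ _)
  · intro h
    obtain ⟨_, h2⟩ := (hbs _).1 h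
    rcases h2 with h2 | ⟨C, hC, h4, h5⟩ | ⟨i, _, h4, _⟩
    · obtain ⟨φ, h, _⟩ := H.dcl_thm h2
      exact bad_ne _ h
    · exact bad_ne _ h4
    · simp [bad] at h4

end

/-- Theorem 4.4: Suppose `T` is `Σ₁`-sound and `n > m ≥ 1`. Then
there is a `Σ₁` provability predicate `PR_T(x)` of `T` such that (1) `N⁺A_{m,n}` is sound for
every arithmetical interpretation based on `PR_T(x)`, and (2) some arithmetical interpretation
based on `PR_T(x)` is exact for `N⁺A_{m,n}`. -/
theorem statement_8 (Tax : Set AFml) (hext : PA ⊆ Tax)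
    (hcons : ¬ Proves Tax botFml) (hpr : PrAxiomatized Tax)
    (hsound : Sigma1Sound Tax)
    (m n : ℕ) (hm : 1 ≤ m) (hmn : m < n) :
    ∃ P : AFml, IsSigma1 P ∧ IsProvPred Tax P ∧
      (∀ (A : MFml) (f : MFml → AFml), IsInterp P f → NAProves m n A → Proves Tax (f A)) ∧
      (∃ f : MFml → AFml, IsInterp P f ∧ ∀ A : MFml, NAProves m n A ↔ Proves Tax (f A)) := by
  obtain ⟨p, hp, hpa⟩ := hpr
  obtain ⟨K, hK⟩ := exists_ker (sig_thmC hp)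
  obtain ⟨M, rfl⟩ : ∃ M, m = M + 1 := ⟨m - 1, by omega⟩
  obtain ⟨N, rfl⟩ : ∃ N, n = N + 1 := ⟨n - 1, by omega⟩
  obtain ⟨q, P, h1, h2, h3, h4, h5, h6, h7, h8, h9⟩ := exists_P (sig_in K M N) (sig_dP K M N)
  have H : PP Tax K M N q P :=
    { ext := hext, cons := hcons, sound := hsound, ker := fun x => (hK x).symm.trans (thmC_iff hpa)
      lt := by omega, sig := h1, free := h2, sent := h3, code := h4, compl := h5, sub := h6
      sup := h7, r1 := h8, rbad := h9 }
  refine ⟨P, H.sig, H.provPred, fun A f hf h => H.soundness hf h, fI P, H.interp, fun A =>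
    ⟨H.soundness H.interp, fun h => ?_⟩⟩
  obtain ⟨w, hw⟩ := (H.ker _).2 ⟨_, rfl, h⟩
  exact H.main w A hw

end PLN
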